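/- There exist constants λ > 1 and ε₀ > 0, depending only on n and d, with the following property. Let E be an A-almost-minimal set of dimension d in an open set U ⊆ ℝⁿ, with gauge function h. Let x ∈ E* and R > 0 be such that B(x,R) ⊆ U, h(R) ≤ ε₀, and ∫₀^R h(2t) dt/t < ∞. Set A(r) = ∫₀^r h(2t) dt/t for 0 < r < R. Then the function r ↦ r^{−d} H^d(E ∩ B(x,r)) · e^{λ A(r)} is nondecreasing on (0,R). -/

import Mathlib

/-!
The density `r ^ (-d) * H^d (E ∩ B(x, r))` is controlled by comparing `E` in `B(x, r)` with its image
under the radial contraction `q ↦ x + (|q - x| / r) ^ M (q - x)`. On a `d`-plane the derivative of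
this map at `q` has Jacobian at most `N (|q - x| / r) ^ ((N - 1) d)` with `N = M + 1`, so if `E` had
approximate tangent planes, almost minimality would give
`H^d (E ∩ B(x, r)) ≤ ∫ N (|q - x| / r) ^ ((N - 1) d) dH^d + h(δ) δ ^ d` for every `δ > 2 r`.
Letting `N → ∞`, `f(r) = H^d (E ∩ B(x, r))` satisfies `f ≤ (r / d) f' + h(2 r) (2 r) ^ d` at almost
every `r` (`density_diff_ineq`). If moreover `f(r) ≥ c₀ r ^ d`, the last term is at most a multiple
of `h(2 r) f`, and integrating the logarithmic derivative yields the monotonicity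
(`monotone_of_sharp`). Two facts about `E` are therefore needed. Removing a null set, one may assume
that every point of `E` is essential; the cases `d = 0` and `d > n` are elementary.

*Lower regularity* (`lower_regular`). If the density of `E` in a ball is small, `E` misses the dual
`(n - d)`-skeleton of a suitably translated cubical grid, and can be pushed inside the ball onto the
`(d - 1)`-skeleton, which is `H^d`-null; the cost of the transition near the boundary of the ball is
controlled by averaging over the translations (`grid_step`). So small densities propagate to smaller
concentric balls (`density_step`), at all nearby points, which contradicts the definition of the
Hausdorff measure at an essential point.

*Flatness almost everywhere* (`ae_flatAt`). A null field is an integrable vector field `v` on `E` with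
`∫ du(v) dH^d = 0` for every test function `u` supported in a given ball. By the Hahn–Banach theorem
and duality in `L^d`, a bounded covector field that annihilates all null fields is an `L^d`-limit of
differentials of test functions (`exists_approx_of_annihilates`). Where the null fields span fewer
than `d` directions, there are therefore deformations of the identity whose derivatives approach the
projections onto these spans, and which collapse this part of `E`; together with almost minimality
and lower regularity this shows that the degenerate part is `H^d`-null (`mass_estimate`,
`degenerate_null`). At a Lebesgue point `y`, the value of a null field is a direction in which `E` is
asymptotically translation invariant (`dirAt_of_lebesgue`); `d` independent such directions, lower
regularity and finite upper density force `E` to be close to a `d`-plane at arbitrarily small scales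
(`flatAt_of_dirAt`), since otherwise `E` would contain many separated sheets.

Flatness at some small scales replaces the area formula: almost all of `E ∩ B(x, r)` is packed by
disjoint balls in which `E` is close to a `d`-plane, and on each of them the contraction is replaced
by its linearization composed with the projection onto the plane (`sharp_of_goodBalls`,
`sharp_of_flat`).
-/

open MeasureTheory Metric Set Filter Bornology
open scoped ENNReal NNReal Topology InnerProductSpace

noncomputable section

/-- `ℝⁿ` as a Euclidean space. -/
abbrev Euc (n : ℕ) : Type := EuclideanSpace ℝ (Fin n)

/-- The set `W_t = {x ∈ U : φ_t x ≠ x}` associated with a one-parameter family of maps. -/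
def defW {n : ℕ} (U : Set (Euc n)) (φ : ℝ → Euc n → Euc n) (t : ℝ) : Set (Euc n) :=
  {x ∈ U | φ t x ≠ x}

/-- The set `Ŵ = ⋃_{t ∈ [0,1]} (W_t ∪ φ_t(W_t))`. -/
def defWhat {n : ℕ} (U : Set (Euc n)) (φ : ℝ → Euc n → Euc n) : Set (Euc n) :=
  ⋃ t ∈ Icc (0:ℝ) 1, (defW U φ t ∪ φ t '' defW U φ t)

/-- An admissible `δ`-deformation in `U`: a one-parameter family `φ_t : U → U`,
`t ∈ [0,1]`, with `φ_0 = id`, jointly continuous, `φ_1` Lipschitz, and such that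
`Ŵ` is relatively compact in `U` with `diam Ŵ < δ`. -/
def IsAdmissibleDef {n : ℕ} (U : Set (Euc n)) (δ : ℝ) (φ : ℝ → Euc n → Euc n) : Prop :=
  (∀ t ∈ Icc (0:ℝ) 1, MapsTo (φ t) U U) ∧
  (∀ x ∈ U, φ 0 x = x) ∧
  ContinuousOn (fun p : ℝ × Euc n => φ p.1 p.2) (Icc (0:ℝ) 1 ×ˢ U) ∧
  (∃ K : ℝ≥0, LipschitzOnWith K (φ 1) U) ∧
  IsCompact (closure (defWhat U φ)) ∧
  closure (defWhat U φ) ⊆ U ∧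
  Metric.diam (defWhat U φ) < δ

/-- A gauge function: nondecreasing on `(0,∞)`, with values in `[0,∞]` and limit `0` at `0⁺`. -/
def IsGaugeFn (h : ℝ → ℝ≥0∞) : Prop :=
  (∀ ⦃s t : ℝ⦄, 0 < s → s ≤ t → h s ≤ h t) ∧ Tendsto h (𝓝[>] (0:ℝ)) (𝓝 0)

/-- `E` is an A-almost-minimal set of dimension `d` in the open set `U`, with gauge
function `h`: `E` is closed in `U`, has locally finite `H^d`-measure, and for every
`δ > 0` and every admissible `δ`-deformation `{φ_t}` in `U`,
`H^d(E ∩ W₁) ≤ H^d(φ₁(E ∩ W₁)) + h(δ) δ^d`. -/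
def IsAAlmostMinimal (n d : ℕ) (U E : Set (Euc n)) (h : ℝ → ℝ≥0∞) : Prop :=
  E ⊆ U ∧ closure E ∩ U ⊆ E ∧
  (∀ (x : Euc n) (r : ℝ), closedBall x r ⊆ U → μH[(d:ℝ)] (E ∩ closedBall x r) < ⊤) ∧
  ∀ δ : ℝ, 0 < δ → ∀ φ : ℝ → Euc n → Euc n, IsAdmissibleDef U δ φ →
    μH[(d:ℝ)] (E ∩ defW U φ 1) ≤
      μH[(d:ℝ)] (φ 1 '' (E ∩ defW U φ 1)) + h δ * ENNReal.ofReal (δ ^ d)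

/-! ### Competitors and the essential part -/

/-- The nearest-point retraction onto a closed ball is `1`-Lipschitz. -/
theorem exists_ball_retraction {n : ℕ} (x : Euc n) {r : ℝ} (hr : 0 < r) :
    ∃ p : Euc n → Euc n, LipschitzWith 1 p ∧ (∀ q, p q ∈ closedBall x r) ∧
      ∀ q ∈ closedBall x r, p q = q := by
  have hne : (closedBall x r).Nonempty := ⟨x, mem_closedBall_self hr.le⟩
  have hconv := convex_closedBall x r
  have hex : ∀ q : Euc n, ∃ v ∈ closedBall x r, ∀ w ∈ closedBall x r, ⟪q - v, w - v⟫_ℝ ≤ 0 := by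
    intro q
    obtain ⟨v, hv, hv2⟩ := exists_norm_eq_iInf_of_complete_convex hne
      (isClosed_closedBall.isComplete) hconv q
    exact ⟨v, hv, (norm_eq_iInf_iff_real_inner_le_zero hconv hv).1 hv2⟩
  choose p hp hp2 using hex
  refine ⟨p, ?_, hp, ?_⟩
  · apply LipschitzWith.of_dist_le_mul
    intro a b
    have h1 := hp2 a (p b) (hp b)
    have h2 := hp2 b (p a) (hp a)
    have h3 : ‖p a - p b‖ ^ 2 ≤ ⟪a - b, p a - p b⟫_ℝ := by
      rw [← real_inner_self_eq_norm_sq]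
      simp only [inner_sub_left, inner_sub_right] at h1 h2 ⊢
      rw [real_inner_comm (p a) (p b)] at *
      linarith
    have h4 := real_inner_le_norm (a - b) (p a - p b)
    rw [dist_eq_norm, dist_eq_norm]
    by_cases h0 : ‖p a - p b‖ = 0
    · rw [h0]; positivity
    · have : 0 < ‖p a - p b‖ := lt_of_le_of_ne (norm_nonneg _) (Ne.symm h0)
      simp only [NNReal.coe_one, one_mul]
      nlinarith
  · intro q hq
    have h1 := hp2 q q hq
    rw [real_inner_self_eq_norm_sq] at h1
    have : ‖q - p q‖ = 0 := by nlinarith [norm_nonneg (q - p q)]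
    rw [norm_eq_zero, sub_eq_zero] at this
    exact this.symm

theorem IsAAlmostMinimal.measurableSet {n d : ℕ} {U E : Set (Euc n)} {h : ℝ → ℝ≥0∞}
    (hU : IsOpen U) (hE : IsAAlmostMinimal n d U E h) : MeasurableSet E := by
  have : E = closure E ∩ U :=
    Subset.antisymm (fun y hy => ⟨subset_closure hy, hE.1 hy⟩) hE.2.1
  rw [this]
  exact isClosed_closure.measurableSet.inter hU.measurableSet

/-- Almost minimality in the form used throughout: a Lipschitz map `f` that is the identity outside
`ball x r`, and that distorts measure by a factor at most `k`, yields an upper bound for the mass of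
`E`. The map need not preserve the ball, nor come with a homotopy: it is composed with the
retraction onto the ball and joined to the identity by segments. -/
theorem competitor {n d : ℕ} {U E : Set (Euc n)} {h : ℝ → ℝ≥0∞} (hU : IsOpen U)
    (hE : IsAAlmostMinimal n d U E h) {x : Euc n} {r δ : ℝ} (hr : 0 < r)
    (hB : closedBall x r ⊆ U) (hδ : 2 * r < δ) {f : Euc n → Euc n} {K : ℝ≥0}
    (hf : LipschitzWith K f) (hid : ∀ q, q ∉ ball x r → f q = q) (k : Euc n → ℝ≥0∞)
    (hk : ∀ S, MeasurableSet S → S ⊆ E ∩ ball x r →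
      μH[(d:ℝ)] (f '' S) ≤ ∫⁻ q in S, k q ∂μH[(d:ℝ)]) :
    μH[(d:ℝ)] (E ∩ ball x r) ≤
      (∫⁻ q in E ∩ ball x r, k q ∂μH[(d:ℝ)]) + h δ * ENNReal.ofReal (δ ^ d) := by
  obtain ⟨p, hp1, hp2, hp3⟩ := exists_ball_retraction x hr
  set g : Euc n → Euc n := fun q => q + (p (f q) - p q) with hg
  have hgin : ∀ q ∈ ball x r, g q = p (f q) := by
    intro q hq
    simp only [hg]; rw [hp3 q (ball_subset_closedBall hq)]; abel
  have hgout : ∀ q, q ∉ ball x r → g q = q := by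
    intro q hq
    simp only [hg]; rw [hid q hq]; simp
  have hgL : LipschitzWith (1 + (1 * K + 1)) g :=
    LipschitzWith.id.add ((hp1.comp hf).sub hp1)
  have hgcb : ∀ q ∈ ball x r, g q ∈ closedBall x r := fun q hq => by
    rw [hgin q hq]; exact hp2 _
  set φ : ℝ → Euc n → Euc n := fun t q => (1 - t) • q + t • g q with hφ
  have hφ1 : ∀ q, φ 1 q = g q := by intro q; simp [hφ]
  have hφout : ∀ t q, q ∉ ball x r → φ t q = q := by
    intro t q hq; simp only [hφ, hgout q hq]; module
  have hφin : ∀ t ∈ Icc (0:ℝ) 1, ∀ q ∈ ball x r, φ t q ∈ closedBall x r := by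
    intro t ht q hq
    exact (convex_closedBall x r) (ball_subset_closedBall hq) (hgcb q hq) (by linarith [ht.2]) ht.1
      (by ring)
  have hWsub : ∀ t, defW U φ t ⊆ ball x r := by
    intro t q hq
    by_contra hc
    exact hq.2 (hφout t q hc)
  have hWhat : defWhat U φ ⊆ closedBall x r := by
    intro q hq
    simp only [defWhat, mem_iUnion] at hq
    obtain ⟨t, ht, hq | ⟨z, hz, rfl⟩⟩ := hq
    · exact ball_subset_closedBall (hWsub t hq)
    · exact hφin t ht z (hWsub t hz)
  have hcl : closure (defWhat U φ) ⊆ closedBall x r :=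
    closure_minimal hWhat isClosed_closedBall
  have hadm : IsAdmissibleDef U δ φ := by
    refine ⟨?_, ?_, ?_, ?_, ?_, hcl.trans hB, ?_⟩
    · intro t ht q hq
      by_cases hqb : q ∈ ball x r
      · exact hB (hφin t ht q hqb)
      · rw [hφout t q hqb]; exact hq
    · intro q _; simp [hφ]
    · apply Continuous.continuousOn
      have := hgL.continuous
      simp only [hφ]; fun_prop
    · refine ⟨_, (LipschitzWith.lipschitzOnWith (K := 1 + (1 * K + 1)) ?_)⟩
      have : φ 1 = g := funext hφ1
      rw [this]; exact hgL
    · exact (isCompact_closedBall x r).of_isClosed_subset isClosed_closure hcl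
    · calc Metric.diam (defWhat U φ) ≤ Metric.diam (closedBall x r) :=
            Metric.diam_mono hWhat isBounded_closedBall
        _ ≤ 2 * r := Metric.diam_closedBall hr.le
        _ < δ := hδ
  have hmain := hE.2.2.2 δ (by linarith) φ hadm
  have hEm := hE.measurableSet hU
  set W := E ∩ defW U φ 1 with hW
  have hWeq : W = (E ∩ ball x r) ∩ {q | g q ≠ q} := by
    ext q
    simp only [hW, defW, mem_inter_iff, mem_ofPred_eq, hφ1]
    constructor
    · rintro ⟨h1, h2, h3⟩
      exact ⟨⟨h1, by by_contra hc; exact h3 (hgout q hc)⟩, h3⟩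
    · rintro ⟨⟨h1, h2⟩, h3⟩
      exact ⟨h1, hE.1 h1, h3⟩
  have hgm : MeasurableSet {q | g q ≠ q} :=
    (isOpen_ne_fun hgL.continuous continuous_id).measurableSet
  have hEb : MeasurableSet (E ∩ ball x r) := hEm.inter measurableSet_ball
  have hWm : MeasurableSet W := by rw [hWeq]; exact hEb.inter hgm
  set F := (E ∩ ball x r) \ {q | g q ≠ q} with hF
  have hFm : MeasurableSet F := hEb.diff hgm
  have key : ∀ S ⊆ E ∩ ball x r, MeasurableSet S →
      μH[(d:ℝ)] (g '' S) ≤ ∫⁻ q in S, k q ∂μH[(d:ℝ)] := by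
    intro S hS hSm
    have : g '' S = p '' (f '' S) := by
      rw [image_image]
      exact image_congr (fun q hq => hgin q (hS hq).2)
    rw [this]
    have h1 := hp1.hausdorffMeasure_image_le (d := (d:ℝ)) (Nat.cast_nonneg d) (f '' S)
    simp only [ENNReal.coe_one, ENNReal.one_rpow, one_mul] at h1
    exact h1.trans (hk S hSm hS)
  have hsplit : μH[(d:ℝ)] (E ∩ ball x r) = μH[(d:ℝ)] W + μH[(d:ℝ)] F := by
    rw [hWeq, hF, measure_inter_add_sdiff _ hgm]
  have hFF : μH[(d:ℝ)] F ≤ ∫⁻ q in F, k q ∂μH[(d:ℝ)] := by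
    have : g '' F = F := by
      ext q
      constructor
      · rintro ⟨z, hz, rfl⟩
        have : g z = z := by simpa using hz.2
        rw [this]; exact hz
      · intro hq
        exact ⟨q, hq, by simpa using hq.2⟩
    have h2 := key F sdiff_subset hFm
    rwa [this] at h2
  have hWW : μH[(d:ℝ)] (φ 1 '' W) ≤ ∫⁻ q in W, k q ∂μH[(d:ℝ)] := by
    have : φ 1 = g := funext hφ1
    rw [this]
    exact key W (by rw [hWeq]; exact inter_subset_left) hWm
  have hintg : (∫⁻ q in E ∩ ball x r, k q ∂μH[(d:ℝ)]) =
      (∫⁻ q in W, k q ∂μH[(d:ℝ)]) + ∫⁻ q in F, k q ∂μH[(d:ℝ)] := by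
    rw [hWeq, hF, lintegral_inter_add_sdiff _ _ hgm]
  rw [hsplit, hintg]
  calc μH[(d:ℝ)] W + μH[(d:ℝ)] F
      ≤ (μH[(d:ℝ)] (φ 1 '' W) + h δ * ENNReal.ofReal (δ ^ d)) + μH[(d:ℝ)] F := by gcongr
    _ ≤ ((∫⁻ q in W, k q ∂μH[(d:ℝ)]) + h δ * ENNReal.ofReal (δ ^ d)) +
        ∫⁻ q in F, k q ∂μH[(d:ℝ)] := by gcongr
    _ = _ := by ring

/-- A bound for the measures of images that holds on each set of a countable cover holds globally. -/
theorem image_measure_le_of_cover {n d : ℕ} {f : Euc n → Euc n} {k : Euc n → ℝ≥0∞}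
    {F : Set (Euc n)} {P : ℕ → Set (Euc n)} (hP : ∀ i, MeasurableSet (P i)) (hFP : F ⊆ ⋃ i, P i)
    (hloc : ∀ i, ∀ S, MeasurableSet S → S ⊆ F ∩ P i →
      μH[(d:ℝ)] (f '' S) ≤ ∫⁻ q in S, k q ∂μH[(d:ℝ)])
    {S : Set (Euc n)} (hSm : MeasurableSet S) (hSF : S ⊆ F) :
    μH[(d:ℝ)] (f '' S) ≤ ∫⁻ q in S, k q ∂μH[(d:ℝ)] := by
  set G : ℕ → Set (Euc n) := fun i => S ∩ disjointed P i with hG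
  have hGm : ∀ i, MeasurableSet (G i) := fun i => hSm.inter (MeasurableSet.disjointed hP i)
  have hGd : Pairwise (Function.onFun Disjoint G) := fun i j hij =>
    ((disjoint_disjointed P) hij).mono inter_subset_right inter_subset_right
  have hU : ⋃ i, G i = S := by
    rw [← inter_iUnion, iUnion_disjointed, inter_eq_left]
    exact hSF.trans hFP
  have hb : ∀ i, μH[(d:ℝ)] (f '' (G i)) ≤ ∫⁻ q in G i, k q ∂μH[(d:ℝ)] := by
    intro i
    apply hloc i _ (hGm i)
    intro q hq
    exact ⟨hSF hq.1, disjointed_subset _ i hq.2⟩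
  calc μH[(d:ℝ)] (f '' S) = μH[(d:ℝ)] (⋃ i, f '' (G i)) := by rw [← image_iUnion, hU]
    _ ≤ ∑' i, μH[(d:ℝ)] (f '' (G i)) := measure_iUnion_le _
    _ ≤ ∑' i, ∫⁻ q in G i, k q ∂μH[(d:ℝ)] := ENNReal.tsum_le_tsum hb
    _ = ∫⁻ q in ⋃ i, G i, k q ∂μH[(d:ℝ)] := (lintegral_iUnion hGm hGd _).symm
    _ = _ := by rw [hU]

/-- Local-to-global principle for measure inequalities of images. -/
theorem image_measure_le_of_local {n d : ℕ} {f : Euc n → Euc n} {k : Euc n → ℝ≥0∞}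
    {F : Set (Euc n)}
    (hloc : ∀ y ∈ F, ∃ t ∈ 𝓝 y, ∀ S, MeasurableSet S → S ⊆ F ∩ t →
      μH[(d:ℝ)] (f '' S) ≤ ∫⁻ q in S, k q ∂μH[(d:ℝ)])
    {S : Set (Euc n)} (hSm : MeasurableSet S) (hSF : S ⊆ F) :
    μH[(d:ℝ)] (f '' S) ≤ ∫⁻ q in S, k q ∂μH[(d:ℝ)] := by
  choose! t ht ht2 using hloc
  obtain ⟨T, hTF, hTc, hT⟩ := TopologicalSpace.countable_cover_nhdsWithin
    (s := F) (f := fun y => interior (t y))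
    (fun y hy => mem_nhdsWithin_of_mem_nhds (interior_mem_nhds.2 (ht y hy)))
  rcases T.eq_empty_or_nonempty with hTe | hTn
  · rw [hTe] at hT
    have : S = ∅ := by
      have := hSF.trans hT
      simpa using this
    simp [this]
  obtain ⟨u, rfl⟩ := hTc.exists_eq_range hTn
  refine image_measure_le_of_cover (P := fun i => interior (t (u i)))
    (fun i => isOpen_interior.measurableSet) (hT.trans (by simp)) ?_ hSm hSF
  intro i S hS hSs
  exact ht2 (u i) (hTF (mem_range_self i)) S hS
    (hSs.trans (inter_subset_inter_right _ interior_subset))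

theorem image_measure_le_of_split {n d : ℕ} {f : Euc n → Euc n} {k : Euc n → ℝ≥0∞}
    {F P : Set (Euc n)} (hP : MeasurableSet P)
    (h1 : ∀ S, MeasurableSet S → S ⊆ F ∩ P →
      μH[(d:ℝ)] (f '' S) ≤ ∫⁻ q in S, k q ∂μH[(d:ℝ)])
    (h2 : ∀ S, MeasurableSet S → S ⊆ F \ P →
      μH[(d:ℝ)] (f '' S) ≤ ∫⁻ q in S, k q ∂μH[(d:ℝ)])
    {S : Set (Euc n)} (hSm : MeasurableSet S) (hSF : S ⊆ F) :
    μH[(d:ℝ)] (f '' S) ≤ ∫⁻ q in S, k q ∂μH[(d:ℝ)] := by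
  calc μH[(d:ℝ)] (f '' S) ≤ μH[(d:ℝ)] (f '' (S ∩ P)) + μH[(d:ℝ)] (f '' (S \ P)) := by
        rw [← inter_union_sdiff S P, image_union]
        refine (measure_union_le _ _).trans ?_
        rw [inter_union_sdiff S P]
    _ ≤ (∫⁻ q in S ∩ P, k q ∂μH[(d:ℝ)]) + ∫⁻ q in S \ P, k q ∂μH[(d:ℝ)] := by
        gcongr
        · exact h1 _ (hSm.inter hP) (fun q hq => ⟨hSF hq.1, hq.2⟩)
        · exact h2 _ (hSm.diff hP) (fun q hq => ⟨hSF hq.1, hq.2⟩)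
    _ = _ := lintegral_inter_add_sdiff _ _ hP

/-- The essential part `E*` of `E`. -/
def essPart {n : ℕ} (d : ℕ) (E : Set (Euc n)) : Set (Euc n) :=
  {y ∈ E | ∀ ρ : ℝ, 0 < ρ → 0 < μH[(d:ℝ)] (E ∩ ball y ρ)}

theorem essPart_null {n d : ℕ} (E : Set (Euc n)) : μH[(d:ℝ)] (E \ essPart d E) = 0 := by
  apply measure_null_of_locally_null
  rintro y ⟨hyE, hy⟩
  simp only [essPart, mem_ofPred_eq, not_and, not_forall, not_lt] at hy
  obtain ⟨ρ, hρ, h0⟩ := hy hyE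
  refine ⟨E ∩ ball y ρ ∩ (E \ essPart d E), ?_, ?_⟩
  · have : ball y ρ ∩ (E \ essPart d E) ∈ 𝓝[E \ essPart d E] y :=
      inter_mem (mem_nhdsWithin_of_mem_nhds (ball_mem_nhds y hρ)) self_mem_nhdsWithin
    filter_upwards [this] with q hq
    exact ⟨⟨hq.2.1, hq.1⟩, hq.2⟩
  · exact measure_mono_null inter_subset_left (le_antisymm h0 bot_le)

theorem essPart_subset {n d : ℕ} (E : Set (Euc n)) : essPart d E ⊆ E := fun _ h => h.1

theorem measure_essPart_inter {n d : ℕ} (E S : Set (Euc n)) :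
    μH[(d:ℝ)] (essPart d E ∩ S) = μH[(d:ℝ)] (E ∩ S) := by
  apply le_antisymm (measure_mono (inter_subset_inter_left _ (essPart_subset E)))
  calc μH[(d:ℝ)] (E ∩ S) ≤ μH[(d:ℝ)] (essPart d E ∩ S ∪ (E \ essPart d E)) := by
        apply measure_mono
        rintro q ⟨h1, h2⟩
        by_cases hq : q ∈ essPart d E
        · exact Or.inl ⟨hq, h2⟩
        · exact Or.inr ⟨h1, hq⟩
    _ ≤ μH[(d:ℝ)] (essPart d E ∩ S) + μH[(d:ℝ)] (E \ essPart d E) := measure_union_le _ _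
    _ = _ := by rw [essPart_null, add_zero]

/-- Passing to the essential part keeps almost minimality, because only an `H^d`-null set is removed
and `φ₁`, being Lipschitz on `U`, maps null sets to null sets. -/
theorem essPart_almostMinimal {n d : ℕ} {U E : Set (Euc n)} {h : ℝ → ℝ≥0∞}
    (hE : IsAAlmostMinimal n d U E h) : IsAAlmostMinimal n d U (essPart d E) h := by
  refine ⟨(essPart_subset E).trans hE.1, ?_, ?_, ?_⟩
  · rintro y ⟨hy, hyU⟩
    refine ⟨hE.2.1 ⟨closure_mono (essPart_subset E) hy, hyU⟩, ?_⟩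
    intro ρ hρ
    obtain ⟨z, hz, hyz⟩ := Metric.mem_closure_iff.1 hy (ρ / 2) (by linarith)
    refine (hz.2 (ρ / 2) (by linarith)).trans_le (measure_mono ?_)
    apply inter_subset_inter_right
    apply ball_subset_ball'
    rw [dist_comm]; linarith
  · intro x r hx
    exact (measure_mono (inter_subset_inter_left _ (essPart_subset E))).trans_lt (hE.2.2.1 x r hx)
  · intro δ hδ φ hφ
    have := hE.2.2.2 δ hδ φ hφ
    rw [measure_essPart_inter]
    refine this.trans (add_le_add_left ?_ _)
    obtain ⟨K, hK⟩ := hφ.2.2.2.1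
    have h0 : μH[(d:ℝ)] (φ 1 '' (E \ essPart d E)) = 0 := by
      have h1 := (hK.mono (sdiff_subset.trans hE.1)).hausdorffMeasure_image_le
        (d := (d:ℝ)) (Nat.cast_nonneg d) (s := E \ essPart d E)
      rw [essPart_null, mul_zero] at h1
      exact le_antisymm h1 bot_le
    calc μH[(d:ℝ)] (φ 1 '' (E ∩ defW U φ 1))
        ≤ μH[(d:ℝ)] (φ 1 '' (essPart d E ∩ defW U φ 1) ∪ φ 1 '' (E \ essPart d E)) := by
          rw [← image_union]
          apply measure_mono
          apply image_mono
          rintro q ⟨h1, h2⟩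
          by_cases hq : q ∈ essPart d E
          · exact Or.inl ⟨hq, h2⟩
          · exact Or.inr ⟨h1, hq⟩
      _ ≤ _ + _ := measure_union_le _ _
      _ = _ := by rw [h0, add_zero]

theorem essPart_pos {n d : ℕ} {E : Set (Euc n)} {y : Euc n} (hy : y ∈ essPart d E) {ρ : ℝ}
    (hρ : 0 < ρ) : 0 < μH[(d:ℝ)] (essPart d E ∩ ball y ρ) := by
  rw [measure_essPart_inter]; exact hy.2 ρ hρ

/-! ### From the comparison inequality to monotonicity -/

theorem integral_radial_kernel {r a b N : ℝ} (hr : 0 < r) (m : ℕ) :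
    ∫ t in (0:ℝ)..r, (a * (r - t) + b * (r - t) ^ 2) * (N * (m + 1) / r ^ (m + 1) * t ^ m) =
      a * (N * r / (m + 2)) + b * (2 * N * r ^ 2 / ((m + 2) * (m + 3))) := by
  have e : ∀ t : ℝ, (a * (r - t) + b * (r - t) ^ 2) * (N * (m + 1) / r ^ (m + 1) * t ^ m) =
      (N * (m + 1) / r ^ (m + 1)) * ((a * r + b * r ^ 2) * t ^ m - (a + 2 * b * r) * t ^ (m + 1) +
        b * t ^ (m + 2)) := by intro t; ring
  simp_rw [e]
  rw [intervalIntegral.integral_const_mul, intervalIntegral.integral_add,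
    intervalIntegral.integral_sub, intervalIntegral.integral_const_mul,
    intervalIntegral.integral_const_mul, intervalIntegral.integral_const_mul, integral_pow,
    integral_pow, integral_pow]
  · have h1 : (m:ℝ) + 1 ≠ 0 := by positivity
    have h2 : (m:ℝ) + 2 ≠ 0 := by positivity
    have h3 : (m:ℝ) + 3 ≠ 0 := by positivity
    push_cast
    rw [show (m:ℝ) + 1 + 1 = m + 2 by ring, show (m:ℝ) + 2 + 1 = m + 3 by ring]
    field_simp
    ring
  all_goals apply Continuous.intervalIntegrable; fun_prop

/-- Layer-cake bound for the integral of a power of the distance to `x`. -/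
theorem lintegral_radial_le {n : ℕ} (μ : Measure (Euc n)) (x : Euc n) {r a b N : ℝ} (hr : 0 < r)
    (hN : 0 ≤ N) (ha : 0 ≤ a) (hb : 0 ≤ b) (m : ℕ)
    (hbd : ∀ t, 0 < t → t < r → μ (ball x r \ ball x t) ≤
      ENNReal.ofReal (a * (r - t) + b * (r - t) ^ 2)) :
    ∫⁻ q in ball x r, ENNReal.ofReal (N * (dist q x / r) ^ (m + 1)) ∂μ ≤
      ENNReal.ofReal (a * (N * r / (m + 2)) + b * (2 * N * r ^ 2 / ((m + 2) * (m + 3)))) := by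
  set g : ℝ → ℝ := fun t => N * (m + 1) / r ^ (m + 1) * t ^ m with hg
  have hgc : Continuous g := by simp only [hg]; fun_prop
  have hcake := lintegral_comp_eq_lintegral_meas_le_mul (μ.restrict (ball x r))
    (f := fun q => dist q x) (g := g) (ae_of_all _ fun q => dist_nonneg) (by fun_prop)
    (fun t _ => hgc.intervalIntegrable _ _)
    ((ae_restrict_iff' measurableSet_Ioi).2 (ae_of_all _ fun t (ht : 0 < t) => by
      simp only [hg]; positivity))
  have e1 : ∀ q : Euc n, ∫ t in (0:ℝ)..dist q x, g t = N * (dist q x / r) ^ (m + 1) := by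
    intro q
    simp only [hg]
    rw [intervalIntegral.integral_const_mul, integral_pow]
    have h1 : (m:ℝ) + 1 ≠ 0 := by positivity
    rw [div_pow, zero_pow (Nat.succ_ne_zero m)]
    field_simp
    ring
  simp_rw [e1] at hcake
  rw [hcake]
  set G : ℝ → ℝ := fun t => (a * (r - t) + b * (r - t) ^ 2) * g t with hG
  have hGc : Continuous G := by simp only [hG]; fun_prop
  have hG0 : ∀ t ∈ Ioc (0:ℝ) r, 0 ≤ G t := by
    intro t ht
    have h1 : 0 ≤ r - t := by linarith [ht.2]
    have h2 : 0 ≤ t := ht.1.le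
    simp only [hG, hg]; positivity
  calc ∫⁻ t in Ioi 0, (μ.restrict (ball x r)) {q | t ≤ dist q x} * ENNReal.ofReal (g t)
      ≤ ∫⁻ t in Ioi 0, (Ioc (0:ℝ) r).indicator (fun t => ENNReal.ofReal (G t)) t := by
        apply setLIntegral_mono' measurableSet_Ioi
        intro t (ht : 0 < t)
        have hm : MeasurableSet {q : Euc n | t ≤ dist q x} :=
          (isClosed_le continuous_const (by fun_prop)).measurableSet
        rw [Measure.restrict_apply hm]
        by_cases htr : t < r
        · rw [indicator_of_mem (show t ∈ Ioc 0 r from ⟨ht, htr.le⟩)]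
          have : {q : Euc n | t ≤ dist q x} ∩ ball x r = ball x r \ ball x t := by
            ext q; simp [and_comm]
          have h0 : 0 ≤ r - t := by linarith
          have h1 : ENNReal.ofReal (G t) =
              ENNReal.ofReal (a * (r - t) + b * (r - t) ^ 2) * ENNReal.ofReal (g t) :=
            ENNReal.ofReal_mul (by positivity)
          rw [this, h1]
          exact mul_le_mul_left (hbd t ht htr) _
        · have : {q : Euc n | t ≤ dist q x} ∩ ball x r = ∅ := by
            ext q
            simp only [mem_inter_iff, mem_ofPred_eq, mem_ball, mem_empty_iff_false, iff_false]
            intro h; linarith [h.1, h.2]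
          rw [this]; simp
    _ ≤ ∫⁻ t, (Ioc (0:ℝ) r).indicator (fun t => ENNReal.ofReal (G t)) t :=
        setLIntegral_le_lintegral _ _
    _ = ∫⁻ t in Ioc (0:ℝ) r, ENNReal.ofReal (G t) := lintegral_indicator measurableSet_Ioc _
    _ = ENNReal.ofReal (∫ t in Ioc (0:ℝ) r, G t) := by
        rw [ofReal_integral_eq_lintegral_ofReal]
        · exact (hGc.intervalIntegrable 0 r).1
        · exact (ae_restrict_iff' measurableSet_Ioc).2 (ae_of_all _ hG0)
    _ = _ := by
        rw [← intervalIntegral.integral_of_le hr.le]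
        congr 1
        exact integral_radial_kernel hr m

/-- The limiting differential inequality: letting `N → ∞`. -/
theorem diff_ineq_of_kernel {f f' r e : ℝ} {d : ℕ} (hd : 1 ≤ d) (hr : 0 < r)
    (H : ∀ a, f' < a → ∃ b : ℝ, 0 ≤ b ∧ ∀ N : ℕ, 2 ≤ N →
      f ≤ a * (N * r / (((N - 1) * d - 1 : ℕ) + 2)) +
        b * (2 * N * r ^ 2 / ((((N - 1) * d - 1 : ℕ) + 2) * (((N - 1) * d - 1 : ℕ) + 3))) + e) :
    f ≤ r / d * f' + e := by
  have hd0 : (0:ℝ) < d := by exact_mod_cast hd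
  have step : ∀ a, f' < a → f ≤ a * (r / d) + e := by
    intro a ha
    obtain ⟨b, hb, hN⟩ := H a ha
    have hlim : Tendsto (fun N : ℕ => a * ((N:ℝ) * r / (((N:ℝ) - 1) * d - 1 + 2)) +
        b * (2 * N * r ^ 2 / ((((N:ℝ) - 1) * d - 1 + 2) * (((N:ℝ) - 1) * d - 1 + 3))) + e) atTop
        (𝓝 (a * (r / d) + b * 0 + e)) := by
      have hinv : Tendsto (fun N : ℕ => ((N:ℝ))⁻¹) atTop (𝓝 0) :=
        tendsto_inv_atTop_zero.comp tendsto_natCast_atTop_atTop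
      have t1 : Tendsto (fun N : ℕ => r / ((1 - (N:ℝ)⁻¹) * d - (N:ℝ)⁻¹ + 2 * (N:ℝ)⁻¹)) atTop
          (𝓝 (r / ((1 - 0) * d - 0 + 2 * 0))) := by
        apply Tendsto.div tendsto_const_nhds
        · exact (((tendsto_const_nhds.sub hinv).mul_const _).sub hinv).add (hinv.const_mul 2)
        · simp [hd0.ne']
      have t2 : Tendsto (fun N : ℕ => 2 * r ^ 2 * (N:ℝ)⁻¹ /
          (((1 - (N:ℝ)⁻¹) * d - (N:ℝ)⁻¹ + 2 * (N:ℝ)⁻¹) *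
            ((1 - (N:ℝ)⁻¹) * d - (N:ℝ)⁻¹ + 3 * (N:ℝ)⁻¹))) atTop
          (𝓝 (2 * r ^ 2 * 0 / (((1 - 0) * d - 0 + 2 * 0) * ((1 - 0) * d - 0 + 3 * 0)))) := by
        apply Tendsto.div (hinv.const_mul _)
        · exact ((((tendsto_const_nhds.sub hinv).mul_const _).sub hinv).add (hinv.const_mul 2)).mul
            ((((tendsto_const_nhds.sub hinv).mul_const _).sub hinv).add (hinv.const_mul 3))
        · simp [hd0.ne']
      have t3 := ((t1.const_mul a).add (t2.const_mul b)).add_const e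
      have e3 : a * (r / d) + b * 0 + e = a * (r / ((1 - 0) * d - 0 + 2 * 0)) +
        b * (2 * r ^ 2 * 0 / (((1 - 0) * d - 0 + 2 * 0) * ((1 - 0) * d - 0 + 3 * 0))) + e := by
        simp
      rw [e3]
      refine t3.congr' ?_
      filter_upwards [eventually_ge_atTop 2] with N hN2
      have hN0 : (N:ℝ) ≠ 0 := by positivity
      have u1 : (1 - (N:ℝ)⁻¹) * d - (N:ℝ)⁻¹ + 2 * (N:ℝ)⁻¹ = (((N:ℝ) - 1) * d - 1 + 2) / N := by
        field_simp
      have u2 : (1 - (N:ℝ)⁻¹) * d - (N:ℝ)⁻¹ + 3 * (N:ℝ)⁻¹ = (((N:ℝ) - 1) * d - 1 + 3) / N := by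
        field_simp
      rw [u1, u2]
      have hN1 : (1:ℝ) ≤ (N:ℝ) - 1 := by
        have : (2:ℝ) ≤ N := by exact_mod_cast hN2
        linarith
      have p1 : 0 < ((N:ℝ) - 1) * d - 1 + 2 := by nlinarith
      have p2 : 0 < ((N:ℝ) - 1) * d - 1 + 3 := by nlinarith
      congr 2
      · field_simp
      · field_simp
    have : f ≤ a * (r / d) + b * 0 + e := by
      refine ge_of_tendsto hlim ?_
      filter_upwards [eventually_ge_atTop 2] with N hN2
      have := hN N hN2
      have hc : (((N - 1) * d - 1 : ℕ) : ℝ) = ((N:ℝ) - 1) * d - 1 := by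
        have : 1 ≤ (N - 1) * d := Nat.mul_pos (by omega) hd
        rw [Nat.cast_sub this, Nat.cast_mul, Nat.cast_sub (by omega)]
        simp
      rwa [hc] at this
    simpa using this
  have hlim2 : Tendsto (fun a : ℝ => a * (r / d) + e) (𝓝[>] f') (𝓝 (f' * (r / d) + e)) :=
    ((continuous_id.mul continuous_const).add continuous_const).continuousAt.mono_left
      nhdsWithin_le_nhds
  have := ge_of_tendsto hlim2 (by filter_upwards [self_mem_nhdsWithin] with a ha using step a ha)
  linarith [mul_comm f' (r / d)]

/-- The comparison with the radial contractions, in the limit `N → ∞`, becomes a differential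
inequality for the mass of `E ∩ ball x r` at radii where this mass is differentiable and the gauge is
right-continuous. -/
theorem density_diff_ineq {n d : ℕ} (hd : 1 ≤ d) {E : Set (Euc n)}
    {h : ℝ → ℝ≥0∞} {x : Euc n} {R : ℝ}
    (hfin : ∀ r, r < R → μH[(d:ℝ)] (E ∩ ball x r) < ⊤)
    (hsharp : ∀ r δ, 0 < r → r < R → 2 * r < δ → ∀ N : ℕ, 2 ≤ N →
      μH[(d:ℝ)] (E ∩ ball x r) ≤ (∫⁻ q in E ∩ ball x r,
        ENNReal.ofReal (N * (dist q x / r) ^ ((N - 1) * d)) ∂μH[(d:ℝ)]) +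
          h δ * ENNReal.ofReal (δ ^ d))
    {r : ℝ} (hr : 0 < r) (hrR : r < R)
    (hdiff : DifferentiableAt ℝ (fun r => (μH[(d:ℝ)] (E ∩ ball x r)).toReal) r)
    (hcont : Tendsto h (𝓝[>] (2 * r)) (𝓝 (h (2 * r)))) (hh : h (2 * r) ≠ ⊤) :
    (μH[(d:ℝ)] (E ∩ ball x r)).toReal ≤
      r / d * deriv (fun r => (μH[(d:ℝ)] (E ∩ ball x r)).toReal) r +
        (h (2 * r)).toReal * (2 * r) ^ d := by
  set f : ℝ → ℝ := fun r => (μH[(d:ℝ)] (E ∩ ball x r)).toReal with hf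
  have hmono : ∀ s t, s ≤ t → t < R → f s ≤ f t := by
    intro s t hst ht
    exact ENNReal.toReal_mono (hfin t ht).ne
      (measure_mono (inter_subset_inter_right _ (ball_subset_ball hst)))
  set ν := (μH[(d:ℝ)] : Measure (Euc n)).restrict E with hν
  have hνb : ∀ t, ν (ball x t) = μH[(d:ℝ)] (E ∩ ball x t) := by
    intro t; rw [hν, Measure.restrict_apply measurableSet_ball, inter_comm]
  have hdelta : ∀ δ, 2 * r < δ → h δ ≠ ⊤ →
      f r ≤ r / d * deriv f r + (h δ).toReal * δ ^ d := by
    intro δ hδ hδt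
    have hδ0 : 0 < δ := by linarith
    apply diff_ineq_of_kernel hd hr
    intro a ha
    have hs := hdiff.hasDerivAt.tendsto_slope
    have hev : ∀ᶠ t in 𝓝[<] r, slope f r t < a :=
      (hs.mono_left (nhdsWithin_mono _ (fun t (ht : t < r) => ne_of_lt ht))).eventually
        (gt_mem_nhds ha)
    obtain ⟨η, hη, hη2⟩ := (mem_nhdsLT_iff_exists_Ioo_subset).1 hev
    have hη' : η < r := hη
    have hline : ∀ t, η < t → t < r → f r - f t ≤ a * (r - t) := by
      intro t h1 h2
      have h3 : slope f r t < a := hη2 ⟨h1, h2⟩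
      rw [slope_def_field, div_lt_iff_of_neg (by linarith)] at h3
      linarith
    have ha0 : 0 ≤ a := by
      have h1 := hline ((η + r) / 2) (by linarith) (by linarith)
      have h2 := hmono ((η + r) / 2) r (by linarith) hrR
      have h3 : 0 < r - (η + r) / 2 := by linarith
      by_contra hc
      push Not at hc
      nlinarith
    have hfr : 0 ≤ f r := ENNReal.toReal_nonneg
    refine ⟨f r / (r - η) ^ 2, by positivity, ?_⟩
    intro N hN
    have hM : 1 ≤ (N - 1) * d := Nat.mul_pos (by omega) hd
    have key := lintegral_radial_le ν x (a := a) (b := f r / (r - η) ^ 2) (N := N) hr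
      (by positivity) ha0 (by positivity) ((N - 1) * d - 1) (by
        intro t ht0 htr
        have hsub : ball x t ⊆ ball x r := ball_subset_ball htr.le
        rw [measure_sdiff hsub measurableSet_ball.nullMeasurableSet
          (by rw [hνb]; exact (hfin t (htr.trans hrR)).ne), hνb, hνb,
          ← ENNReal.ofReal_toReal (hfin r hrR).ne,
          ← ENNReal.ofReal_toReal (hfin t (htr.trans hrR)).ne,
          ← ENNReal.ofReal_sub _ ENNReal.toReal_nonneg]
        apply ENNReal.ofReal_le_ofReal
        change f r - f t ≤ _
        have hft : 0 ≤ f t := ENNReal.toReal_nonneg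
        rcases lt_or_ge η t with h1 | h1
        · have h2 := hline t h1 htr
          have : 0 ≤ f r / (r - η) ^ 2 * (r - t) ^ 2 := by positivity
          linarith
        · have h3 : (r - η) ^ 2 ≤ (r - t) ^ 2 := by nlinarith
          have h4 : 0 < (r - η) ^ 2 := by nlinarith
          have h5 : f r ≤ f r / (r - η) ^ 2 * (r - t) ^ 2 := by
            rw [div_mul_eq_mul_div, le_div_iff₀ h4]
            nlinarith
          have : 0 ≤ a * (r - t) := mul_nonneg ha0 (by linarith)
          linarith)
    rw [Nat.sub_add_cancel hM] at key
    have hsh := hsharp r δ hr hrR hδ N hN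
    have e1 : (∫⁻ q in E ∩ ball x r,
        ENNReal.ofReal (N * (dist q x / r) ^ ((N - 1) * d)) ∂μH[(d:ℝ)]) =
        ∫⁻ q in ball x r, ENNReal.ofReal (N * (dist q x / r) ^ ((N - 1) * d)) ∂ν := by
      rw [hν, Measure.restrict_restrict measurableSet_ball, inter_comm]
    rw [e1] at hsh
    have h6 := hsh.trans (add_le_add_left key _)
    rw [← ENNReal.ofReal_toReal hδt, ← ENNReal.ofReal_mul ENNReal.toReal_nonneg,
      ← ENNReal.ofReal_add (by positivity) (by positivity)] at h6
    exact ENNReal.toReal_le_of_le_ofReal (by positivity) h6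
  have hlim : Tendsto (fun δ => r / d * deriv f r + (h δ).toReal * δ ^ d) (𝓝[>] (2 * r))
      (𝓝 (r / d * deriv f r + (h (2 * r)).toReal * (2 * r) ^ d)) := by
    apply Tendsto.const_add
    apply Tendsto.mul
    · exact (ENNReal.tendsto_toReal hh).comp hcont
    · exact ((continuous_pow d).tendsto _).mono_left nhdsWithin_le_nhds
  refine ge_of_tendsto hlim ?_
  filter_upwards [self_mem_nhdsWithin, hcont.eventually (gt_mem_nhds hh.lt_top)] with δ h1 h2
  exact hdelta δ h1 h2.ne

/-- Under the lower bound `c₀ r ^ d` for the mass, the differential inequality says that the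
logarithmic derivative of `r ^ (-d) * H^d (E ∩ ball x r)` is at least `-lam * h (2 r) / r` almost
everywhere. The mass is monotone in `r` but perhaps not absolutely continuous; for a
monotone function the increments dominate the integral of the derivative. -/
theorem monotone_of_sharp {n d : ℕ} (hd : 1 ≤ d) {E : Set (Euc n)}
    {h : ℝ → ℝ≥0∞} (hg : IsGaugeFn h) {x : Euc n} {R c₀ lam : ℝ} (hc₀ : 0 < c₀)
    (hlam : d * 2 ^ d / c₀ ≤ lam)
    (hfin : ∀ r, r < R → μH[(d:ℝ)] (E ∩ ball x r) < ⊤)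
    (hlow : ∀ r, 0 < r → r < R → ENNReal.ofReal (c₀ * r ^ d) ≤ μH[(d:ℝ)] (E ∩ ball x r))
    (hsharp : ∀ r δ, 0 < r → r < R → 2 * r < δ → ∀ N : ℕ, 2 ≤ N →
      μH[(d:ℝ)] (E ∩ ball x r) ≤ (∫⁻ q in E ∩ ball x r,
        ENNReal.ofReal (N * (dist q x / r) ^ ((N - 1) * d)) ∂μH[(d:ℝ)]) +
          h δ * ENNReal.ofReal (δ ^ d))
    (hintg : (∫⁻ t in Ioo (0:ℝ) R, h (2 * t) / ENNReal.ofReal t) < ⊤)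
    {r₁ r₂ : ℝ} (hr₁ : 0 < r₁) (hr₁₂ : r₁ ≤ r₂) (hr₂ : r₂ < R) :
    μH[(d:ℝ)] (E ∩ ball x r₁) / ENNReal.ofReal (r₁ ^ d) *
        ENNReal.ofReal (Real.exp (lam *
          (∫⁻ t in Ioo (0:ℝ) r₁, h (2 * t) / ENNReal.ofReal t).toReal)) ≤
      μH[(d:ℝ)] (E ∩ ball x r₂) / ENNReal.ofReal (r₂ ^ d) *
        ENNReal.ofReal (Real.exp (lam *
          (∫⁻ t in Ioo (0:ℝ) r₂, h (2 * t) / ENNReal.ofReal t).toReal)) := by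
  have hd0 : (0:ℝ) < d := by exact_mod_cast hd
  have hr2pos : 0 < r₂ := hr₁.trans_le hr₁₂
  set f : ℝ → ℝ := fun r => (μH[(d:ℝ)] (E ∩ ball x r)).toReal with hf
  have hmono : ∀ s t, s ≤ t → t < R → f s ≤ f t := by
    intro s t hst ht
    exact ENNReal.toReal_mono (hfin t ht).ne
      (measure_mono (inter_subset_inter_right _ (ball_subset_ball hst)))
  have hflow : ∀ r, 0 < r → r < R → c₀ * r ^ d ≤ f r := by
    intro r h1 h2
    exact (ENNReal.ofReal_le_iff_le_toReal (hfin r h2).ne).1 (hlow r h1 h2)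
  have hfpos : ∀ r, 0 < r → r < R → 0 < f r := fun r h1 h2 =>
    lt_of_lt_of_le (by positivity) (hflow r h1 h2)
  -- a globally monotone version of the gauge
  set h' : ℝ → ℝ≥0∞ := fun t => if 0 < t then h t else 0 with hh'
  have hh'm : Monotone h' := by
    intro s t hst
    simp only [hh']
    split_ifs with h1 h2
    · exact hg.1 h1 hst
    · exact absurd (h1.trans_le hst) h2
    · exact bot_le
    · exact le_rfl
  have hcount : {t : ℝ | ¬ ContinuousAt h' (2 * t)}.Countable := by
    have := hh'm.countable_not_continuousAt
    exact this.preimage (f := fun t : ℝ => 2 * t) (fun a b hab => by simpa using hab)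
  set ψe : ℝ → ℝ≥0∞ := fun t => h' (2 * t) / ENNReal.ofReal t with hψe
  have hψem : Measurable ψe := by
    apply Measurable.div
    · exact hh'm.measurable.comp (measurable_const_mul 2)
    · fun_prop
  have heq : ∀ r, (∫⁻ t in Ioo (0:ℝ) r, h (2 * t) / ENNReal.ofReal t) =
      ∫⁻ t in Ioo (0:ℝ) r, ψe t := by
    intro r
    apply setLIntegral_congr_fun measurableSet_Ioo
    intro t ht
    simp [hψe, hh', ht.1]
  rw [heq] at hintg
  set ψ : ℝ → ℝ := fun t => (ψe t).toReal with hψ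
  have hψint : IntegrableOn ψ (Ioo 0 R) :=
    integrable_toReal_of_lintegral_ne_top hψem.aemeasurable hintg.ne
  have hψfin : ∀ᵐ t ∂(volume.restrict (Ioo 0 R)), ψe t < ⊤ := ae_lt_top hψem hintg.ne
  have hA : ∀ r, 0 < r → r < R →
      (∫⁻ t in Ioo (0:ℝ) r, h (2 * t) / ENNReal.ofReal t).toReal = ∫ t in (0:ℝ)..r, ψ t := by
    intro r h1 h2
    rw [heq, intervalIntegral.integral_of_le h1.le, integral_Ioc_eq_integral_Ioo,
      integral_toReal hψem.aemeasurable]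
    · exact ae_restrict_of_ae_restrict_of_subset (Ioo_subset_Ioo_right h2.le) hψfin
  rw [hA r₁ hr₁ (hr₁₂.trans_lt hr₂), hA r₂ hr2pos hr₂]
  have hr1R : r₁ < R := hr₁₂.trans_lt hr₂
  have hlogmono : MonotoneOn (fun r => Real.log (f r)) (uIcc r₁ r₂) := by
    rw [uIcc_of_le hr₁₂]
    intro s hs t ht hst
    exact Real.log_le_log (hfpos s (hr₁.trans_le hs.1) (hs.2.trans_lt hr₂))
      (hmono s t hst (ht.2.trans_lt hr₂))
  have hfmono : MonotoneOn f (Ioo 0 R) := fun s _ t ht hst => hmono s t hst ht.2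
  have hae : ∀ᵐ t ∂(volume : Measure ℝ), t ∈ Ioo 0 R →
      d / t - lam * ψ t ≤ deriv (fun r => Real.log (f r)) t := by
    filter_upwards [hfmono.ae_differentiableWithinAt_of_mem, hcount.ae_notMem volume,
      (ae_restrict_iff' measurableSet_Ioo).1 hψfin] with t h1 h2 h3 ht
    have ht0 : 0 < t := ht.1
    have hdiff : DifferentiableAt ℝ f t := (h1 ht).differentiableAt (Ioo_mem_nhds ht.1 ht.2)
    have hc : ContinuousAt h' (2 * t) := by simpa using h2
    have h2t : 0 < 2 * t := by linarith
    have hh2 : h' (2 * t) = h (2 * t) := by simp only [hh', if_pos h2t]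
    have hcont : Tendsto h (𝓝[>] (2 * t)) (𝓝 (h (2 * t))) := by
      rw [← hh2]
      refine (hc.tendsto.mono_left nhdsWithin_le_nhds).congr' ?_
      filter_upwards [self_mem_nhdsWithin] with u hu
      have : 0 < u := h2t.trans hu
      simp only [hh', if_pos this]
    have hψt : ψ t = (h (2 * t)).toReal / t := by
      simp only [hψ, hψe, hh2, ENNReal.toReal_div, ENNReal.toReal_ofReal ht0.le]
    have htop : h (2 * t) ≠ ⊤ := by
      intro hc
      have := h3 ht
      simp only [hψe, hh2, hc] at this
      rw [ENNReal.top_div_of_ne_top ENNReal.ofReal_ne_top] at this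
      exact lt_irrefl _ this
    have key := density_diff_ineq hd hfin hsharp ht0 ht.2 hdiff hcont htop
    have hft := hfpos t ht0 ht.2
    have hder : deriv (fun r => Real.log (f r)) t = deriv f t / f t :=
      deriv.log hdiff hft.ne'
    rw [hder, hψt]
    change f t ≤ t / d * deriv f t + (h (2 * t)).toReal * (2 * t) ^ d at key
    have hH : 0 ≤ (h (2 * t)).toReal := ENNReal.toReal_nonneg
    set H := (h (2 * t)).toReal
    have hlo := hflow t ht0 ht.2
    have a1 : d * f t - d * H * 2 ^ d * t ^ d ≤ t * deriv f t := by
      have e1 : t * deriv f t = d * (t / d * deriv f t) := by field_simp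
      have e2 : d * H * 2 ^ d * t ^ d = d * (H * (2 * t) ^ d) := by rw [mul_pow]; ring
      rw [e1, e2, ← mul_sub]
      apply mul_le_mul_of_nonneg_left _ hd0.le
      linarith
    have a2 : d * H * 2 ^ d * t ^ d ≤ lam * H * f t := by
      have b1 : d * 2 ^ d ≤ lam * c₀ := by rwa [div_le_iff₀ hc₀] at hlam
      have hl0 : 0 ≤ lam := le_trans (by positivity) hlam
      calc d * H * 2 ^ d * t ^ d = (d * 2 ^ d) * (H * t ^ d) := by ring
        _ ≤ (lam * c₀) * (H * t ^ d) := by gcongr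
        _ = lam * H * (c₀ * t ^ d) := by ring
        _ ≤ lam * H * f t := by gcongr
    rw [le_div_iff₀ hft]
    have : (d / t - lam * (H / t)) * f t = (d * f t - lam * H * f t) / t := by ring
    rw [this, div_le_iff₀ ht0]
    linarith
  have hψii : ∀ s t, 0 ≤ s → s ≤ t → t < R → IntervalIntegrable ψ volume s t := by
    intro s t h1 h2 h3
    rw [intervalIntegrable_iff_integrableOn_Ioc_of_le h2]
    exact hψint.mono_set (fun u hu => ⟨h1.trans_lt hu.1, hu.2.trans_lt h3⟩)
  have hdt : IntervalIntegrable (fun t : ℝ => (d:ℝ) / t) volume r₁ r₂ := by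
    apply ContinuousOn.intervalIntegrable
    rw [uIcc_of_le hr₁₂]
    apply ContinuousOn.div continuousOn_const continuousOn_id
    intro t ht
    exact (hr₁.trans_le ht.1).ne'
  have hI1 : ∫ t in r₁..r₂, (d / t - lam * ψ t) ≤
      ∫ t in r₁..r₂, deriv (fun r => Real.log (f r)) t := by
    apply intervalIntegral.integral_mono_ae_restrict hr₁₂
    · exact hdt.sub ((hψii r₁ r₂ hr₁.le hr₁₂ hr₂).const_mul lam)
    · exact hlogmono.intervalIntegrable_deriv
    · rw [Filter.EventuallyLE, ae_restrict_iff' measurableSet_Icc]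
      filter_upwards [hae] with t ht1 ht2
      exact ht1 ⟨hr₁.trans_le ht2.1, ht2.2.trans_lt hr₂⟩
  have hI2 : ∫ t in r₁..r₂, deriv (fun r => Real.log (f r)) t ≤
      Real.log (f r₂) - Real.log (f r₁) := by
    have h1 := hlogmono.intervalIntegral_deriv_mem_uIcc
    have h2 : Real.log (f r₁) ≤ Real.log (f r₂) := hlogmono (by simp) (by simp) hr₁₂
    rw [uIcc_of_le (by linarith)] at h1
    exact h1.2
  have hI3 : ∫ t in r₁..r₂, (d / t - lam * ψ t) =
      d * (Real.log r₂ - Real.log r₁) -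
        lam * ((∫ t in (0:ℝ)..r₂, ψ t) - ∫ t in (0:ℝ)..r₁, ψ t) := by
    rw [intervalIntegral.integral_sub hdt ((hψii r₁ r₂ hr₁.le hr₁₂ hr₂).const_mul lam),
      intervalIntegral.integral_const_mul,
      intervalIntegral.integral_interval_sub_left (hψii 0 r₂ le_rfl hr2pos.le hr₂)
        (hψii 0 r₁ le_rfl hr₁.le hr1R)]
    congr 1
    simp_rw [div_eq_mul_inv]
    rw [intervalIntegral.integral_const_mul, integral_inv_of_pos hr₁ hr2pos,
      Real.log_div hr2pos.ne' hr₁.ne']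
  set A₁ := ∫ t in (0:ℝ)..r₁, ψ t
  set A₂ := ∫ t in (0:ℝ)..r₂, ψ t
  have hconv : ∀ r A, 0 < r → r < R →
      μH[(d:ℝ)] (E ∩ ball x r) / ENNReal.ofReal (r ^ d) * ENNReal.ofReal (Real.exp (lam * A)) =
        ENNReal.ofReal (Real.exp (Real.log (f r) - d * Real.log r + lam * A)) := by
    intro r A h1 h2
    rw [← ENNReal.ofReal_toReal (hfin r h2).ne, ← ENNReal.ofReal_div_of_pos (by positivity),
      ← ENNReal.ofReal_mul (by positivity)]
    congr 1
    rw [Real.exp_add, Real.exp_sub, Real.exp_log (hfpos r h1 h2), Real.exp_nat_mul,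
      Real.exp_log h1]
  rw [hconv r₁ A₁ hr₁ hr1R, hconv r₂ A₂ hr2pos hr₂]
  apply ENNReal.ofReal_le_ofReal
  apply Real.exp_le_exp.2
  linarith [hI1, hI2, hI3]

/-! ### Comparison by gluing in linearized projections -/

/-- A perturbation `g` supported in a ball that changes `φ` into `A` at the points of the core of the
ball where the two maps are close. Its Lipschitz constant does not depend on the width `σ` of the
transition region, because `A - φ` is first truncated at height `σ * ρ`. -/
theorem ball_modification {n : ℕ} {φ A : Euc n → Euc n} {K : ℝ≥0} (hφ : LipschitzWith K φ)
    (hA : LipschitzWith K A) (y : Euc n) {ρ σ : ℝ} (hρ : 0 < ρ) (hσ : 0 < σ) :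
    ∃ g : Euc n → Euc n, LipschitzWith (2 * K + 1) g ∧ (∀ q, q ∉ closedBall y ρ → g q = 0) ∧
      ∀ q ∈ closedBall y ((1 - σ) * ρ), ‖A q - φ q‖ ≤ σ * ρ → φ q + g q = A q := by
  have hσρ : 0 < σ * ρ := mul_pos hσ hρ
  obtain ⟨p, hp1, hp2, hp3⟩ := exists_ball_retraction (0 : Euc n) hσρ
  set χ : Euc n → ℝ := fun q => max 0 (min 1 ((ρ - dist q y) / (σ * ρ))) with hχ
  have hχ0 : ∀ q, 0 ≤ χ q := fun q => le_max_left _ _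
  have hχ1 : ∀ q, χ q ≤ 1 := fun q => max_le zero_le_one (min_le_left _ _)
  have hχL : ∀ a b, |χ a - χ b| ≤ dist a b / (σ * ρ) := by
    intro a b
    have h1 : |χ a - χ b| ≤ |(ρ - dist a y) / (σ * ρ) - (ρ - dist b y) / (σ * ρ)| := by
      simp only [hχ]
      refine (abs_max_sub_max_le_max 0 _ 0 _).trans ?_
      simp only [sub_self, abs_zero]
      refine max_le (abs_nonneg _) ?_
      refine (abs_min_sub_min_le_max 1 _ 1 _).trans ?_
      simp
    refine h1.trans ?_
    rw [← sub_div, abs_div, abs_of_pos hσρ]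
    gcongr
    have : |dist a y - dist b y| ≤ dist a b := abs_dist_sub_le a b y
    rw [abs_le] at this ⊢
    constructor <;> linarith [this.1, this.2]
  refine ⟨fun q => χ q • p (A q - φ q), ?_, ?_, ?_⟩
  · apply LipschitzWith.of_dist_le_mul
    intro a b
    have hp1' : ‖p (A a - φ a) - p (A b - φ b)‖ ≤ 2 * K * dist a b := by
      have h1 := (hp1.comp (hA.sub hφ)).dist_le_mul a b
      rw [dist_eq_norm] at h1
      simp only [Function.comp, one_mul, NNReal.coe_add] at h1
      linarith
    have hpb : ‖p (A b - φ b)‖ ≤ σ * ρ := by simpa using hp2 (A b - φ b)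
    rw [dist_eq_norm]
    have e : χ a • p (A a - φ a) - χ b • p (A b - φ b) =
        χ a • (p (A a - φ a) - p (A b - φ b)) + (χ a - χ b) • p (A b - φ b) := by module
    rw [e]
    calc _ ≤ χ a * ‖p (A a - φ a) - p (A b - φ b)‖ + |χ a - χ b| * ‖p (A b - φ b)‖ := by
          refine (norm_add_le _ _).trans ?_
          rw [norm_smul, norm_smul, Real.norm_of_nonneg (hχ0 a), Real.norm_eq_abs]
      _ ≤ 1 * (2 * K * dist a b) + dist a b / (σ * ρ) * (σ * ρ) := by
          gcongr
          · exact hχ1 a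
          · exact hχL a b
      _ = _ := by
          rw [div_mul_cancel₀ _ hσρ.ne']
          push_cast
          ring
  · intro q hq
    rw [mem_closedBall, not_le] at hq
    have : χ q = 0 := by
      simp only [hχ]
      apply max_eq_left
      apply (min_le_right _ _).trans
      exact div_nonpos_of_nonpos_of_nonneg (by linarith) hσρ.le
    simp [this]
  · intro q hq hAq
    rw [mem_closedBall] at hq
    have : χ q = 1 := by
      simp only [hχ]
      rw [min_eq_left, max_eq_right zero_le_one]
      rw [le_div_iff₀ hσρ]; linarith
    simp only [this, one_smul]
    rw [hp3 _ (by simpa using hAq)]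
    abel

/-- A ball on which the deformation `φ` may be replaced, on the core of the ball, by its
linearization composed with the projection onto a `d`-plane. -/
def GoodBall {n : ℕ} (d : ℕ) (E : Set (Euc n)) (φ : Euc n → Euc n)
    (L : Euc n → Euc n →L[ℝ] Euc n) (J : Euc n → ℝ) (x : Euc n) (r ε : ℝ) (y : Euc n) (ρ : ℝ) :
    Prop :=
  0 < ρ ∧ closedBall y ρ ⊆ ball x r ∧ (∀ q ∈ closedBall y ρ, J y ≤ J q + ε) ∧
    ∃ σ : ℝ, 0 < σ ∧ ∃ W : Submodule ℝ (Euc n), Module.finrank ℝ W = d ∧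
      (∀ q ∈ E ∩ closedBall y ρ, ‖φ y + L y (W.starProjection (q - y)) - φ q‖ ≤ σ * ρ) ∧
      μH[(d:ℝ)] (E ∩ (closedBall y ρ \ closedBall y ((1 - σ) * ρ))) ≤
        ENNReal.ofReal ε * μH[(d:ℝ)] (E ∩ closedBall y ρ)

theorem projected_image_le {n d : ℕ} (L : Euc n →L[ℝ] Euc n) {j : ℝ} (W : Submodule ℝ (Euc n))
    (hJ : ∀ D : Set (Euc n), D ⊆ W → μH[(d:ℝ)] (L '' D) ≤ ENNReal.ofReal j * μH[(d:ℝ)] D)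
    (a y : Euc n) (S : Set (Euc n)) :
    μH[(d:ℝ)] ((fun q => a + L (W.starProjection (q - y))) '' S) ≤
      ENNReal.ofReal j * μH[(d:ℝ)] S := by
  have h1 : (fun q => a + L (W.starProjection (q - y))) '' S =
      (fun z => a + z) '' (L '' (W.starProjection '' ((fun q => q - y) '' S))) := by
    simp only [image_image]
  rw [h1, (isometry_add_left a).hausdorffMeasure_image (Or.inl (Nat.cast_nonneg d))]
  have hW : W.starProjection '' ((fun q => q - y) '' S) ⊆ W := by
    rintro _ ⟨z, -, rfl⟩
    exact W.starProjection_apply_mem z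
  refine (hJ _ hW).trans ?_
  have h2 : LipschitzWith 1 (fun q : Euc n => W.starProjection (q - y)) := by
    apply LipschitzWith.of_dist_le_mul
    intro p q
    rw [dist_eq_norm, ← map_sub, dist_eq_norm]
    refine (W.norm_starProjection_apply_le _).trans ?_
    simp
  have h3 := h2.hausdorffMeasure_image_le (d := (d:ℝ)) (Nat.cast_nonneg d) S
  simp only [ENNReal.coe_one, ENNReal.one_rpow, one_mul] at h3
  rw [image_image]
  gcongr

theorem lipschitz_image_le_lintegral {n d : ℕ} {f : Euc n → Euc n} {K : ℝ≥0} {S : Set (Euc n)}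
    (hf : LipschitzOnWith K f S) (hSm : MeasurableSet S) {k : Euc n → ℝ≥0∞}
    (hk : ∀ q ∈ S, (K:ℝ≥0∞) ^ d ≤ k q) :
    μH[(d:ℝ)] (f '' S) ≤ ∫⁻ q in S, k q ∂μH[(d:ℝ)] := by
  have h1 := hf.hausdorffMeasure_image_le (d := (d:ℝ)) (Nat.cast_nonneg d)
  rw [ENNReal.rpow_natCast] at h1
  refine h1.trans ?_
  rw [← setLIntegral_const]
  exact setLIntegral_mono' hSm hk

/-- Comparison with the map obtained from `φ` by linearizing and projecting on finitely many disjoint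
good balls. The error comes from the boundary layers of the balls and from the part of `E` that is
not covered. -/
theorem sharp_finite {n d : ℕ} {U E : Set (Euc n)} {h : ℝ → ℝ≥0∞} (hU : IsOpen U)
    (hE : IsAAlmostMinimal n d U E h) {x : Euc n} {r δ : ℝ} (hr : 0 < r)
    (hB : closedBall x r ⊆ U) (hδ : 2 * r < δ) {φ : Euc n → Euc n} {K : ℝ≥0}
    (hφ : LipschitzWith K φ) (hid : ∀ q, q ∉ ball x r → φ q = q)
    {L : Euc n → Euc n →L[ℝ] Euc n} (hLK : ∀ y ∈ ball x r, ‖L y‖ ≤ K)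
    {J : Euc n → ℝ} (hJ0 : ∀ y, 0 ≤ J y)
    (hJ : ∀ y ∈ ball x r, ∀ W : Submodule ℝ (Euc n), Module.finrank ℝ W = d →
      ∀ D : Set (Euc n), D ⊆ W → μH[(d:ℝ)] (L y '' D) ≤ ENNReal.ofReal (J y) * μH[(d:ℝ)] D)
    {ε : ℝ} (hε : 0 ≤ ε) (T : Finset (Euc n)) (ρ : Euc n → ℝ)
    (hT : ∀ y ∈ T, GoodBall d E φ L J x r ε y (ρ y))
    (hdisj : ∀ y ∈ T, ∀ z ∈ T, y ≠ z → Disjoint (closedBall y (ρ y)) (closedBall z (ρ z))) :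
    μH[(d:ℝ)] (E ∩ ball x r) ≤ (∫⁻ q in E ∩ ball x r, ENNReal.ofReal (J q) ∂μH[(d:ℝ)]) +
      (ENNReal.ofReal ε * μH[(d:ℝ)] (E ∩ ball x r) + ((3 * K + 1 : ℝ≥0) : ℝ≥0∞) ^ d *
        (ENNReal.ofReal ε * μH[(d:ℝ)] (E ∩ ball x r) +
          μH[(d:ℝ)] ((E ∩ ball x r) \ ⋃ y ∈ T, closedBall y (ρ y)))) +
      h δ * ENNReal.ofReal (δ ^ d) := by
  have hEm := hE.measurableSet hU
  have hex : ∀ y ∈ T, ∃ (σ : ℝ) (W : Submodule ℝ (Euc n)) (g : Euc n → Euc n),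
      Module.finrank ℝ W = d ∧
      μH[(d:ℝ)] (E ∩ (closedBall y (ρ y) \ closedBall y ((1 - σ) * ρ y))) ≤
        ENNReal.ofReal ε * μH[(d:ℝ)] (E ∩ closedBall y (ρ y)) ∧
      LipschitzWith (2 * K + 1) g ∧ (∀ q, q ∉ closedBall y (ρ y) → g q = 0) ∧
      ∀ q ∈ E ∩ closedBall y ((1 - σ) * ρ y) ∩ closedBall y (ρ y),
        φ q + g q = φ y + L y (W.starProjection (q - y)) := by
    intro y hy
    obtain ⟨h1, h2, -, σ, hσ, W, hW, h4, h5⟩ := hT y hy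
    have hyb : y ∈ ball x r := h2 (mem_closedBall_self h1.le)
    have hA : LipschitzWith K (fun q => φ y + L y (W.starProjection (q - y))) := by
      apply LipschitzWith.of_dist_le_mul
      intro a b
      rw [dist_eq_norm, add_sub_add_left_eq_sub, ← map_sub, ← map_sub, sub_sub_sub_cancel_right,
        dist_eq_norm]
      refine ((L y).le_opNorm _).trans ?_
      gcongr
      · exact hLK y hyb
      · exact W.norm_starProjection_apply_le _
    obtain ⟨g, hg1, hg2, hg3⟩ := ball_modification hφ hA y h1 hσ
    refine ⟨σ, W, g, hW, h5, hg1, hg2, ?_⟩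
    rintro q ⟨⟨hqE, hq1⟩, hq2⟩
    exact hg3 q hq1 (h4 q ⟨hqE, hq2⟩)
  choose! σ W g hW hring hgL hg0 hgA using hex
  set f : Euc n → Euc n := fun q => φ q + ∑ y ∈ T, g y q with hf
  have hfL : ∃ K', LipschitzWith K' f := by
    have : ∀ T' ⊆ T, ∃ K', LipschitzWith K' (fun q => ∑ y ∈ T', g y q) := by
      intro T'
      induction T' using Finset.induction_on with
      | empty => intro _; exact ⟨0, by simp⟩
      | insert a s ha ih =>
        intro hs
        obtain ⟨K', hK'⟩ := ih ((Finset.subset_insert a s).trans hs)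
        have := (hgL a (hs (Finset.mem_insert_self a s))).add hK'
        simp_rw [Finset.sum_insert ha]
        exact ⟨_, this⟩
    obtain ⟨K', hK'⟩ := this T subset_rfl
    exact ⟨_, hφ.add hK'⟩
  obtain ⟨K', hK'⟩ := hfL
  have hfid : ∀ q, q ∉ ball x r → f q = q := by
    intro q hq
    simp only [hf]
    rw [hid q hq, Finset.sum_eq_zero, add_zero]
    intro y hy
    exact hg0 y hy q (fun hc => hq ((hT y hy).2.1 hc))
  have hfin : ∀ y ∈ T, ∀ q ∈ closedBall y (ρ y), f q = φ q + g y q := by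
    intro y hy q hq
    simp only [hf]
    rw [Finset.sum_eq_single_of_mem y hy]
    intro z hz hzy
    exact hg0 z hz q (fun hc => (hdisj z hz y hy hzy).le_bot ⟨hc, hq⟩)
  have hfout : ∀ q, q ∉ ⋃ y ∈ T, closedBall y (ρ y) → f q = φ q := by
    intro q hq
    simp only [hf]
    rw [Finset.sum_eq_zero, add_zero]
    intro y hy
    apply hg0 y hy q
    intro hc
    exact hq (mem_biUnion hy hc)
  set core : Set (Euc n) := ⋃ y ∈ T, (closedBall y (ρ y) ∩ closedBall y ((1 - σ y) * ρ y)) with hcore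
  have hcorem : MeasurableSet core := Finset.measurableSet_biUnion _
    (fun y _ => measurableSet_closedBall.inter measurableSet_closedBall)
  set k : Euc n → ℝ≥0∞ := fun q => (ENNReal.ofReal (J q) + ENNReal.ofReal ε) +
    (coreᶜ).indicator (fun _ => ((3 * K + 1 : ℝ≥0) : ℝ≥0∞) ^ d) q with hk
  have hkK : ∀ q, q ∉ core → ((3 * K + 1 : ℝ≥0) : ℝ≥0∞) ^ d ≤ k q := by
    intro q hq
    simp only [hk]
    rw [indicator_of_mem (show q ∈ coreᶜ from hq)]
    exact le_add_self
  have hUm : MeasurableSet (⋃ y ∈ T, closedBall y (ρ y)) :=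
    Finset.measurableSet_biUnion _ (fun y _ => measurableSet_closedBall)
  have hloc : ∀ S, MeasurableSet S → S ⊆ E ∩ ball x r →
      μH[(d:ℝ)] (f '' S) ≤ ∫⁻ q in S, k q ∂μH[(d:ℝ)] := by
    intro S hSm hSE
    refine image_measure_le_of_split (F := E ∩ ball x r) hUm ?_ ?_ hSm hSE
    · intro S hSm hS
      rcases T.eq_empty_or_nonempty with hTe | hTn
      · have : S = ∅ := by
          rw [hTe] at hS; simpa using hS
        simp [this]
      obtain ⟨e, he⟩ := (T.countable_toSet).exists_eq_range hTn
      have heT : ∀ i, e i ∈ T := fun i => by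
        have : e i ∈ (T : Set (Euc n)) := by rw [he]; exact mem_range_self i
        exact this
      refine image_measure_le_of_cover (F := E ∩ ball x r ∩ ⋃ y ∈ T, closedBall y (ρ y))
        (P := fun i => closedBall (e i) (ρ (e i))) (fun i => measurableSet_closedBall) ?_ ?_ hSm hS
      · rintro q ⟨-, hq⟩
        simp only [mem_iUnion] at hq ⊢
        obtain ⟨y, hy, hq⟩ := hq
        have hy' : y ∈ range e := by rw [← he]; exact hy
        obtain ⟨i, rfl⟩ := hy'
        exact ⟨i, hq⟩
      intro i S hSm hS
      have hy := heT i
      generalize e i = y at hS hy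
      refine image_measure_le_of_split (F := E ∩ closedBall y (ρ y)) hcorem ?_ ?_ hSm
        (fun q hq => ⟨(hS hq).1.1.1, (hS hq).2⟩)
      · -- on the core the modified map is the linearized one
        intro S hSm hS
        have hS2 : ∀ q ∈ S, q ∈ closedBall y ((1 - σ y) * ρ y) := by
          intro q hq
          have := (hS hq).2
          simp only [hcore, mem_iUnion] at this
          obtain ⟨z, hz, hqz⟩ := this
          by_cases hzy : z = y
          · subst hzy; exact hqz.2
          · exact absurd ⟨hqz.1, (hS hq).1.2⟩ (fun hc => (hdisj z hz y hy hzy).le_bot hc)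
        have himg : f '' S = (fun q => φ y + L y ((W y).starProjection (q - y))) '' S := by
          apply image_congr
          intro q hq
          rw [hfin y hy q (hS hq).1.2]
          exact hgA y hy q ⟨⟨(hS hq).1.1, hS2 q hq⟩, (hS hq).1.2⟩
        have hyb : y ∈ ball x r := (hT y hy).2.1 (mem_closedBall_self (hT y hy).1.le)
        rw [himg]
        refine (projected_image_le (L y) (W y) (hJ y hyb (W y) (hW y hy)) _ y S).trans ?_
        rw [← setLIntegral_const]
        apply setLIntegral_mono' hSm
        intro q hq
        have h1 := (hT y hy).2.2.1 q (hS hq).1.2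
        calc ENNReal.ofReal (J y) ≤ ENNReal.ofReal (J q + ε) := ENNReal.ofReal_le_ofReal h1
          _ = ENNReal.ofReal (J q) + ENNReal.ofReal ε := ENNReal.ofReal_add (hJ0 q) hε
          _ ≤ k q := le_self_add
      · intro S hSm hS
        have hLf : LipschitzOnWith (3 * K + 1) f S := by
          have h1 : LipschitzWith (K + (2 * K + 1)) (fun q => φ q + g y q) := hφ.add (hgL y hy)
          have h2 : K + (2 * K + 1) = 3 * K + 1 := by ring
          rw [h2] at h1
          intro a ha b hb
          rw [hfin y hy a (hS ha).1.2, hfin y hy b (hS hb).1.2]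
          exact h1 a b
        exact lipschitz_image_le_lintegral hLf hSm (fun q hq => hkK q (hS hq).2)
    · intro S hSm hS
      have hLf : LipschitzOnWith (3 * K + 1) f S := by
        have h1 : LipschitzWith (3 * K + 1) φ := hφ.weaken (by
          have : K ≤ 3 * K := le_mul_of_one_le_left (by positivity) (by norm_num)
          exact this.trans (by simp))
        intro a ha b hb
        rw [hfout a (hS ha).2, hfout b (hS hb).2]
        exact h1 a b
      refine lipschitz_image_le_lintegral hLf hSm (fun q hq => hkK q ?_)
      intro hc
      apply (hS hq).2
      simp only [hcore, mem_iUnion] at hc ⊢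
      obtain ⟨y, hy, hq2⟩ := hc
      exact ⟨y, hy, hq2.1⟩
  have hcomp := competitor hU hE hr hB hδ hK' hfid k hloc
  refine hcomp.trans (add_le_add_left ?_ _)
  -- estimate of the integral of `k`
  have hEb : MeasurableSet (E ∩ ball x r) := hEm.inter measurableSet_ball
  simp only [hk]
  rw [lintegral_add_right _ (measurable_const.indicator hcorem.compl), lintegral_add_right _ measurable_const,
    setLIntegral_const, lintegral_indicator_const hcorem.compl, Measure.restrict_apply hcorem.compl,
    add_assoc]
  gcongr
  -- the measure of the complement of the cores
  have hsub : coreᶜ ∩ (E ∩ ball x r) ⊆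
      (⋃ y ∈ T, E ∩ (closedBall y (ρ y) \ closedBall y ((1 - σ y) * ρ y))) ∪
        ((E ∩ ball x r) \ ⋃ y ∈ T, closedBall y (ρ y)) := by
    rintro q ⟨hq1, hq2⟩
    by_cases hq : q ∈ ⋃ y ∈ T, closedBall y (ρ y)
    · left
      simp only [mem_iUnion] at hq ⊢
      obtain ⟨y, hy, hqy⟩ := hq
      refine ⟨y, hy, hq2.1, hqy, fun hc => hq1 ?_⟩
      exact mem_biUnion hy ⟨hqy, hc⟩
    · exact Or.inr ⟨hq2, hq⟩
  refine (measure_mono hsub).trans ((measure_union_le _ _).trans ?_)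
  gcongr
  calc _ ≤ ∑ y ∈ T, μH[(d:ℝ)] (E ∩ (closedBall y (ρ y) \ closedBall y ((1 - σ y) * ρ y))) :=
        measure_biUnion_finset_le _ _
    _ ≤ ∑ y ∈ T, ENNReal.ofReal ε * μH[(d:ℝ)] (E ∩ closedBall y (ρ y)) :=
        Finset.sum_le_sum (fun y hy => hring y hy)
    _ = ENNReal.ofReal ε * μH[(d:ℝ)] (⋃ y ∈ T, E ∩ closedBall y (ρ y)) := by
        rw [← Finset.mul_sum, measure_biUnion_finset]
        · intro y hy z hz hyz
          exact (hdisj y hy z hz hyz).mono inter_subset_right inter_subset_right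
        · exact fun y _ => hEm.inter measurableSet_closedBall
    _ ≤ _ := by
        gcongr
        apply iUnion₂_subset
        intro y hy
        exact inter_subset_inter_right _ (hT y hy).2.1

/-! ### Flat points and good balls -/

/-- If almost every point of `E ∩ ball x r` is the centre of arbitrarily small good balls, a covering
theorem provides finitely many disjoint good balls that fill almost all of `E ∩ ball x r`, and the
error in `sharp_finite` tends to zero. -/
theorem sharp_of_goodBalls {n d : ℕ} {U E : Set (Euc n)} {h : ℝ → ℝ≥0∞} (hU : IsOpen U)
    (hE : IsAAlmostMinimal n d U E h) {x : Euc n} {r δ : ℝ} (hr : 0 < r)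
    (hB : closedBall x r ⊆ U) (hδ : 2 * r < δ) {φ : Euc n → Euc n} {K : ℝ≥0}
    (hφ : LipschitzWith K φ) (hid : ∀ q, q ∉ ball x r → φ q = q)
    {L : Euc n → Euc n →L[ℝ] Euc n} (hLK : ∀ y ∈ ball x r, ‖L y‖ ≤ K)
    {J : Euc n → ℝ} (hJ0 : ∀ y, 0 ≤ J y)
    (hJ : ∀ y ∈ ball x r, ∀ W : Submodule ℝ (Euc n), Module.finrank ℝ W = d →
      ∀ D : Set (Euc n), D ⊆ W → μH[(d:ℝ)] (L y '' D) ≤ ENNReal.ofReal (J y) * μH[(d:ℝ)] D)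
    (hgood : ∀ᵐ y ∂((μH[(d:ℝ)] : Measure (Euc n)).restrict (E ∩ ball x r)),
      ∀ ε : ℝ, 0 < ε → ∀ u : ℝ, 0 < u → ∃ ρ, ρ < u ∧ GoodBall d E φ L J x r ε y ρ) :
    μH[(d:ℝ)] (E ∩ ball x r) ≤ (∫⁻ q in E ∩ ball x r, ENNReal.ofReal (J q) ∂μH[(d:ℝ)]) +
      h δ * ENNReal.ofReal (δ ^ d) := by
  set ν := (μH[(d:ℝ)] : Measure (Euc n)).restrict (E ∩ ball x r) with hν
  have hEm := hE.measurableSet hU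
  have hEb : MeasurableSet (E ∩ ball x r) := hEm.inter measurableSet_ball
  have hfin : μH[(d:ℝ)] (E ∩ ball x r) < ⊤ :=
    (measure_mono (inter_subset_inter_right _ ball_subset_closedBall)).trans_lt (hE.2.2.1 x r hB)
  have : IsFiniteMeasure ν := ⟨by rw [hν, Measure.restrict_apply_univ]; exact hfin⟩
  set m := μH[(d:ℝ)] (E ∩ ball x r) with hm
  set C : ℝ≥0∞ := ((3 * K + 1 : ℝ≥0) : ℝ≥0∞) ^ d with hC
  have hCt : C ≠ ⊤ := ENNReal.pow_ne_top ENNReal.coe_ne_top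
  have hstep : ∀ ε : ℝ, 0 < ε → m ≤ (∫⁻ q in E ∩ ball x r, ENNReal.ofReal (J q) ∂μH[(d:ℝ)]) +
      ENNReal.ofReal ε * (m + C * (m + 1)) + h δ * ENNReal.ofReal (δ ^ d) := by
    intro ε hε
    set s : Set (Euc n) := {y | ∀ ε : ℝ, 0 < ε → ∀ u : ℝ, 0 < u →
      ∃ ρ, ρ < u ∧ GoodBall d E φ L J x r ε y ρ} with hs
    obtain ⟨t, ρ, htc, -, hρ, hnull, hdisj⟩ := Besicovitch.exists_disjoint_closedBall_covering_ae ν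
      (fun y => {ρ | GoodBall d E φ L J x r ε y ρ}) s (by
        intro y hy u hu
        obtain ⟨ρ, h1, h2⟩ := hy ε hε u hu
        exact ⟨ρ, h2, h2.1, h1⟩) (fun _ => 1) (fun _ _ => one_pos)
    have : Countable t := htc.to_subtype
    have hsum : ∑' y : t, ν (closedBall (y : Euc n) (ρ y)) ≠ ⊤ := by
      rw [← measure_iUnion]
      · exact measure_ne_top _ _
      · intro a b hab
        exact hdisj a.2 b.2 (fun hc => hab (Subtype.ext hc))
      · exact fun _ => measurableSet_closedBall
    have hlim := ENNReal.tendsto_tsum_compl_atTop_zero hsum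
    obtain ⟨T, hT⟩ := (hlim.eventually (gt_mem_nhds (ENNReal.ofReal_pos.2 hε))).exists
    set T' : Finset (Euc n) := T.map ⟨Subtype.val, Subtype.val_injective⟩ with hT'
    have hT't : ∀ y ∈ T', y ∈ t := by
      intro y hy
      simp only [hT', Finset.mem_map, Function.Embedding.coeFn_mk] at hy
      obtain ⟨z, -, rfl⟩ := hy
      exact z.2
    have key := sharp_finite hU hE hr hB hδ hφ hid hLK hJ0 hJ hε.le T' ρ
      (fun y hy => (hρ y (hT't y hy)).1)
      (fun y hy z hz hyz => hdisj (hT't y hy) (hT't z hz) hyz)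
    have hrest : μH[(d:ℝ)] ((E ∩ ball x r) \ ⋃ y ∈ T', closedBall y (ρ y)) ≤
        ENNReal.ofReal ε := by
      have e1 : μH[(d:ℝ)] ((E ∩ ball x r) \ ⋃ y ∈ T', closedBall y (ρ y)) =
          ν ((⋃ y ∈ T', closedBall y (ρ y))ᶜ) := by
        rw [hν, Measure.restrict_apply (Finset.measurableSet_biUnion _
          (fun y _ => measurableSet_closedBall)).compl, sdiff_eq, inter_comm]
      rw [e1]
      have hsub : (⋃ y ∈ T', closedBall y (ρ y))ᶜ ⊆ (sᶜ ∪ (s \ ⋃ y ∈ t, closedBall y (ρ y))) ∪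
          ⋃ y : {y : t // y ∉ T}, closedBall (y : Euc n) (ρ y) := by
        intro q hq
        by_cases h1 : q ∈ s
        · by_cases h2 : q ∈ ⋃ y ∈ t, closedBall y (ρ y)
          · right
            simp only [mem_iUnion] at h2 ⊢
            obtain ⟨y, hy, hqy⟩ := h2
            refine ⟨⟨⟨y, hy⟩, fun hc => hq ?_⟩, hqy⟩
            refine mem_biUnion (x := y) ?_ hqy
            simp only [hT', Finset.mem_coe, Finset.mem_map, Function.Embedding.coeFn_mk]
            exact ⟨⟨y, hy⟩, hc, rfl⟩
          · exact Or.inl (Or.inr ⟨h1, h2⟩)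
        · exact Or.inl (Or.inl h1)
      have hs0 : ν sᶜ = 0 := hgood
      calc ν ((⋃ y ∈ T', closedBall y (ρ y))ᶜ) ≤ _ := measure_mono hsub
        _ ≤ ν (sᶜ ∪ (s \ ⋃ y ∈ t, closedBall y (ρ y))) +
            ν (⋃ y : {y : t // y ∉ T}, closedBall (y : Euc n) (ρ y)) := measure_union_le _ _
        _ ≤ 0 + ∑' y : {y : t // y ∉ T}, ν (closedBall (y : Euc n) (ρ y)) := by
            gcongr
            · exact (measure_union_null hs0 hnull).le
            · exact measure_iUnion_le _
        _ ≤ ENNReal.ofReal ε := by rw [zero_add]; exact hT.le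
    refine key.trans ?_
    gcongr
    calc ENNReal.ofReal ε * m + C * (ENNReal.ofReal ε * m +
          μH[(d:ℝ)] ((E ∩ ball x r) \ ⋃ y ∈ T', closedBall y (ρ y)))
        ≤ ENNReal.ofReal ε * m + C * (ENNReal.ofReal ε * m + ENNReal.ofReal ε) := by gcongr
      _ = _ := by ring
  have hM : m + C * (m + 1) ≠ ⊤ := by
    refine ENNReal.add_ne_top.2 ⟨hfin.ne, ENNReal.mul_ne_top hCt ?_⟩
    exact ENNReal.add_ne_top.2 ⟨hfin.ne, ENNReal.one_ne_top⟩
  have hlim : Tendsto (fun ε : ℝ => (∫⁻ q in E ∩ ball x r, ENNReal.ofReal (J q) ∂μH[(d:ℝ)]) +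
      ENNReal.ofReal ε * (m + C * (m + 1)) + h δ * ENNReal.ofReal (δ ^ d)) (𝓝[>] 0)
      (𝓝 ((∫⁻ q in E ∩ ball x r, ENNReal.ofReal (J q) ∂μH[(d:ℝ)]) + 0 * (m + C * (m + 1)) +
        h δ * ENNReal.ofReal (δ ^ d))) := by
    apply Tendsto.add _ tendsto_const_nhds
    apply Tendsto.add tendsto_const_nhds
    apply ENNReal.Tendsto.mul_const _ (Or.inr hM)
    have : Tendsto ENNReal.ofReal (𝓝[>] 0) (𝓝 (ENNReal.ofReal 0)) :=
      (ENNReal.continuous_ofReal.tendsto 0).mono_left nhdsWithin_le_nhds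
    simpa using this
  have := ge_of_tendsto hlim (by filter_upwards [self_mem_nhdsWithin] with ε hε using hstep ε hε)
  simpa using this

/-- `E` is, at arbitrarily small scales, arbitrarily close to a `d`-plane through `y`, and has
finite positive lower and upper densities at `y`. -/
def FlatAt {n : ℕ} (d : ℕ) (E : Set (Euc n)) (y : Euc n) : Prop :=
  (∃ c C ρ₀ : ℝ, 0 < c ∧ 0 < C ∧ 0 < ρ₀ ∧ ∀ ρ, 0 < ρ → ρ < ρ₀ →
    ENNReal.ofReal (c * ρ ^ d) ≤ μH[(d:ℝ)] (E ∩ closedBall y ρ) ∧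
    μH[(d:ℝ)] (E ∩ closedBall y ρ) ≤ ENNReal.ofReal (C * ρ ^ d)) ∧
  ∃ W : Submodule ℝ (Euc n), Module.finrank ℝ W = d ∧ ∀ η : ℝ, 0 < η → ∀ u : ℝ, 0 < u →
    ∃ ρ, 0 < ρ ∧ ρ < u ∧ ∀ q ∈ E ∩ closedBall y ρ, ‖(q - y) - W.starProjection (q - y)‖ ≤ η * ρ

/-- By pigeonhole, a set with positive lower and finite upper density has little mass in one of `m`
successive boundary layers: otherwise its mass would decay by the factor `(1 - ε) ^ m` from the
radius `ρ` to a radius at least `ρ / 2`. -/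
theorem exists_thin_ring {n d : ℕ} {E : Set (Euc n)} (hEm : MeasurableSet E) {y : Euc n}
    {c C ρ ε : ℝ} (hc : 0 < c) (hC : 0 < C) (hρ : 0 < ρ) (hε : 0 < ε) (hε1 : ε < 1) {m : ℕ}
    (hm : 1 ≤ m) (hmC : (1 - ε) ^ m * C < c * (1 / 2) ^ d)
    (hd : ∀ ρ', 0 < ρ' → ρ' ≤ ρ →
      ENNReal.ofReal (c * ρ' ^ d) ≤ μH[(d:ℝ)] (E ∩ closedBall y ρ') ∧
      μH[(d:ℝ)] (E ∩ closedBall y ρ') ≤ ENNReal.ofReal (C * ρ' ^ d)) :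
    ∃ ρ', ρ / 2 ≤ ρ' ∧ ρ' ≤ ρ ∧
      μH[(d:ℝ)] (E ∩ (closedBall y ρ' \ closedBall y ((1 - 1 / (2 * m)) * ρ'))) ≤
        ENNReal.ofReal ε * μH[(d:ℝ)] (E ∩ closedBall y ρ') := by
  have hm0 : (1:ℝ) ≤ m := by exact_mod_cast hm
  set σ : ℝ := 1 / (2 * m) with hσ
  have hσ0 : 0 < σ := by positivity
  have hσ1 : σ ≤ 1 / 2 := by
    rw [hσ]; apply one_div_le_one_div_of_le <;> linarith
  have hhalf : ∀ j ≤ m, 1 / 2 ≤ (1 - σ) ^ j := by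
    intro j hj
    have h1 := one_add_mul_le_pow (a := -σ) (by linarith) j
    have h2 : (j:ℝ) * σ ≤ 1 / 2 := by
      have : (j:ℝ) ≤ m := by exact_mod_cast hj
      calc (j:ℝ) * σ ≤ m * σ := by gcongr
        _ = 1 / 2 := by rw [hσ]; field_simp
    rw [← sub_eq_add_neg] at h1
    linarith
  have hle1 : ∀ j, (1 - σ) ^ j ≤ 1 := fun j => pow_le_one₀ (by linarith) (by linarith)
  by_contra hcon
  push Not at hcon
  set a : ℕ → ℝ := fun j => (μH[(d:ℝ)] (E ∩ closedBall y ((1 - σ) ^ j * ρ))).toReal with ha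
  have hpos : ∀ j, 0 < (1 - σ) ^ j * ρ := fun j => mul_pos (pow_pos (by linarith) j) hρ
  have hleρ : ∀ j, (1 - σ) ^ j * ρ ≤ ρ := fun j => mul_le_of_le_one_left hρ.le (hle1 j)
  have hfin : ∀ j, μH[(d:ℝ)] (E ∩ closedBall y ((1 - σ) ^ j * ρ)) ≠ ⊤ := fun j =>
    ((hd _ (hpos j) (hleρ j)).2.trans_lt ENNReal.ofReal_lt_top).ne
  have hstep : ∀ j < m, a (j + 1) ≤ (1 - ε) * a j := by
    intro j hj
    have h1 := hcon ((1 - σ) ^ j * ρ) (by nlinarith [hhalf j hj.le]) (hleρ j)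
    have e1 : (1 - σ) * ((1 - σ) ^ j * ρ) = (1 - σ) ^ (j + 1) * ρ := by ring
    rw [e1] at h1
    have hsub : E ∩ closedBall y ((1 - σ) ^ (j + 1) * ρ) ⊆ E ∩ closedBall y ((1 - σ) ^ j * ρ) := by
      apply inter_subset_inter_right
      apply closedBall_subset_closedBall
      rw [← e1]
      nlinarith [hpos j]
    have e2 : E ∩ (closedBall y ((1 - σ) ^ j * ρ) \ closedBall y ((1 - σ) ^ (j + 1) * ρ)) =
        (E ∩ closedBall y ((1 - σ) ^ j * ρ)) \ (E ∩ closedBall y ((1 - σ) ^ (j + 1) * ρ)) := by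
      ext q; simp only [mem_inter_iff, Set.mem_sdiff]; tauto
    rw [e2, measure_sdiff hsub (hEm.inter measurableSet_closedBall).nullMeasurableSet
      (hfin (j + 1))] at h1
    have h2 := ENNReal.toReal_mono (ENNReal.sub_ne_top (hfin j)) h1.le
    rw [ENNReal.toReal_mul, ENNReal.toReal_ofReal hε.le,
      ENNReal.toReal_sub_of_le (measure_mono hsub) (hfin j)] at h2
    change ε * a j ≤ a j - a (j + 1) at h2
    linarith
  have hiter : ∀ j ≤ m, a j ≤ (1 - ε) ^ j * a 0 := by
    intro j
    induction j with
    | zero => intro _; simp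
    | succ j ih =>
      intro hj
      calc a (j + 1) ≤ (1 - ε) * a j := hstep j (by omega)
        _ ≤ (1 - ε) * ((1 - ε) ^ j * a 0) := by
            apply mul_le_mul_of_nonneg_left (ih (by omega)) (by linarith)
        _ = _ := by ring
  have h0 : a 0 ≤ C * ρ ^ d := by
    have := (hd ρ hρ le_rfl).2
    simp only [ha, pow_zero, one_mul]
    exact ENNReal.toReal_le_of_le_ofReal (by positivity) this
  have h1 : c * (1 / 2 * ρ) ^ d ≤ a m := by
    have := (hd _ (hpos m) (hleρ m)).1
    have h2 := (ENNReal.ofReal_le_iff_le_toReal (hfin m)).1 this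
    refine le_trans ?_ h2
    gcongr
    exact hhalf m le_rfl
  have h2 := hiter m le_rfl
  have h3 : (1 - ε) ^ m * a 0 ≤ (1 - ε) ^ m * (C * ρ ^ d) :=
    mul_le_mul_of_nonneg_left h0 (pow_nonneg (by linarith) m)
  have h4 : (1 - ε) ^ m * (C * ρ ^ d) < c * (1 / 2 * ρ) ^ d := by
    rw [mul_pow, ← mul_assoc, ← mul_assoc]
    exact mul_lt_mul_of_pos_right hmC (by positivity)
  linarith

/-- At a flat point where `φ` is differentiable, `φ` is close on `E` to its linearization composed
with the projection onto the approximating plane; hence the point is the centre of arbitrarily small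
good balls. -/
theorem goodBall_of_flatAt {n d : ℕ} {E : Set (Euc n)} (hEm : MeasurableSet E)
    {x : Euc n} {r : ℝ} {φ : Euc n → Euc n} {L : Euc n → Euc n →L[ℝ] Euc n} {J : Euc n → ℝ}
    {y : Euc n} (hy : y ∈ ball x r) (hL : HasFDerivAt φ (L y) y) (hJc : ContinuousAt J y)
    (hflat : FlatAt d E y) {ε : ℝ} (hε : 0 < ε) {u : ℝ} (hu : 0 < u) :
    ∃ ρ, ρ < u ∧ GoodBall d E φ L J x r ε y ρ := by
  obtain ⟨⟨c, C, ρ₀, hc, hC, hρ₀, hd⟩, W, hW, hfl⟩ := hflat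
  set ε' := min ε (1 / 2) with hε'
  have hε'0 : 0 < ε' := lt_min hε (by norm_num)
  have hε'1 : ε' < 1 := (min_le_right _ _).trans_lt (by norm_num)
  obtain ⟨m, hm1, hm⟩ : ∃ m : ℕ, 1 ≤ m ∧ (1 - ε') ^ m * C < c * (1 / 2) ^ d := by
    have h1 : Tendsto (fun m : ℕ => (1 - ε') ^ m * C) atTop (𝓝 (0 * C)) :=
      (tendsto_pow_atTop_nhds_zero_of_lt_one (by linarith) (by linarith)).mul_const C
    rw [zero_mul] at h1
    have h2 := (h1.eventually (gt_mem_nhds (show 0 < c * (1 / 2) ^ d by positivity)))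
    obtain ⟨m, hm1, hm2⟩ := (h2.and (eventually_ge_atTop 1)).exists
    exact ⟨m, hm2, hm1⟩
  have hm0 : (1:ℝ) ≤ m := by exact_mod_cast hm1
  set σ : ℝ := 1 / (2 * m) with hσ
  have hσ0 : 0 < σ := by positivity
  set η : ℝ := σ / (2 * (1 + ‖L y‖)) with hη
  have hη0 : 0 < η := by positivity
  have hdiff : ∀ᶠ q in 𝓝 y, ‖φ q - φ y - L y (q - y)‖ ≤ η * ‖q - y‖ :=
    (hasFDerivAt_iff_isLittleO.1 hL).def hη0
  have hJe : ∀ᶠ q in 𝓝 y, J y ≤ J q + ε := by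
    filter_upwards [hJc.eventually (lt_mem_nhds (show J y - ε < J y by linarith))] with q hq
    linarith
  have hbe : ∀ᶠ q in 𝓝 y, q ∈ ball x r := isOpen_ball.mem_nhds hy
  obtain ⟨u₁, hu₁, hball⟩ := Metric.eventually_nhds_iff.1 (hdiff.and (hJe.and hbe))
  obtain ⟨ρ, hρ, hρu, hflat⟩ := hfl η hη0 (min u (min u₁ ρ₀)) (lt_min hu (lt_min hu₁ hρ₀))
  have hρ1 : ρ < u := hρu.trans_le (min_le_left _ _)
  have hρ2 : ρ < u₁ := hρu.trans_le ((min_le_right _ _).trans (min_le_left _ _))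
  have hρ3 : ρ < ρ₀ := hρu.trans_le ((min_le_right _ _).trans (min_le_right _ _))
  obtain ⟨ρ', h1, h2, h3⟩ := exists_thin_ring hEm hc hC hρ hε'0 hε'1 hm1 hm
    (fun ρ' h1 h2 => hd ρ' h1 (h2.trans_lt hρ3))
  have hρ'0 : 0 < ρ' := by linarith
  refine ⟨ρ', h2.trans_lt hρ1, hρ'0, ?_, ?_, σ, hσ0, W, hW, ?_, ?_⟩
  · intro q hq
    exact (hball (lt_of_le_of_lt (mem_closedBall.1 hq) (by linarith))).2.2
  · intro q hq
    exact (hball (lt_of_le_of_lt (mem_closedBall.1 hq) (by linarith))).2.1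
  · rintro q ⟨hqE, hq⟩
    have hqd : dist q y ≤ ρ' := mem_closedBall.1 hq
    have a1 := (hball (lt_of_le_of_lt hqd (by linarith))).1
    have a2 := hflat q ⟨hqE, closedBall_subset_closedBall h2 hq⟩
    rw [← dist_eq_norm] at a1
    have e : φ y + L y (W.starProjection (q - y)) - φ q =
        -(φ q - φ y - L y (q - y)) - L y ((q - y) - W.starProjection (q - y)) := by
      rw [map_sub (L y) (q - y)]; abel
    rw [e]
    calc _ ≤ ‖φ q - φ y - L y (q - y)‖ + ‖L y‖ * ‖(q - y) - W.starProjection (q - y)‖ := by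
          refine (norm_sub_le _ _).trans ?_
          rw [norm_neg]
          gcongr
          exact (L y).le_opNorm _
      _ ≤ η * ρ + ‖L y‖ * (η * ρ) := by
          gcongr
          rw [← dist_eq_norm]
          refine a1.trans ?_
          rw [← dist_eq_norm]
          gcongr
          exact hqd.trans h2
      _ = (1 + ‖L y‖) * η * ρ := by ring
      _ ≤ (1 + ‖L y‖) * η * (2 * ρ') := by gcongr; linarith
      _ = σ * ρ' := by rw [hη]; field_simp
  · refine h3.trans ?_
    gcongr
    exact min_le_left _ _

/-! ### The radial contraction -/

/-- The linear map `v ↦ v + M ⟨e, v⟩ e`. -/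
def stretch {n : ℕ} (M : ℝ) (e : Euc n) : Euc n →L[ℝ] Euc n :=
  ContinuousLinearMap.id ℝ (Euc n) + M • (innerSL ℝ e).smulRight e

theorem stretch_apply {n : ℕ} (M : ℝ) (e v : Euc n) :
    stretch M e v = v + (M * ⟪e, v⟫_ℝ) • e := by
  simp [stretch, smul_smul]

theorem stretch_image_aux {n d : ℕ} {M : ℝ} (hM : 0 ≤ M) {e : Euc n} (he : ‖e‖ ≤ 1)
    {V : Type*} [NormedAddCommGroup V] [InnerProductSpace ℝ V] [FiniteDimensional ℝ V]
    [MeasurableSpace V] [BorelSpace V] (ι : V →ₗᵢ[ℝ] Euc n)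
    (hW : Module.finrank ℝ V = d) (D' : Set V) :
    μH[(d:ℝ)] (stretch M e '' (ι '' D')) ≤ ENNReal.ofReal (M + 1) * μH[(d:ℝ)] (ι '' D') := by
  set p : V := (InnerProductSpace.toDual ℝ V).symm ((innerSL ℝ e).comp ι.toContinuousLinearMap)
    with hp
  have hpe : ∀ w : V, ⟪e, ι w⟫_ℝ = ⟪p, w⟫_ℝ := by
    intro w
    rw [hp, InnerProductSpace.toDual_symm_apply]; simp
  have hp1 : ‖p‖ ≤ 1 := by
    by_contra! hc
    have h1 := real_inner_le_norm e (ι p)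
    rw [hpe, real_inner_self_eq_norm_sq, ι.norm_map] at h1
    nlinarith [norm_nonneg p]
  have hDD : μH[(d:ℝ)] (ι '' D') = μH[(d:ℝ)] D' :=
    ι.isometry.hausdorffMeasure_image (Or.inl (by positivity)) D'
  obtain ⟨u, hu1, hup⟩ : ∃ u : V, ‖u‖ ≤ 1 ∧ ∀ w : V, ⟪p, w⟫_ℝ ^ 2 ≤ ⟪u, w⟫_ℝ ^ 2 ∧ ‖u‖^2 * ⟪u, w⟫_ℝ ^ 2 = ⟪u, w⟫_ℝ ^ 2 := by
    by_cases h0 : p = 0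
    · exact ⟨0, by simp, by simp [h0]⟩
    · have h1 : 0 < ‖p‖ := norm_pos_iff.2 h0
      have hun : ‖(‖p‖⁻¹ • p)‖ = 1 := by
        rw [norm_smul, norm_inv, norm_norm, inv_mul_cancel₀ h1.ne']
      refine ⟨‖p‖⁻¹ • p, hun.le, fun w => ⟨?_, by rw [hun]; ring⟩⟩
      rw [real_inner_smul_left, mul_pow]
      have : 1 ≤ ‖p‖⁻¹ ^ 2 := one_le_pow₀ ((one_le_inv₀ h1).2 hp1)
      nlinarith [sq_nonneg ⟪p, w⟫_ℝ]
  set f : Module.Dual ℝ V := M • (innerSL ℝ u).toLinearMap with hf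
  set G : V →ₗ[ℝ] V := LinearMap.transvection f u with hG
  have hGa : ∀ w, G w = w + (M * ⟪u, w⟫_ℝ) • u := by
    intro w; simp [hG, LinearMap.transvection.apply, hf]
  have hGn : ∀ w : V, ‖stretch M e (ι w)‖ ≤ ‖G w‖ := by
    intro w
    rw [hGa, stretch_apply, hpe]
    obtain ⟨a1, a2⟩ := hup w
    have b1 : ‖ι w + (M * ⟪p, w⟫_ℝ) • e‖ ^ 2 =
        ‖w‖ ^ 2 + 2 * M * ⟪p, w⟫_ℝ ^ 2 + M ^ 2 * ⟪p, w⟫_ℝ ^ 2 * ‖e‖ ^ 2 := by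
      rw [norm_add_sq_real, inner_smul_right, real_inner_comm e (ι w), hpe, norm_smul, mul_pow,
        Real.norm_eq_abs, sq_abs, ι.norm_map]; ring
    have b2 : ‖w + (M * ⟪u, w⟫_ℝ) • u‖ ^ 2 =
        ‖w‖ ^ 2 + 2 * M * ⟪u, w⟫_ℝ ^ 2 + M ^ 2 * (‖u‖ ^ 2 * ⟪u, w⟫_ℝ ^ 2) := by
      rw [norm_add_sq_real, inner_smul_right, real_inner_comm u w, norm_smul, mul_pow,
        Real.norm_eq_abs, sq_abs]; ring
    rw [a2] at b2
    apply le_of_sq_le_sq _ (norm_nonneg _)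
    rw [b1, b2]
    have c1 : ‖e‖ ^ 2 ≤ 1 := pow_le_one₀ (norm_nonneg _) he
    have c2 : ⟪p, w⟫_ℝ ^ 2 * ‖e‖ ^ 2 ≤ ⟪u, w⟫_ℝ ^ 2 := by
      nlinarith [sq_nonneg ⟪p, w⟫_ℝ, sq_nonneg ‖e‖]
    nlinarith [sq_nonneg M]
  have hdet : |LinearMap.det G| ≤ M + 1 := by
    rw [hG, LinearMap.transvection.det]
    have : f u = M * ‖u‖ ^ 2 := by simp [hf]
    rw [this, abs_of_nonneg (by positivity)]
    have c1 : ‖u‖ ^ 2 ≤ 1 := pow_le_one₀ (norm_nonneg _) hu1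
    nlinarith
  have hGinj : Function.Injective G := by
    rw [← LinearMap.ker_eq_bot, LinearMap.ker_eq_bot']
    intro w hw
    rw [hGa] at hw
    have h1 : ⟪w, w + (M * ⟪u, w⟫_ℝ) • u⟫_ℝ = 0 := by rw [hw, inner_zero_right]
    rw [inner_add_right, real_inner_self_eq_norm_sq, inner_smul_right, real_inner_comm w u] at h1
    have : ‖w‖ ^ 2 ≤ 0 := by nlinarith [mul_nonneg hM (sq_nonneg ⟪w, u⟫_ℝ), mul_nonneg hM (sq_nonneg ⟪u, w⟫_ℝ)]
    exact norm_eq_zero.1 (by nlinarith [norm_nonneg w])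
  have himg : stretch M e '' (ι '' D') =
      (fun z => stretch M e (ι (Function.invFun G z))) '' (G '' D') := by
    rw [image_image, image_image]
    apply image_congr
    intro w _
    rw [Function.leftInverse_invFun hGinj w]
  have hlip : LipschitzOnWith 1 (fun z => stretch M e (ι (Function.invFun G z)))
      (G '' D') := by
    apply LipschitzOnWith.of_dist_le_mul
    rintro _ ⟨a, -, rfl⟩ _ ⟨b, -, rfl⟩
    simp only [Function.leftInverse_invFun hGinj _, NNReal.coe_one, one_mul]
    rw [dist_eq_norm, dist_eq_norm, ← map_sub, ← map_sub, ← map_sub]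
    exact hGn (a - b)
  rw [himg, hDD]
  refine (hlip.hausdorffMeasure_image_le (by positivity)).trans ?_
  simp only [ENNReal.coe_one, ENNReal.one_rpow, one_mul]
  have hHaar : (μH[(d:ℝ)] : Measure V).IsAddHaarMeasure := by
    rw [← hW]; infer_instance
  rw [Measure.addHaar_image_linearMap]
  gcongr

/-- On a `d`-plane the Jacobian of `v ↦ v + M ⟨e, v⟩ e` is at most `M + 1`: at most one direction of the
plane is stretched, and by at most this factor. -/
theorem stretch_image_le {n d : ℕ} {M : ℝ} (hM : 0 ≤ M) {e : Euc n} (he : ‖e‖ ≤ 1)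
    {W : Submodule ℝ (Euc n)} (hW : Module.finrank ℝ W = d) {D : Set (Euc n)} (hD : D ⊆ W) :
    μH[(d:ℝ)] (stretch M e '' D) ≤ ENNReal.ofReal (M + 1) * μH[(d:ℝ)] D := by
  have hD' : D = W.subtypeₗᵢ '' (W.subtypeₗᵢ ⁻¹' D) := by
    rw [image_preimage_eq_inter_range]
    refine (inter_eq_left.2 fun q hq => mem_range.2 ⟨⟨q, hD hq⟩, rfl⟩).symm
  rw [hD']
  exact stretch_image_aux hM he W.subtypeₗᵢ hW _

/-- The radial contraction: inside `ball x r` the distance to `x` is multiplied by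
`(|q-x|/r)^M`, and the map is the identity elsewhere. -/
def radialMap {n : ℕ} (x : Euc n) (r : ℝ) (M : ℕ) (q : Euc n) : Euc n :=
  x + (min 1 (‖q - x‖ / r)) ^ M • (q - x)

theorem radialMap_lipschitz {n : ℕ} (x : Euc n) {r : ℝ} (hr : 0 < r) (M : ℕ) :
    LipschitzWith (M + 1) (radialMap x r M) := by
  have key : ∀ p q : Euc n, ‖q - x‖ ≤ ‖p - x‖ →
      dist (radialMap x r M p) (radialMap x r M q) ≤ (M + 1) * dist p q := by
    intro p q hpq
    have e : radialMap x r M p - radialMap x r M q =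
        (min 1 (‖p - x‖ / r)) ^ M • (p - q) +
        ((min 1 (‖p - x‖ / r)) ^ M - (min 1 (‖q - x‖ / r)) ^ M) • (q - x) := by
      simp only [radialMap]; module
    set a := min 1 (‖p - x‖ / r) with ha
    set b := min 1 (‖q - x‖ / r) with hb
    have ha0 : 0 ≤ a := le_min zero_le_one (by positivity)
    have hb0 : 0 ≤ b := le_min zero_le_one (by positivity)
    have ha1 : a ≤ 1 := min_le_left _ _
    have hb1 : b ≤ 1 := min_le_left _ _
    have hab : b ≤ a := by rw [ha, hb]; gcongr
    rw [dist_eq_norm, e]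
    refine (norm_add_le _ _).trans ?_
    rw [norm_smul, norm_smul, Real.norm_eq_abs, Real.norm_eq_abs, abs_of_nonneg (by positivity),
      dist_eq_norm]
    have h1 : a ^ M ≤ 1 := pow_le_one₀ ha0 ha1
    have h2 : |a ^ M - b ^ M| ≤ (a - b) * M := by
      refine (abs_pow_sub_pow_le ..).trans ?_
      rw [abs_of_nonneg (sub_nonneg.2 hab)]
      have : max |a| |b| ^ (M - 1) ≤ 1 := by
        apply pow_le_one₀ (le_max_of_le_left (abs_nonneg _))
        rw [abs_of_nonneg ha0, abs_of_nonneg hb0]; exact max_le ha1 hb1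
      exact mul_le_of_le_one_right (mul_nonneg (sub_nonneg.2 hab) (Nat.cast_nonneg _)) this
    have h3 : (a - b) * ‖q - x‖ ≤ ‖p - q‖ := by
      have h4 : ‖p - x‖ - ‖q - x‖ ≤ ‖p - q‖ := by
        have := norm_sub_norm_le (p - x) (q - x); simpa using this
      by_cases h5 : ‖q - x‖ ≤ r
      · have h6 : b = ‖q - x‖ / r := by rw [hb]; exact min_eq_right ((div_le_one hr).2 h5)
        have h7 : a ≤ ‖p - x‖ / r := min_le_right _ _
        have h8 : (a - b) * r ≤ ‖p - x‖ - ‖q - x‖ := by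
          rw [h6]
          have := (le_div_iff₀ hr).1 h7
          have e3 : ‖q - x‖ / r * r = ‖q - x‖ := div_mul_cancel₀ _ hr.ne'
          nlinarith
        have : (a - b) * ‖q - x‖ ≤ (a - b) * r :=
          mul_le_mul_of_nonneg_left h5 (sub_nonneg.2 hab)
        linarith
      · have h6 : b = 1 := by
          rw [hb]; exact min_eq_left ((one_le_div hr).2 (not_le.1 h5).le)
        have : (a - b) * ‖q - x‖ ≤ 0 :=
          mul_nonpos_of_nonpos_of_nonneg (by linarith) (norm_nonneg _)
        linarith [norm_nonneg (p - q)]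
    have h9 : |a ^ M - b ^ M| * ‖q - x‖ ≤ M * ‖p - q‖ := by
      calc |a ^ M - b ^ M| * ‖q - x‖ ≤ ((a - b) * M) * ‖q - x‖ := by gcongr
        _ = M * ((a - b) * ‖q - x‖) := by ring
        _ ≤ _ := by gcongr
    have h10 : a ^ M * ‖p - q‖ ≤ ‖p - q‖ := mul_le_of_le_one_left (norm_nonneg _) h1
    linarith
  apply LipschitzWith.of_dist_le_mul
  intro p q
  push_cast
  rcases le_total ‖q - x‖ ‖p - x‖ with h | h
  · exact key p q h
  · rw [dist_comm, dist_comm p q]; exact key q p h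

theorem radialMap_outside {n : ℕ} {x : Euc n} {r : ℝ} (hr : 0 < r) (M : ℕ) {q : Euc n}
    (hq : q ∉ ball x r) : radialMap x r M q = q := by
  rw [mem_ball, dist_eq_norm, not_lt] at hq
  rw [radialMap, min_eq_left ((one_le_div hr).2 hq)]
  simp

/-- The derivative of `radialMap` at points of the open ball. -/
def radialDeriv {n : ℕ} (x : Euc n) (r : ℝ) (M : ℕ) (y : Euc n) : Euc n →L[ℝ] Euc n :=
  (‖y - x‖ / r) ^ M • stretch M (‖y - x‖⁻¹ • (y - x))

theorem radialMap_hasFDerivAt {n : ℕ} {x : Euc n} {r : ℝ} (hr : 0 < r) {M : ℕ} (hM : 1 ≤ M)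
    {y : Euc n} (hy : y ∈ ball x r) :
    HasFDerivAt (radialMap x r M) (radialDeriv x r M y) y := by
  have hev : radialMap x r M =ᶠ[𝓝 y] fun q => x + (‖q - x‖ / r) ^ M • (q - x) := by
    filter_upwards [isOpen_ball.mem_nhds hy] with q hq
    rw [mem_ball, dist_eq_norm] at hq
    rw [radialMap, min_eq_right ((div_le_one hr).2 hq.le)]
  refine HasFDerivAt.congr_of_eventuallyEq ?_ hev
  apply HasFDerivAt.const_add
  have hid : HasFDerivAt (fun q : Euc n => q - x) (ContinuousLinearMap.id ℝ (Euc n)) y :=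
    (hasFDerivAt_id y).sub_const x
  by_cases h0 : y = x
  · have hL0 : radialDeriv x r M y = 0 := by
      rw [radialDeriv, h0, sub_self, norm_zero, zero_div, zero_pow (by omega)]
      exact zero_smul ℝ (stretch (M:ℝ) ((0:ℝ)⁻¹ • (0 : Euc n)))
    rw [hL0, hasFDerivAt_iff_isLittleO_nhds_zero]
    subst h0
    simp only [add_sub_cancel_left, sub_self, smul_zero, sub_zero, zero_apply]
    have h1 : Tendsto (fun v : Euc n => (‖v‖ / r) ^ M) (𝓝 0) (𝓝 0) := by
      have : ContinuousAt (fun v : Euc n => (‖v‖ / r) ^ M) 0 := by fun_prop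
      have h2 := this.tendsto
      simpa [(show M ≠ 0 by omega)] using h2
    have h3 := ((Asymptotics.isLittleO_one_iff ℝ).2 h1).smul_isBigO
      (Asymptotics.isBigO_refl (fun v : Euc n => v) (𝓝 0))
    simpa using h3
  · have hv : y - x ≠ 0 := sub_ne_zero.2 h0
    have ht : 0 < ‖y - x‖ := norm_pos_iff.2 hv
    have hnorm : HasFDerivAt (fun q : Euc n => ‖q - x‖)
        (‖y - x‖⁻¹ • innerSL ℝ (y - x)) y := by
      have h1 := hid.norm_sq
      have h2 := h1.sqrt (by positivity)
      have h3 : (fun q : Euc n => √(‖q - x‖ ^ 2)) = fun q => ‖q - x‖ := by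
        ext q; exact Real.sqrt_sq (norm_nonneg _)
      rw [h3, Real.sqrt_sq ht.le] at h2
      refine h2.congr_fderiv ?_
      refine ContinuousLinearMap.ext fun w => ?_
      change (1 / (2 * ‖y - x‖)) • ((2:ℕ) • ⟪y - x, w⟫_ℝ) = ‖y - x‖⁻¹ • ⟪y - x, w⟫_ℝ
      simp only [smul_eq_mul, nsmul_eq_mul]
      push_cast
      field_simp
    have h1 := ((hnorm.mul_const r⁻¹).pow M).smul hid
    simp only [← div_eq_mul_inv] at h1
    refine h1.congr_fderiv ?_
    ext1 w
    obtain ⟨k, rfl⟩ : ∃ k, M = k + 1 := ⟨M - 1, by omega⟩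
    simp only [radialDeriv, stretch_apply, add_apply,
      smul_apply, ContinuousLinearMap.smulRight_apply,
      ContinuousLinearMap.id_apply, innerSL_apply_apply, smul_add, smul_smul,
      real_inner_smul_left, smul_eq_mul, nsmul_eq_mul]
    congr 2
    simp only [Nat.add_sub_cancel]
    push_cast
    rw [pow_succ]
    field_simp

theorem radialDeriv_norm_le {n : ℕ} {x : Euc n} {r : ℝ} (hr : 0 < r) {M : ℕ}
    {y : Euc n} (hy : y ∈ ball x r) : ‖radialDeriv x r M y‖ ≤ ((M + 1 : ℝ≥0) : ℝ) := by
  rw [mem_ball, dist_eq_norm] at hy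
  have he : ‖(‖y - x‖⁻¹ • (y - x))‖ ≤ 1 := by
    rw [norm_smul, norm_inv, norm_norm]; exact inv_mul_le_one
  have hb : (‖y - x‖ / r) ^ M ≤ 1 := pow_le_one₀ (by positivity) ((div_le_one hr).2 hy.le)
  apply ContinuousLinearMap.opNorm_le_bound _ (by positivity)
  intro w
  rw [radialDeriv, smul_apply, norm_smul, Real.norm_eq_abs,
    abs_of_nonneg (by positivity)]
  refine (mul_le_of_le_one_left (norm_nonneg _) hb).trans ?_
  rw [stretch_apply]
  refine (norm_add_le _ _).trans ?_
  set e := ‖y - x‖⁻¹ • (y - x)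
  have h1 : |⟪e, w⟫_ℝ| ≤ ‖w‖ := (abs_real_inner_le_norm _ _).trans
    (mul_le_of_le_one_left (norm_nonneg _) he)
  rw [norm_smul, Real.norm_eq_abs, abs_mul, abs_of_nonneg (Nat.cast_nonneg M)]
  push_cast
  have h2 : M * |⟪e, w⟫_ℝ| * ‖e‖ ≤ M * ‖w‖ * 1 := by gcongr
  linarith

theorem radialDeriv_image_le {n d : ℕ} {x : Euc n} {r : ℝ} (hr : 0 < r) {M : ℕ}
    {y : Euc n} {W : Submodule ℝ (Euc n)} (hW : Module.finrank ℝ W = d)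
    {D : Set (Euc n)} (hD : D ⊆ W) :
    μH[(d:ℝ)] (radialDeriv x r M y '' D) ≤
      ENNReal.ofReal ((M + 1) * (dist y x / r) ^ (M * d)) * μH[(d:ℝ)] D := by
  have he : ‖(‖y - x‖⁻¹ • (y - x))‖ ≤ 1 := by
    rw [norm_smul, norm_inv, norm_norm]; exact inv_mul_le_one
  set b : ℝ := (‖y - x‖ / r) ^ M with hb
  have hb0 : 0 ≤ b := by positivity
  have h1 : radialDeriv x r M y '' D =
      (fun z : Euc n => b • z) '' (stretch M (‖y - x‖⁻¹ • (y - x)) '' D) := by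
    rw [image_image]; rfl
  have h2 : LipschitzWith b.toNNReal (fun z : Euc n => b • z) := by
    apply LipschitzWith.of_dist_le_mul
    intro z w
    rw [dist_smul₀, Real.norm_eq_abs, abs_of_nonneg hb0, Real.coe_toNNReal _ hb0]
  rw [h1]
  refine (h2.hausdorffMeasure_image_le (by positivity) _).trans ?_
  refine (mul_le_mul_right (stretch_image_le (Nat.cast_nonneg M) he hW hD) _).trans ?_
  rw [← mul_assoc]
  gcongr
  rw [ENNReal.rpow_natCast, show ((b.toNNReal : ℝ≥0) : ℝ≥0∞) = ENNReal.ofReal b from rfl,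
    ← ENNReal.ofReal_pow hb0, ← ENNReal.ofReal_mul (by positivity)]
  apply ENNReal.ofReal_le_ofReal
  rw [hb, dist_eq_norm, ← pow_mul]
  linarith

/-- The comparison of `E` with its image by the radial contraction, at any radius for which
almost every point of `E` is a flat point. -/
theorem sharp_of_flat {n d : ℕ} {U E : Set (Euc n)} {h : ℝ → ℝ≥0∞} (hU : IsOpen U)
    (hE : IsAAlmostMinimal n d U E h) {x : Euc n} {r δ : ℝ} (hr : 0 < r)
    (hB : closedBall x r ⊆ U) (hδ : 2 * r < δ)
    (hflat : ∀ᵐ y ∂((μH[(d:ℝ)] : Measure (Euc n)).restrict (E ∩ ball x r)), FlatAt d E y)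
    {N : ℕ} (hN : 2 ≤ N) :
    μH[(d:ℝ)] (E ∩ ball x r) ≤
      (∫⁻ q in E ∩ ball x r, ENNReal.ofReal (N * (dist q x / r) ^ ((N - 1) * d)) ∂μH[(d:ℝ)]) +
      h δ * ENNReal.ofReal (δ ^ d) := by
  obtain ⟨M, rfl⟩ : ∃ M, N = M + 1 := ⟨N - 1, by omega⟩
  have hEm := hE.measurableSet hU
  refine sharp_of_goodBalls hU hE hr hB hδ (radialMap_lipschitz x hr M)
    (fun q hq => radialMap_outside hr M hq) (L := radialDeriv x r M)
    (J := fun q => ((M + 1 : ℕ) : ℝ) * (dist q x / r) ^ ((M + 1 - 1) * d))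
    (fun y hy => radialDeriv_norm_le hr hy) (fun y => by positivity) ?_ ?_
  · intro y _ W hW D hD
    have := radialDeriv_image_le (x := x) (r := r) hr (M := M) (y := y) hW hD
    simpa using this
  · filter_upwards [hflat, ae_restrict_mem (hEm.inter measurableSet_ball)] with y hy1 hy2 ε hε u hu
    refine goodBall_of_flatAt hEm hy2.2 (radialMap_hasFDerivAt hr (by omega) hy2.2) ?_ hy1 hε hu
    fun_prop

/-! ### Upper densities -/

/-- An upper bound for the Hausdorff measure from arbitrarily fine countable covers. -/
theorem hausdorffMeasure_le_of_covers {X : Type*} [MetricSpace X] [MeasurableSpace X]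
    [BorelSpace X] {d : ℕ} {s : Set X} {A : ℝ≥0∞}
    (h : ∀ ε : ℝ≥0, 0 < ε → ∃ (I : Set X) (_ : I.Countable) (t : I → Set X), s ⊆ ⋃ i, t i ∧
      (∀ i, ediam (t i) ≤ ε) ∧ ∑' i, ediam (t i) ^ d ≤ A) : μH[(d:ℝ)] s ≤ A := by
  have hpos : ∀ k : ℕ, (0:ℝ≥0) < 1 / ((k:ℝ≥0) + 1) := fun k => by positivity
  choose I hI t hst ht hsum using fun k : ℕ => h (1 / ((k:ℝ≥0) + 1)) (hpos k)
  have hc : ∀ k, Countable (I k) := fun k => (hI k).to_subtype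
  have hlim : Tendsto (fun k : ℕ => ((1 / ((k:ℝ≥0) + 1) : ℝ≥0) : ℝ≥0∞)) atTop (𝓝 0) := by
    rw [← ENNReal.coe_zero, ENNReal.tendsto_coe]
    exact tendsto_one_div_add_atTop_nhds_zero_nat (𝕜 := ℝ≥0)
  refine (Measure.hausdorffMeasure_le_liminf_tsum (d:ℝ) s _ hlim t
    (Eventually.of_forall ht) (Eventually.of_forall hst)).trans ?_
  simp only [ENNReal.rpow_natCast]
  refine (liminf_le_liminf (Eventually.of_forall hsum)).trans ?_
  simp

/-- The upper `d`-density of a finite measure is finite `μH[d]`-almost everywhere. -/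
theorem upper_density_finite {n : ℕ} (ν : Measure (Euc n)) [IsFiniteMeasure ν] (d : ℕ) :
    μH[(d:ℝ)] {y | ¬ ∃ C ρ₀ : ℝ, 0 < C ∧ 0 < ρ₀ ∧ ∀ ρ, 0 < ρ → ρ < ρ₀ →
      ν (closedBall y ρ) ≤ ENNReal.ofReal (C * ρ ^ d)} = 0 := by
  set Z := {y | ¬ ∃ C ρ₀ : ℝ, 0 < C ∧ 0 < ρ₀ ∧ ∀ ρ, 0 < ρ → ρ < ρ₀ →
      ν (closedBall y ρ) ≤ ENNReal.ofReal (C * ρ ^ d)} with hZ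
  have key : ∀ C : ℝ, 0 < C → μH[(d:ℝ)] Z ≤ ENNReal.ofReal (10 ^ d / C) * ν univ := by
    intro C hC
    apply hausdorffMeasure_le_of_covers
    intro ε hε
    have h1 : ∀ y ∈ Z, ∃ ρ : ℝ, 0 < ρ ∧ ρ < ε / 10 ∧
        ENNReal.ofReal (C * ρ ^ d) < ν (closedBall y ρ) := by
      intro y hy
      by_contra! hc
      exact hy ⟨C, ε / 10, hC, by positivity, fun ρ a b => hc ρ a b⟩
    choose! ρ hρ0 hρε hρν using h1
    obtain ⟨u, huZ, hdisj, hcov⟩ := Vitali.exists_disjoint_subfamily_covering_enlargement_closedBall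
      Z id ρ (ε / 10) (fun y hy => (hρε y hy).le) 5 (by norm_num)
    simp only [id] at hdisj hcov
    have huc : u.Countable := by
      refine hdisj.countable_of_nonempty_interior fun y hy => ?_
      exact ⟨y, ball_subset_interior_closedBall (mem_ball_self (hρ0 y (huZ hy)))⟩
    refine ⟨u, huc, fun y => closedBall (y : Euc n) (5 * ρ y), ?_, ?_, ?_⟩
    · intro y hy
      obtain ⟨b, hb, hyb⟩ := hcov y hy
      exact mem_iUnion.2 ⟨⟨b, hb⟩, hyb (mem_closedBall_self (hρ0 y hy).le)⟩
    · intro y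
      refine (ediam_le_of_forall_dist_le (C := ε) fun a ha b hb => ?_).trans (by simp)
      have := dist_triangle_right a b (y : Euc n)
      rw [mem_closedBall] at ha hb
      have := hρε y (huZ y.2)
      linarith
    · have hterm : ∀ y : u, ediam (closedBall (y : Euc n) (5 * ρ y)) ^ d ≤
          ENNReal.ofReal (10 ^ d / C) * ν (closedBall (y : Euc n) (ρ y)) := by
        intro y
        have h2 : ediam (closedBall (y : Euc n) (5 * ρ y)) ≤ ENNReal.ofReal (10 * ρ y) := by
          refine ediam_le_of_forall_dist_le fun a ha b hb => ?_
          have := dist_triangle_right a b (y : Euc n)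
          rw [mem_closedBall] at ha hb
          linarith
        have h0 := hρ0 y (huZ y.2)
        calc ediam (closedBall (y : Euc n) (5 * ρ y)) ^ d ≤ ENNReal.ofReal (10 * ρ y) ^ d := by
              gcongr
          _ = ENNReal.ofReal (10 ^ d / C) * ENNReal.ofReal (C * ρ y ^ d) := by
              rw [← ENNReal.ofReal_pow (by positivity), ← ENNReal.ofReal_mul (by positivity)]
              congr 1; field_simp; rw [mul_pow]
          _ ≤ _ := by
              gcongr
              exact (hρν y (huZ y.2)).le
      refine (ENNReal.tsum_le_tsum hterm).trans ?_
      rw [ENNReal.tsum_mul_left]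
      gcongr
      have hcu : Countable u := huc.to_subtype
      rw [← measure_iUnion (fun (a b : u) hab => hdisj a.2 b.2 (fun hc => hab (Subtype.ext hc)))
        (fun _ => measurableSet_closedBall)]
      exact measure_mono (subset_univ _)
  refine le_antisymm ?_ bot_le
  have hlim : Tendsto (fun k : ℕ => ENNReal.ofReal (10 ^ d / ((k:ℝ) + 1)) * ν univ) atTop
      (𝓝 (ENNReal.ofReal 0 * ν univ)) := by
    apply ENNReal.Tendsto.mul_const _ (Or.inr (measure_ne_top _ _))
    apply ENNReal.tendsto_ofReal
    have := (tendsto_one_div_add_atTop_nhds_zero_nat (𝕜 := ℝ)).const_mul ((10:ℝ) ^ d)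
    simpa [div_eq_mul_inv] using this
  simp only [ENNReal.ofReal_zero, zero_mul] at hlim
  exact ge_of_tendsto' hlim (fun k => key _ (by positivity))

/-! ### Flatness from invariant directions -/

/-- Under infinitesimal translations in the direction `w`, the measure `μH[d]` on `E` is
asymptotically invariant near `y`. -/
def DirAt {n : ℕ} (d : ℕ) (E : Set (Euc n)) (y w : Euc n) : Prop :=
  ∀ ε : ℝ, 0 < ε → ∃ ρ₀ : ℝ, 0 < ρ₀ ∧ ∀ ρ, 0 < ρ → ρ < ρ₀ → ∀ u : Euc n → ℝ, ContDiff ℝ 1 u →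
    tsupport u ⊆ ball y ρ → ∀ L : ℝ, 0 ≤ L → (∀ q, ‖fderiv ℝ u q‖ ≤ L) →
      |∫ q in E ∩ ball y ρ, fderiv ℝ u q w ∂μH[(d:ℝ)]| ≤ ε * L * ρ ^ d

theorem exists_bump (n : ℕ) : ∃ (b : Euc n → ℝ) (L : ℝ), 0 < L ∧ ContDiff ℝ 1 b ∧
    (∀ q, ‖fderiv ℝ b q‖ ≤ L) ∧ (∀ q, 0 ≤ b q) ∧ (∀ q, b q ≤ 1) ∧
    (∀ q ∈ closedBall (0 : Euc n) (1 / 2), b q = 1) ∧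
    tsupport b = closedBall 0 (3 / 4) := by
  let b : ContDiffBump (0 : Euc n) := ⟨1 / 2, 3 / 4, by norm_num, by norm_num⟩
  have hc : ContDiff ℝ 1 (b : Euc n → ℝ) := b.contDiff
  obtain ⟨L, hL⟩ := (hc.continuous_fderiv one_ne_zero).bounded_above_of_compact_support
    (b.hasCompactSupport.fderiv ℝ)
  refine ⟨b, max L 1, by positivity, hc, fun q => (hL q).trans (le_max_left _ _),
    fun q => b.nonneg, fun q => b.le_one, fun q hq => b.one_of_mem_closedBall hq, b.tsupport_eq⟩

/-- If `ν` is almost invariant under the translations by `t • w`, then a ball and its translate by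
`w` have almost comparable masses. -/
theorem translate_mass {n : ℕ} {b : Euc n → ℝ} {L : ℝ} (hb : ContDiff ℝ 1 b)
    (hbL : ∀ q, ‖fderiv ℝ b q‖ ≤ L) (hb0 : ∀ q, 0 ≤ b q) (hb1 : ∀ q, b q ≤ 1)
    (hbin : ∀ q ∈ closedBall (0 : Euc n) (1 / 2), b q = 1)
    (hbs : tsupport b = closedBall 0 (3 / 4))
    (ν : Measure (Euc n)) [IsFiniteMeasure ν] (z w : Euc n) {σ B : ℝ} (hσ : 0 < σ)
    (hB : ∀ t ∈ Icc (0:ℝ) 1, ∀ u : Euc n → ℝ, ContDiff ℝ 1 u →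
      tsupport u ⊆ ball (z + t • w) σ → (∀ q, ‖fderiv ℝ u q‖ ≤ L / σ) →
      |∫ q, fderiv ℝ u q w ∂ν| ≤ B) :
    ν.real (closedBall z (σ / 2)) - B ≤ ν.real (ball (z + w) σ) := by
  have hL0 : 0 ≤ L := (norm_nonneg _).trans (hbL 0)
  set ζ : ℝ → Euc n → ℝ := fun t q => b (σ⁻¹ • (q - (z + t • w))) with hζ
  have hbd : Differentiable ℝ b := hb.differentiable one_ne_zero
  have hζc : ∀ t, ContDiff ℝ 1 (ζ t) := fun t => by
    simp only [hζ]; fun_prop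
  have hfd : ∀ t q, HasFDerivAt (ζ t) (σ⁻¹ • fderiv ℝ b (σ⁻¹ • (q - (z + t • w)))) q := by
    intro t q
    have h1 : HasFDerivAt (fun q : Euc n => σ⁻¹ • (q - (z + t • w)))
        (σ⁻¹ • ContinuousLinearMap.id ℝ (Euc n)) q :=
      ((hasFDerivAt_id q).sub_const _).const_smul σ⁻¹
    have h2 := (hbd (σ⁻¹ • (q - (z + t • w)))).hasFDerivAt.comp q h1
    refine h2.congr_fderiv ?_
    ext1 v; simp
  have hdt : ∀ t q, HasDerivAt (fun t => ζ t q) (-(fderiv ℝ (ζ t) q w)) t := by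
    intro t q
    rw [(hfd t q).fderiv]
    have h1 : HasDerivAt (fun t : ℝ => σ⁻¹ • (q - (z + t • w))) (σ⁻¹ • (-((1:ℝ) • w))) t :=
      ((((hasDerivAt_id t).smul_const w).const_add z).const_sub q).const_smul σ⁻¹
    have h2 := (hbd (σ⁻¹ • (q - (z + t • w)))).hasFDerivAt.comp_hasDerivAt t h1
    refine h2.congr_deriv ?_
    simp
  have hLσ : ∀ t q, ‖fderiv ℝ (ζ t) q‖ ≤ L / σ := by
    intro t q
    rw [(hfd t q).fderiv, norm_smul, norm_inv, Real.norm_eq_abs, abs_of_pos hσ, div_eq_inv_mul]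
    gcongr; exact hbL _
  have hsup : ∀ t, tsupport (ζ t) ⊆ ball (z + t • w) σ := by
    intro t
    have : tsupport (ζ t) ⊆ closedBall (z + t • w) (3 / 4 * σ) := by
      apply closure_minimal _ isClosed_closedBall
      intro q hq
      have h1 : σ⁻¹ • (q - (z + t • w)) ∈ tsupport b := subset_tsupport _ hq
      rw [hbs, mem_closedBall_zero_iff, norm_smul, norm_inv, Real.norm_eq_abs, abs_of_pos hσ,
        inv_mul_le_iff₀ hσ] at h1
      rw [mem_closedBall, dist_eq_norm]; linarith
    exact this.trans (closedBall_subset_ball (by linarith))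
  have hintg : ∀ t, Integrable (ζ t) ν := by
    intro t
    refine Integrable.of_bound (hζc t).continuous.aestronglyMeasurable 1
      (Eventually.of_forall fun q => ?_)
    rw [Real.norm_eq_abs, abs_of_nonneg (hb0 _)]; exact hb1 _
  have hder : ∀ t, HasDerivAt (fun t => ∫ q, ζ t q ∂ν) (∫ q, -(fderiv ℝ (ζ t) q w) ∂ν) t := by
    intro t
    refine (hasDerivAt_integral_of_dominated_loc_of_deriv_le (s := univ) (F := ζ) (x₀ := t)
      (F' := fun t q => -(fderiv ℝ (ζ t) q w)) (bound := fun _ => L / σ * ‖w‖) univ_mem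
      (Eventually.of_forall fun t => (hintg t).aestronglyMeasurable) (hintg t) ?_ ?_ ?_ ?_).2
    · exact ((((hζc t).continuous_fderiv one_ne_zero).clm_apply
        continuous_const).neg).aestronglyMeasurable
    · refine Eventually.of_forall fun q s _ => ?_
      rw [norm_neg]
      exact (ContinuousLinearMap.le_opNorm _ _).trans (by gcongr; exact hLσ _ _)
    · exact integrable_const _
    · exact Eventually.of_forall fun q s _ => hdt s q
  have hmv : ‖(∫ q, ζ 1 q ∂ν) - ∫ q, ζ 0 q ∂ν‖ ≤ B * ‖(1:ℝ) - 0‖ := by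
    refine Convex.norm_image_sub_le_of_norm_hasDerivWithin_le (f := fun t => ∫ q, ζ t q ∂ν)
      (s := Icc (0:ℝ) 1) (fun t _ => (hder t).hasDerivWithinAt) ?_ (convex_Icc 0 1)
      (by simp) (by simp)
    intro t ht
    rw [integral_neg, norm_neg]
    exact hB t ht (ζ t) (hζc t) (hsup t) (hLσ t)
  simp only [sub_zero, norm_one, mul_one, Real.norm_eq_abs] at hmv
  have h0 : ν.real (closedBall z (σ / 2)) ≤ ∫ q, ζ 0 q ∂ν := by
    rw [← integral_indicator_one measurableSet_closedBall]
    refine integral_mono ((integrable_const 1).indicator measurableSet_closedBall) (hintg 0) ?_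
    intro q
    by_cases hq : q ∈ closedBall z (σ / 2)
    · rw [indicator_of_mem hq]
      simp only [hζ, zero_smul, add_zero, Pi.one_apply]
      rw [hbin]
      rw [mem_closedBall_zero_iff, norm_smul, norm_inv, Real.norm_eq_abs, abs_of_pos hσ,
        inv_mul_le_iff₀ hσ]
      rw [mem_closedBall, dist_eq_norm] at hq; linarith
    · rw [indicator_of_notMem hq]; exact hb0 _
  have h1 : ∫ q, ζ 1 q ∂ν ≤ ν.real (ball (z + w) σ) := by
    rw [← integral_indicator_one measurableSet_ball]
    refine integral_mono (hintg 1) ((integrable_const 1).indicator measurableSet_ball) ?_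
    intro q
    by_cases hq : q ∈ ball (z + w) σ
    · rw [indicator_of_mem hq]; exact hb1 _
    · rw [indicator_of_notMem hq]
      have : q ∉ tsupport (ζ 1) := fun hc => hq (by have := hsup 1 hc; rwa [one_smul] at this)
      exact (image_eq_zero_of_notMem_tsupport this).le
  have := neg_le_of_abs_le hmv
  linarith

set_option maxHeartbeats 1600000 in
/-- Suppose that, at all small scales, `E` contains points at height at least `η ρ` over `y + W`. At
the scales `(η / 2) ^ k ρ`, `k ≤ K`, these points `z k` have well-separated heights. Since `E` is almost
invariant under translations along `W`, all balls of radius `σ` centred at `z k + w`, with `w` in a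
grid of `W ∩ ball 0 ρ` of mesh `2 σ`, carry a mass comparable to `σ ^ d`. They are disjoint, and for large
`K` their total mass exceeds the upper bound for the mass in `ball y (3 ρ)`. -/
theorem flatAt_of_dirAt {n d : ℕ} {E : Set (Euc n)} {y : Euc n}
    (hyE : y ∈ E) {c C ρ₁ : ℝ} (hc : 0 < c) (hC : 0 < C) (hρ₁ : 0 < ρ₁) (hd : 1 ≤ d)
    (hlow : ∀ z ∈ E, dist z y < ρ₁ → ∀ σ, 0 < σ → σ < ρ₁ →
      ENNReal.ofReal (c * σ ^ d) ≤ μH[(d:ℝ)] (E ∩ ball z σ))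
    (hup : ∀ ρ, 0 < ρ → ρ < ρ₁ → μH[(d:ℝ)] (E ∩ closedBall y ρ) ≤ ENNReal.ofReal (C * ρ ^ d))
    {W : Submodule ℝ (Euc n)} (hW : Module.finrank ℝ W = d) (hdir : ∀ w ∈ W, DirAt d E y w) :
    FlatAt d E y := by
  refine ⟨⟨c, C, ρ₁, hc, hC, hρ₁, fun ρ h0 h1 => ⟨?_, hup ρ h0 h1⟩⟩, W, hW, ?_⟩
  · exact (hlow y hyE (by simpa using hρ₁) ρ h0 h1).trans
      (measure_mono (inter_subset_inter_right _ ball_subset_closedBall))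
  by_contra! hcon
  obtain ⟨η₀, hη₀, u, hu, hbad₀⟩ := hcon
  obtain ⟨η, hη, hη1, hbad⟩ : ∃ η : ℝ, 0 < η ∧ η ≤ 1 ∧ ∀ ρ, 0 < ρ → ρ < u →
      ∃ q ∈ E ∩ closedBall y ρ, η * ρ < ‖(q - y) - W.starProjection (q - y)‖ := by
    refine ⟨min η₀ 1, by positivity, min_le_right _ _, fun ρ h0 h1 => ?_⟩
    obtain ⟨q, hq, hq'⟩ := hbad₀ ρ h0 h1
    refine ⟨q, hq, lt_of_le_of_lt ?_ hq'⟩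
    gcongr; exact min_le_left _ _
  obtain ⟨b, L, hL, hb, hbL, hb0, hb1, hbin, hbs⟩ := exists_bump n
  have hd0 : (0:ℝ) < d := by exact_mod_cast hd
  obtain ⟨K, hK⟩ : ∃ K : ℕ, C * 3 ^ d / (1 / 2 * c * (1 / (4 * d)) ^ d) < K := exists_nat_gt _
  set η' := η / 2 with hη'
  have hη'0 : 0 < η' := by positivity
  have hη'1 : η' ≤ 1 := by linarith
  obtain ⟨M, hM⟩ : ∃ M : ℕ, 4 / (2 * d * η' ^ (K + 1)) < M := exists_nat_gt _
  have hM0 : (0:ℝ) < M := lt_trans (by positivity) hM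
  set τ : ℝ := 1 / (2 * d * M) with hτ
  have hτ0 : 0 < τ := by positivity
  have hτη : 4 * τ ≤ η' ^ (K + 1) := by
    rw [div_lt_iff₀ (by positivity)] at hM
    rw [hτ, mul_one_div, div_le_iff₀ (by positivity)]
    nlinarith
  have hτ1 : 4 * τ ≤ 1 := hτη.trans (pow_le_one₀ hη'0.le hη'1)
  set ε : ℝ := 1 / 2 * c * (τ / 2) ^ d * τ / (d * L * 3 ^ d) with hε
  have hε0 : 0 < ε := by positivity
  -- an orthonormal basis of `W`
  let bas : OrthonormalBasis (Fin d) ℝ W := (stdOrthonormalBasis ℝ W).reindex (finCongr hW)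
  let e : Fin d → Euc n := fun i => (bas i : Euc n)
  have heW : ∀ i, e i ∈ W := fun i => (bas i).2
  have heo : ∀ i j, ⟪e i, e j⟫_ℝ = if i = j then 1 else 0 := by
    intro i j
    exact orthonormal_iff_ite.1 bas.orthonormal i j
  have hen : ∀ i, ‖e i‖ = 1 := fun i => bas.orthonormal.1 i
  choose ρd hρd0 hρd using fun i => hdir (e i) (heW i) ε hε0
  have hne : (Finset.univ : Finset (Fin d)).Nonempty := ⟨⟨0, hd⟩, Finset.mem_univ _⟩
  set ρm := Finset.univ.inf' hne ρd with hρm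
  have hρm0 : 0 < ρm := by rw [hρm, Finset.lt_inf'_iff]; exact fun i _ => hρd0 i
  have hρmi : ∀ i, ρm ≤ ρd i := fun i => Finset.inf'_le _ (Finset.mem_univ i)
  obtain ⟨ρ, hρ0, hρ⟩ : ∃ ρ : ℝ, 0 < ρ ∧ ρ < min u (min (ρ₁ / 3) (ρm / 3)) :=
    exists_between (by positivity)
  have hρu : ρ < u := hρ.trans_le (min_le_left _ _)
  have hρ1 : 3 * ρ < ρ₁ := by
    have := hρ.trans_le ((min_le_right _ _).trans (min_le_left _ _)); linarith
  have hρ2 : 3 * ρ < ρm := by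
    have := hρ.trans_le ((min_le_right _ _).trans (min_le_right _ _)); linarith
  have hsc : ∀ k : ℕ, 0 < η' ^ k * ρ ∧ η' ^ k * ρ < u ∧ η' ^ k * ρ ≤ ρ := by
    intro k
    have h1 : η' ^ k ≤ 1 := pow_le_one₀ hη'0.le hη'1
    have h2 : η' ^ k * ρ ≤ ρ := mul_le_of_le_one_left hρ0.le h1
    exact ⟨by positivity, h2.trans_lt hρu, h2⟩
  choose z hzE hz using fun k : ℕ => hbad (η' ^ k * ρ) (hsc k).1 (hsc k).2.1
  set ht : Euc n → ℝ := fun q => ‖(q - y) - W.starProjection (q - y)‖ with hht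
  have hzy : ∀ k, ‖z k - y‖ ≤ η' ^ k * ρ := fun k => by
    rw [← dist_eq_norm]; exact (hzE k).2
  set σ := τ * ρ with hσ
  have hσ0 : 0 < σ := by positivity
  set m : ℝ := 1 / 2 * (c * (σ / 2) ^ d) with hm
  set ν := (μH[(d:ℝ)] : Measure (Euc n)).restrict (E ∩ ball y (3 * ρ)) with hν
  have hνle : μH[(d:ℝ)] (E ∩ ball y (3 * ρ)) ≤ ENNReal.ofReal (C * (3 * ρ) ^ d) :=
    (measure_mono (inter_subset_inter_right _ ball_subset_closedBall)).trans
      (hup (3 * ρ) (by positivity) hρ1)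
  have hνfin : IsFiniteMeasure ν :=
    ⟨by rw [hν, Measure.restrict_apply_univ]; exact hνle.trans_lt ENNReal.ofReal_lt_top⟩
  let wv : (Fin d → Fin M) → Euc n := fun a => ∑ i, (2 * τ * ρ * (a i : ℕ)) • e i
  have hcoef : ∀ (a : Fin d → Fin M) i, 0 ≤ 2 * τ * ρ * ((a i : ℕ) : ℝ) ∧
      2 * τ * ρ * ((a i : ℕ) : ℝ) ≤ ρ / d := by
    intro a i
    refine ⟨by positivity, ?_⟩
    have h1 : ((a i : ℕ) : ℝ) ≤ M := by exact_mod_cast (a i).2.le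
    calc 2 * τ * ρ * ((a i : ℕ) : ℝ) ≤ 2 * τ * ρ * M := by gcongr
      _ = ρ / d := by rw [hτ]; field_simp
  have hwW : ∀ a, wv a ∈ W := fun a => W.sum_mem fun i _ => W.smul_mem _ (heW i)
  have hwn : ∀ a, ‖wv a‖ ≤ ρ := by
    intro a
    calc ‖wv a‖ ≤ ∑ i, ‖(2 * τ * ρ * ((a i : ℕ) : ℝ)) • e i‖ := norm_sum_le _ _
      _ ≤ ∑ _i : Fin d, ρ / d := by
          apply Finset.sum_le_sum
          intro i _
          rw [norm_smul, hen, mul_one, Real.norm_eq_abs, abs_of_nonneg (hcoef a i).1]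
          exact (hcoef a i).2
      _ = ρ := by simp; field_simp
  have hballs : ∀ k a, ∀ t ∈ Icc (0:ℝ) 1, ball (z k + t • wv a) σ ⊆ ball y (3 * ρ) := by
    intro k a t ht
    apply ball_subset_ball'
    have h1 : dist (z k + t • wv a) y ≤ ‖z k - y‖ + ‖t • wv a‖ := by
      rw [dist_eq_norm, add_sub_right_comm]; exact norm_add_le _ _
    have h2 : ‖t • wv a‖ ≤ ρ := by
      rw [norm_smul, Real.norm_eq_abs, abs_of_nonneg ht.1]
      nlinarith [hwn a, norm_nonneg (wv a), ht.2]
    have h3 := (hzy k).trans (hsc k).2.2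
    have h4 : σ ≤ ρ := by rw [hσ]; nlinarith
    linarith
  have hmass : ∀ k a, m ≤ ν.real (ball (z k + wv a) σ) := by
    intro k a
    have h1 := translate_mass hb hbL hb0 hb1 hbin hbs ν (z k) (wv a) (σ := σ) (B := m) hσ0 ?_
    · have h2 : c * (σ / 2) ^ d ≤ ν.real (closedBall (z k) (σ / 2)) := by
        rw [Measure.real, ← ENNReal.ofReal_le_iff_le_toReal (measure_ne_top _ _), hν,
          Measure.restrict_apply measurableSet_closedBall]
        refine (hlow (z k) (hzE k).1 ?_ (σ / 2) (by positivity) ?_).trans (measure_mono ?_)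
        · rw [dist_eq_norm]; linarith [hzy k, (hsc k).2.2]
        · rw [hσ]; nlinarith
        · rintro q ⟨hq1, hq2⟩
          refine ⟨ball_subset_closedBall hq2, hq1, ?_⟩
          have h5 := hballs k a 0 (by simp)
          rw [zero_smul, add_zero] at h5
          exact h5 (ball_subset_ball (by linarith) hq2)
      linarith
    · intro t ht v hv hvs hvL
      have hintg : ∀ i, |∫ q, fderiv ℝ v q (e i) ∂ν| ≤ ε * (L / σ) * (3 * ρ) ^ d := fun i =>
        hρd i (3 * ρ) (by positivity) (hρ2.trans_le (hρmi i)) v hv (hvs.trans (hballs k a t ht))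
          (L / σ) (by positivity) hvL
      have hI : ∀ i, Integrable (fun q => fderiv ℝ v q (e i)) ν := by
        intro i
        refine Integrable.of_bound ((hv.continuous_fderiv one_ne_zero).clm_apply
          continuous_const).aestronglyMeasurable (L / σ * ‖e i‖) (Eventually.of_forall fun q => ?_)
        exact (ContinuousLinearMap.le_opNorm _ _).trans (by gcongr; exact hvL q)
      have e1 : ∫ q, fderiv ℝ v q (wv a) ∂ν =
          ∑ i, (2 * τ * ρ * ((a i : ℕ) : ℝ)) * ∫ q, fderiv ℝ v q (e i) ∂ν := by
        simp only [wv, map_sum, map_smul, smul_eq_mul]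
        rw [integral_finsetSum _ (fun i _ => (hI i).const_mul _)]
        simp only [integral_const_mul]
      rw [e1]
      calc |∑ i, (2 * τ * ρ * ((a i : ℕ) : ℝ)) * ∫ q, fderiv ℝ v q (e i) ∂ν|
          ≤ ∑ i, |(2 * τ * ρ * ((a i : ℕ) : ℝ)) * ∫ q, fderiv ℝ v q (e i) ∂ν| :=
            Finset.abs_sum_le_sum_abs _ _
        _ ≤ ∑ _i : Fin d, ρ * (ε * (L / σ) * (3 * ρ) ^ d) := by
            apply Finset.sum_le_sum
            intro i _
            rw [abs_mul, abs_of_nonneg (hcoef a i).1]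
            have h6 : ρ / d ≤ ρ := div_le_self hρ0.le (by exact_mod_cast hd)
            exact mul_le_mul ((hcoef a i).2.trans h6) (hintg i) (abs_nonneg _) hρ0.le
        _ = m := by
            simp only [Finset.sum_const, Finset.card_univ, Fintype.card_fin, nsmul_eq_mul]
            rw [hm, hε, hσ]
            simp only [mul_pow, div_pow]
            field_simp
  have hdisj : Pairwise fun (p p' : Fin (K + 1) × (Fin d → Fin M)) =>
      Disjoint (ball (z p.1 + wv p.2) σ) (ball (z p'.1 + wv p'.2) σ) := by
    have hperp : ∀ k k' : Fin (K + 1), k < k' → ∀ a a',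
        Disjoint (ball (z k + wv a) σ) (ball (z k' + wv a') σ) := by
      intro k k' hkk a a'
      apply ball_disjoint_ball
      set Q : Euc n → Euc n := fun q => q - W.starProjection q with hQ
      have hQsub : ∀ p q, Q (p - q) = Q p - Q q := by
        intro p q; simp only [hQ, map_sub]; abel
      have hQadd : ∀ p q, Q (p + q) = Q p + Q q := by
        intro p q; simp only [hQ, map_add]; abel
      have hQW : ∀ q ∈ W, Q q = 0 := by
        intro q hq; simp only [hQ, Submodule.starProjection_eq_self_iff.2 hq, sub_self]
      have hQn : ∀ q, ‖Q q‖ ≤ ‖q‖ := by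
        intro q
        have h1 : Q q = Wᗮ.starProjection q := by
          rw [hQ, Submodule.starProjection_orthogonal_val]
        rw [h1]; exact Submodule.norm_starProjection_apply_le _ _
      have h1 : Q (z k + wv a - (z k' + wv a')) = Q (z k - y) - Q (z k' - y) := by
        rw [hQsub, hQadd, hQadd, hQW _ (hwW a), hQW _ (hwW a'), hQsub, hQsub]; abel
      have h2 : η * (η' ^ (k:ℕ) * ρ) < ‖Q (z k - y)‖ := hz k
      have h3 : ‖Q (z k' - y)‖ ≤ η' ^ (k':ℕ) * ρ := (hQn _).trans (hzy k')
      have h4 : η' ^ (k':ℕ) ≤ η' ^ ((k:ℕ) + 1) :=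
        pow_le_pow_of_le_one hη'0.le hη'1 (by exact hkk)
      have h5 : η' ^ (K + 1) ≤ η' ^ ((k:ℕ) + 1) :=
        pow_le_pow_of_le_one hη'0.le hη'1 (by have := k.2; omega)
      have h6 : ‖Q (z k - y)‖ - ‖Q (z k' - y)‖ ≤ ‖z k + wv a - (z k' + wv a')‖ := by
        refine (norm_sub_norm_le _ _).trans ?_
        rw [← h1]; exact hQn _
      rw [dist_eq_norm]
      have h7 : η' ^ (k':ℕ) * ρ ≤ η' ^ ((k:ℕ) + 1) * ρ := by gcongr
      have h8 : η * (η' ^ (k:ℕ) * ρ) = 2 * (η' ^ ((k:ℕ) + 1) * ρ) := by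
        rw [pow_succ, hη']; ring
      have h9 : 4 * τ * ρ ≤ η' ^ ((k:ℕ) + 1) * ρ := by gcongr; exact hτη.trans h5
      rw [hσ]; nlinarith
    rintro ⟨k, a⟩ ⟨k', a'⟩ hne'
    rcases lt_trichotomy k k' with hk | hk | hk
    · exact hperp k k' hk a a'
    · subst hk
      have hneq : a ≠ a' := fun hh => hne' (by rw [hh])
      obtain ⟨i, hi⟩ := Function.ne_iff.1 hneq
      apply ball_disjoint_ball
      rw [dist_eq_norm]
      have h1 : z k + wv a - (z k + wv a') = wv a - wv a' := by abel
      simp only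
      rw [h1]
      have h2 : ∀ a, ⟪e i, wv a⟫_ℝ = 2 * τ * ρ * ((a i : ℕ) : ℝ) := by
        intro a
        simp only [wv, inner_sum, inner_smul_right, heo]
        simp
      have h3 : |⟪e i, wv a - wv a'⟫_ℝ| ≤ ‖wv a - wv a'‖ := by
        have := abs_real_inner_le_norm (e i) (wv a - wv a')
        rwa [hen, one_mul] at this
      rw [inner_sub_right, h2, h2, ← mul_sub, abs_mul, abs_of_pos (by positivity)] at h3
      have h4 : (1:ℝ) ≤ |((a i : ℕ) : ℝ) - ((a' i : ℕ) : ℝ)| := by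
        have : ((a i : ℕ) : ℤ) - ((a' i : ℕ) : ℤ) ≠ 0 := by
          intro hh; apply hi; ext; omega
        exact_mod_cast Int.one_le_abs this
      have h5 : 2 * τ * ρ * 1 ≤ 2 * τ * ρ * |((a i : ℕ) : ℝ) - ((a' i : ℕ) : ℝ)| := by gcongr
      rw [hσ]; linarith
    · exact (hperp k' k hk a' a).symm
  have htot : ∑ p : Fin (K + 1) × (Fin d → Fin M), ν.real (ball (z p.1 + wv p.2) σ) ≤
      C * (3 * ρ) ^ d := by
    rw [← measureReal_iUnion_fintype hdisj (fun _ => measurableSet_ball)]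
    refine (measureReal_mono (subset_univ _)).trans ?_
    rw [Measure.real, hν, Measure.restrict_apply_univ]
    exact ENNReal.toReal_le_of_le_ofReal (by positivity) hνle
  have hsum : ∑ _p : Fin (K + 1) × (Fin d → Fin M), m ≤ C * (3 * ρ) ^ d :=
    (Finset.sum_le_sum fun p _ => hmass p.1 p.2).trans htot
  simp only [Finset.sum_const, Finset.card_univ, Fintype.card_prod, Fintype.card_fin,
    Fintype.card_fun, nsmul_eq_mul] at hsum
  push_cast at hsum
  have h1 : (K + 1) * (M:ℝ) ^ d * m = (K + 1) * (1 / 2 * c * (1 / (4 * d)) ^ d) * ρ ^ d := by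
    rw [hm, hσ, hτ]
    simp only [mul_pow, div_pow]
    field_simp
    rw [← pow_mul, mul_comm d 2, pow_mul]; norm_num
  rw [h1, mul_pow, ← mul_assoc C] at hsum
  have h2 := le_of_mul_le_mul_right hsum (show 0 < ρ ^ d by positivity)
  rw [div_lt_iff₀ (by positivity)] at hK
  have h3 : 0 < 1 / 2 * c * (1 / (4 * (d:ℝ))) ^ d := by positivity
  nlinarith

/-! ### Maps that collapse measure -/

/-- If `f` maps every bounded subset `T` of `S` into a union of `card ι` sets of diameter at most
`a * diam T`, then it multiplies `μH[d]` by at most `card ι * a ^ d`. -/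
theorem image_measure_le_of_pieces {n d : ℕ} (hd : 1 ≤ d) {f : Euc n → Euc n} {S : Set (Euc n)}
    {ι : Type} [Fintype ι] {a : ℝ≥0} (hS : μH[(d:ℝ)] S ≠ ⊤)
    (h : ∀ T ⊆ S, ediam T ≠ ⊤ → ∃ P : ι → Set (Euc n), T ⊆ ⋃ i, P i ∧
      ∀ i, ediam (f '' (T ∩ P i)) ≤ a * ediam T) :
    μH[(d:ℝ)] (f '' S) ≤ (Fintype.card ι) * (a:ℝ≥0∞) ^ d * μH[(d:ℝ)] S := by
  have h1 : ∀ k : ℕ, ∃ t : ℕ → Set (Euc n), S ⊆ ⋃ i, t i ∧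
      (∀ i, ediam (t i) ≤ ((1 / ((k:ℝ≥0) + 1) : ℝ≥0) : ℝ≥0∞)) ∧
      ∑' i, ediam (t i) ^ d ≤ μH[(d:ℝ)] S + ((1 / ((k:ℝ≥0) + 1) : ℝ≥0) : ℝ≥0∞) := by
    intro k
    have hk : (0:ℝ≥0∞) < ((1 / ((k:ℝ≥0) + 1) : ℝ≥0) : ℝ≥0∞) := by
      rw [ENNReal.coe_pos]; positivity
    set e : ℝ≥0∞ := ((1 / ((k:ℝ≥0) + 1) : ℝ≥0) : ℝ≥0∞) with he
    have h2 : (⨅ (t : ℕ → Set (Euc n)) (_ : S ⊆ ⋃ i, t i) (_ : ∀ i, ediam (t i) ≤ e),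
        ∑' i, ⨆ _ : (t i).Nonempty, ediam (t i) ^ (d:ℝ)) < μH[(d:ℝ)] S + e := by
      refine lt_of_le_of_lt ?_ (ENNReal.lt_add_right hS hk.ne')
      rw [Measure.hausdorffMeasure_apply]
      exact le_iSup₂_of_le e hk le_rfl
    simp only [iInf_lt_iff] at h2
    obtain ⟨t, ht1, ht2, ht3⟩ := h2
    refine ⟨t, ht1, ht2, le_trans (le_of_eq ?_) ht3.le⟩
    congr 1
    ext i
    rcases (t i).eq_empty_or_nonempty with h0 | h0
    · simp [h0, show d ≠ 0 by omega]
    · simp [h0]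
  choose t ht1 ht2 ht3 using h1
  have hT : ∀ k i, ∃ P : ι → Set (Euc n), S ∩ t k i ⊆ ⋃ j, P j ∧
      ∀ j, ediam (f '' ((S ∩ t k i) ∩ P j)) ≤ a * ediam (S ∩ t k i) := by
    intro k i
    refine h _ inter_subset_left (ne_top_of_le_ne_top ENNReal.coe_ne_top
      ((ediam_mono inter_subset_right).trans (ht2 k i)))
  choose P hP1 hP2 using hT
  have hlim0 : Tendsto (fun k : ℕ => ((1 / ((k:ℝ≥0) + 1) : ℝ≥0) : ℝ≥0∞)) atTop (𝓝 0) := by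
    rw [← ENNReal.coe_zero, ENNReal.tendsto_coe]
    exact tendsto_one_div_add_atTop_nhds_zero_nat (𝕜 := ℝ≥0)
  have hlim : Tendsto (fun k : ℕ => (a:ℝ≥0∞) * ((1 / ((k:ℝ≥0) + 1) : ℝ≥0) : ℝ≥0∞)) atTop (𝓝 0) := by
    have := ENNReal.Tendsto.const_mul (a := (a:ℝ≥0∞)) hlim0 (Or.inr ENNReal.coe_ne_top)
    simpa using this
  have hb : ∀ k i j, ediam (f '' ((S ∩ t k i) ∩ P k i j)) ≤ a * ediam (t k i) := fun k i j =>
    (hP2 k i j).trans (by gcongr; exact inter_subset_right)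
  refine (Measure.hausdorffMeasure_le_liminf_tsum (d:ℝ) (f '' S) _ hlim
    (fun k (ij : ℕ × ι) => f '' ((S ∩ t k ij.1) ∩ P k ij.1 ij.2))
    (Eventually.of_forall fun k ij => (hb k ij.1 ij.2).trans (by gcongr; exact ht2 k ij.1))
    (Eventually.of_forall fun k => ?_)).trans ?_
  · rintro _ ⟨q, hq, rfl⟩
    obtain ⟨i, hi⟩ := mem_iUnion.1 (ht1 k hq)
    obtain ⟨j, hj⟩ := mem_iUnion.1 (hP1 k i ⟨hq, hi⟩)
    exact mem_iUnion.2 ⟨(i, j), q, ⟨⟨hq, hi⟩, hj⟩, rfl⟩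
  · have hsum : ∀ k, ∑' ij : ℕ × ι, ediam (f '' ((S ∩ t k ij.1) ∩ P k ij.1 ij.2)) ^ (d:ℝ) ≤
        (Fintype.card ι) * (a:ℝ≥0∞) ^ d *
          (μH[(d:ℝ)] S + ((1 / ((k:ℝ≥0) + 1) : ℝ≥0) : ℝ≥0∞)) := by
      intro k
      calc _ ≤ ∑' ij : ℕ × ι, (a * ediam (t k ij.1)) ^ d := by
            refine ENNReal.tsum_le_tsum fun ij => ?_
            rw [ENNReal.rpow_natCast]
            gcongr
            exact hb k ij.1 ij.2
        _ = ∑' i : ℕ, (Fintype.card ι) * ((a:ℝ≥0∞) ^ d * ediam (t k i) ^ d) := by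
            rw [ENNReal.tsum_prod (f := fun i (_ : ι) => ((a:ℝ≥0∞) * ediam (t k i)) ^ d)]
            congr 1; ext i
            simp [tsum_fintype, mul_pow]
        _ = (Fintype.card ι) * (a:ℝ≥0∞) ^ d * ∑' i, ediam (t k i) ^ d := by
            rw [ENNReal.tsum_mul_left, ENNReal.tsum_mul_left, mul_assoc]
        _ ≤ _ := by gcongr; exact ht3 k
    refine (liminf_le_liminf (Eventually.of_forall hsum)).trans ?_
    refine le_of_eq (Tendsto.liminf_eq ?_)
    have hc : (Fintype.card ι : ℝ≥0∞) * (a:ℝ≥0∞) ^ d ≠ ⊤ :=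
      ENNReal.mul_ne_top (ENNReal.natCast_ne_top _) (ENNReal.pow_ne_top ENNReal.coe_ne_top)
    refine ENNReal.Tendsto.const_mul ?_ (Or.inr hc)
    simpa using tendsto_const_nhds.add hlim0

/-- A map that is locally within `1/m` of an orthogonal projection of rank less than `d`
multiplies `μH[d]` by at most a constant times `1/m`. -/
theorem kill_image {n d : ℕ} (hd : 1 ≤ d) {f : Euc n → Euc n} {S : Set (Euc n)}
    (V : Submodule ℝ (Euc n)) (hV : Module.finrank ℝ V < d) {m : ℕ} (hm : 1 ≤ m)
    (hS : μH[(d:ℝ)] S ≠ ⊤)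
    (hf : ∀ p ∈ S, ∀ q ∈ S, ‖(f p - f q) - V.starProjection (p - q)‖ ≤ 2 / m * ‖p - q‖) :
    μH[(d:ℝ)] (f '' S) ≤ ENNReal.ofReal ((3 * (d + 2)) ^ d / m) * μH[(d:ℝ)] S := by
  set k := Module.finrank ℝ V with hk
  have hm0 : (0:ℝ) < m := by exact_mod_cast hm
  let b := stdOrthonormalBasis ℝ V
  have hproj : ∀ w : Euc n, ‖V.starProjection w‖ ≤ ∑ i, |⟪(b i : Euc n), w⟫_ℝ| := by
    intro w
    have h1 : V.starProjection w = ∑ i, ⟪(b i : Euc n), w⟫_ℝ • (b i : Euc n) := by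
      have := b.sum_repr (V.orthogonalProjectionOnto w)
      rw [Submodule.starProjection_apply, ← this]
      push_cast
      refine Finset.sum_congr rfl fun i _ => ?_
      rw [b.repr_apply_apply]
      congr 1
      exact Submodule.inner_orthogonalProjectionOnto_eq_of_mem_left (b i) w
    rw [h1]
    refine (norm_sum_le _ _).trans (Finset.sum_le_sum fun i _ => ?_)
    rw [norm_smul, Real.norm_eq_abs]
    have : ‖(b i : Euc n)‖ = 1 := by
      have := b.norm_eq_one i
      exact this
    rw [this, mul_one]
  have hbin : ∀ (i) (w : Euc n), |⟪(b i : Euc n), w⟫_ℝ| ≤ ‖w‖ := by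
    intro i w
    have : ‖(b i : Euc n)‖ = 1 := by
      have := b.norm_eq_one i
      exact this
    simpa [this] using abs_real_inner_le_norm (b i : Euc n) w
  have main := image_measure_le_of_pieces (ι := Fin k → Finset.Icc (-(m:ℤ)) m) hd (f := f) (S := S)
    (a := ((k:ℝ≥0) + 2) / m) hS ?_
  · refine main.trans ?_
    gcongr
    rw [← ENNReal.coe_natCast, ← ENNReal.coe_pow, ← ENNReal.coe_mul, ENNReal.ofReal,
      ENNReal.coe_le_coe, ← NNReal.coe_le_coe, Real.coe_toNNReal _ (by positivity)]
    simp only [Fintype.card_fun, Fintype.card_coe, Int.card_Icc, Fintype.card_fin]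
    push_cast
    have h2 : ((((m:ℤ) + 1 - -(m:ℤ)).toNat : ℕ) : ℝ) ≤ 3 * m := by
      have : ((m:ℤ) + 1 - -(m:ℤ)).toNat ≤ 3 * m := by omega
      exact_mod_cast this
    calc ((((m:ℤ) + 1 - -(m:ℤ)).toNat : ℕ) : ℝ) ^ k * (((k:ℝ) + 2) / m) ^ d
        ≤ (3 * m) ^ (d - 1) * (((d:ℝ) + 2) / m) ^ d := by
          gcongr
          · calc _ ≤ (3 * (m:ℝ)) ^ k := by gcongr
              _ ≤ _ := pow_le_pow_right₀ (by
                have : (1:ℝ) ≤ m := by exact_mod_cast hm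
                linarith) (by omega)
      _ = 3 ^ (d - 1) * ((d:ℝ) + 2) ^ d / m := by
          obtain ⟨e, rfl⟩ : ∃ e, d = e + 1 := ⟨d - 1, by omega⟩
          simp only [Nat.add_sub_cancel, div_pow, mul_pow]
          field_simp
          ring
      _ ≤ 3 ^ d * ((d:ℝ) + 2) ^ d / m := by
          gcongr
          · norm_num
          · omega
      _ = _ := by rw [mul_pow]
  · intro T hTS hTd
    rcases T.eq_empty_or_nonempty with rfl | ⟨q₀, hq₀⟩
    · exact ⟨fun _ => univ, by simp, by simp⟩
    set ρ := (ediam T).toReal with hρ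
    have hρe : ediam T = ENNReal.ofReal ρ := (ENNReal.ofReal_toReal hTd).symm
    have hdist : ∀ p ∈ T, ∀ q ∈ T, ‖p - q‖ ≤ ρ := by
      intro p hp q hq
      have := edist_le_ediam_of_mem hp hq
      rw [← dist_eq_norm, dist_edist]
      exact ENNReal.toReal_mono hTd this
    have hρ0 : 0 ≤ ρ := ENNReal.toReal_nonneg
    refine ⟨fun j => {q | ∀ i, ⌊m * ⟪(b i : Euc n), q - q₀⟫_ℝ / ρ⌋ = j i}, ?_, ?_⟩
    · intro q hq
      rw [mem_iUnion]
      refine ⟨fun i => ⟨⌊m * ⟪(b i : Euc n), q - q₀⟫_ℝ / ρ⌋, ?_⟩, fun i => rfl⟩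
      have h3 : |⟪(b i : Euc n), q - q₀⟫_ℝ| ≤ ρ := (hbin i _).trans (hdist q hq q₀ hq₀)
      have h4 := abs_le.1 h3
      have h5 : |m * ⟪(b i : Euc n), q - q₀⟫_ℝ / ρ| ≤ m := by
        rcases hρ0.eq_or_lt with h0 | h0
        · rw [← h0]; simp
        · rw [abs_div, abs_mul, abs_of_pos hm0, abs_of_pos h0, div_le_iff₀ h0]
          gcongr
      have h6 := abs_le.1 h5
      rw [Finset.mem_Icc]
      constructor
      · rw [Int.le_floor]; push_cast; exact h6.1
      · have : (⌊m * ⟪(b i : Euc n), q - q₀⟫_ℝ / ρ⌋ : ℝ) ≤ m := (Int.floor_le _).trans h6.2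
        exact_mod_cast this
    · intro j
      rw [hρe, ← ENNReal.ofReal_coe_nnreal, ← ENNReal.ofReal_mul (by positivity)]
      refine ediam_le_of_forall_dist_le ?_
      rintro _ ⟨p, ⟨hp, hpj⟩, rfl⟩ _ ⟨q, ⟨hq, hqj⟩, rfl⟩
      have h7 : ∀ i, |⟪(b i : Euc n), p - q⟫_ℝ| ≤ ρ / m := by
        intro i
        rcases hρ0.eq_or_lt with h0 | h0
        · have := (hbin i (p - q)).trans (hdist p hp q hq)
          rw [← h0] at this ⊢; simpa using this
        · have h8 : ⌊m * ⟪(b i : Euc n), p - q₀⟫_ℝ / ρ⌋ = ⌊m * ⟪(b i : Euc n), q - q₀⟫_ℝ / ρ⌋ := by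
            rw [hpj i, hqj i]
          have h9 := Int.abs_sub_lt_one_of_floor_eq_floor h8
          have h10 : m * ⟪(b i : Euc n), p - q₀⟫_ℝ / ρ - m * ⟪(b i : Euc n), q - q₀⟫_ℝ / ρ =
              m * ⟪(b i : Euc n), p - q⟫_ℝ / ρ := by
            have h15 : ⟪(b i : Euc n), p - q⟫_ℝ = ⟪(b i : Euc n), p - q₀⟫_ℝ - ⟪(b i : Euc n), q - q₀⟫_ℝ := by
              rw [← inner_sub_right]; congr 1; abel
            rw [h15]; ring
          rw [h10, abs_div, abs_mul, abs_of_pos hm0, abs_of_pos h0, div_lt_one h0] at h9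
          rw [le_div_iff₀ hm0]; linarith
      have h11 := hf p (hTS hp) q (hTS hq)
      have h12 : ‖V.starProjection (p - q)‖ ≤ k * (ρ / m) := by
        refine (hproj _).trans ((Finset.sum_le_sum fun i _ => h7 i).trans ?_)
        simp [hk]
      have h13 : 2 / m * ‖p - q‖ ≤ 2 / m * ρ := by gcongr; exact hdist p hp q hq
      rw [dist_eq_norm]
      have h14 : ‖f p - f q‖ ≤ ‖(f p - f q) - V.starProjection (p - q)‖ + ‖V.starProjection (p - q)‖ := by
        simpa using norm_add_le ((f p - f q) - V.starProjection (p - q)) (V.starProjection (p - q))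
      push_cast
      calc ‖f p - f q‖ ≤ 2 / m * ρ + k * (ρ / m) := by linarith
        _ = ((k:ℝ) + 2) / m * ρ := by ring

/-! ### Duality in L^p -/

/-- A continuous functional on `L^p`, `p < ∞`, is given on indicator functions by an integrable
density. -/
theorem exists_density_indicator {α : Type*} [MeasurableSpace α] {μ : Measure α} [IsFiniteMeasure μ]
    {p : ℝ≥0∞} [Fact (1 ≤ p)] (hp : p ≠ ⊤) (ℓ : Lp ℝ p μ →L[ℝ] ℝ) :
    ∃ v : α → ℝ, Integrable v μ ∧ ∀ (A : Set α) (hA : MeasurableSet A),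
      ℓ (indicatorConstLp p hA (measure_ne_top μ A) 1) = ∫ x in A, v x ∂μ := by
  classical
  have hadd : ∀ (f : ℕ → Set α) (hf : ∀ i, MeasurableSet (f i))
      (_ : Pairwise (Function.onFun Disjoint f)) (F : Finset ℕ) (hF : MeasurableSet (⋃ i ∈ F, f i)),
      ℓ (indicatorConstLp p hF (measure_ne_top μ _) 1) =
        ∑ i ∈ F, ℓ (indicatorConstLp p (hf i) (measure_ne_top μ _) 1) := by
    intro f hf hd F
    induction F using Finset.induction_on with
    | empty => intro hF; simp [indicatorConstLp_empty]
    | insert a F ha ih =>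
      intro hF
      have hF' : MeasurableSet (⋃ i ∈ F, f i) := F.measurableSet_biUnion fun i _ => hf i
      rw [Finset.sum_insert ha, ← ih hF', ← map_add]
      congr 1
      rw [← indicatorConstLp_disjoint_union]
      · congr 1
        simp
      · rw [disjoint_iUnion₂_right]
        intro i hi
        exact hd (by rintro rfl; exact ha hi)
  let s : SignedMeasure α :=
    { measureOf' := fun A => if hA : MeasurableSet A then
        ℓ (indicatorConstLp p hA (measure_ne_top μ A) 1) else 0
      empty' := by simp [indicatorConstLp_empty]
      not_measurable' := fun A hA => by simp [hA]
      m_iUnion' := by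
        intro f hf hd
        simp only [hf, MeasurableSet.iUnion hf, dif_pos]
        rw [HasSum, SummationFilter.unconditional_filter]
        have hFm : ∀ F : Finset ℕ, MeasurableSet (⋃ i ∈ F, f i) := fun F =>
          F.measurableSet_biUnion fun i _ => hf i
        simp_rw [← fun F => hadd f hf hd F (hFm F)]
        refine (ℓ.continuous.tendsto _).comp ?_
        refine tendsto_indicatorConstLp_set hp ?_
        have hfin : ∑' i, μ (f i) ≠ ⊤ := by
          rw [← measure_iUnion hd hf]; exact measure_ne_top _ _
        refine tendsto_of_tendsto_of_tendsto_of_le_of_le tendsto_const_nhds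
          (ENNReal.tendsto_tsum_compl_atTop_zero hfin) (fun _ => zero_le) ?_
        intro F
        refine (measure_mono ?_).trans (measure_iUnion_le (μ := μ) (fun i : {i // i ∉ F} => f i))
        rintro x (⟨h1, h2⟩ | ⟨h1, h2⟩)
        · exact (h2 ((iUnion₂_subset fun i _ => subset_iUnion f i) h1)).elim
        · obtain ⟨i, hi⟩ := mem_iUnion.1 h1
          refine mem_iUnion.2 ⟨⟨i, fun hiF => h2 (mem_iUnion₂.2 ⟨i, hiF, hi⟩)⟩, hi⟩ }
  have hs : ∀ (A : Set α) (hA : MeasurableSet A),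
      s A = ℓ (indicatorConstLp p hA (measure_ne_top μ A) 1) := by
    intro A hA
    change (if hA : MeasurableSet A then
        ℓ (indicatorConstLp p hA (measure_ne_top μ A) 1) else 0) = _
    simp [hA]
  have hac : VectorMeasure.AbsolutelyContinuous s μ.toENNRealVectorMeasure := by
    refine VectorMeasure.AbsolutelyContinuous.mk fun A hA h0 => ?_
    rw [Measure.toENNRealVectorMeasure_apply_measurable hA] at h0
    rw [hs A hA]
    have : indicatorConstLp p hA (measure_ne_top μ A) (1:ℝ) = 0 := by
      rw [← norm_eq_zero, norm_indicatorConstLp (by have := Fact.out (p := 1 ≤ p); positivity) hp]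
      simp [Measure.real, h0, ENNReal.toReal_eq_zero_iff, hp,
        (zero_lt_one.trans_le (Fact.out (p := 1 ≤ p))).ne']
    rw [this, map_zero]
  refine ⟨s.rnDeriv μ, SignedMeasure.integrable_rnDeriv _ _, fun A hA => ?_⟩
  rw [← hs A hA]
  conv_lhs => rw [← SignedMeasure.withDensityᵥ_rnDeriv_eq s μ hac]
  rw [withDensityᵥ_apply (SignedMeasure.integrable_rnDeriv _ _) hA]

theorem euc_eq_sum {n : ℕ} (z : Euc n) : z = ∑ k, z k • EuclideanSpace.single k (1:ℝ) := by
  ext j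
  simp [Pi.single_apply]

/-- A continuous functional on real-valued `L^p`, `p < ∞`, is given on bounded functions by an
integrable density. -/
theorem exists_density_real {α : Type*} [MeasurableSpace α] {μ : Measure α} [IsFiniteMeasure μ]
    {p : ℝ≥0∞} [Fact (1 ≤ p)] (hp : p ≠ ⊤) (ℓ : Lp ℝ p μ →L[ℝ] ℝ) :
    ∃ v : α → ℝ, Integrable v μ ∧ ∀ (f : α → ℝ) (C : ℝ), Measurable f → (∀ x, |f x| ≤ C) →
      ∀ hf : MemLp f p μ, ℓ (hf.toLp f) = ∫ x, f x * v x ∂μ := by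
  obtain ⟨v, hv, hA⟩ := exists_density_indicator hp ℓ
  refine ⟨v, hv, ?_⟩
  -- simple functions
  have hsimp : ∀ (s : SimpleFunc α ℝ) (hs : MemLp s p μ), ℓ (hs.toLp s) = ∫ x, s x * v x ∂μ := by
    intro s
    induction s using SimpleFunc.induction with
    | @const c A hA' =>
      intro hs
      have h1 : hs.toLp _ = c • indicatorConstLp p hA' (measure_ne_top μ A) (1:ℝ) := by
        rw [indicatorConstLp, ← MemLp.toLp_const_smul]
        refine MemLp.toLp_congr _ _ (Eventually.of_forall fun x => ?_)
        by_cases hx : x ∈ A <;> simp [hx]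
      rw [h1, map_smul, hA A hA', smul_eq_mul, ← integral_const_mul, ← integral_indicator hA']
      congr 1; ext x
      by_cases hx : x ∈ A <;> simp [hx]
    | @add f g hd hf hg =>
      intro hs
      have hfm : MemLp f p μ := f.memLp_of_isFiniteMeasure p μ
      have hgm : MemLp g p μ := g.memLp_of_isFiniteMeasure p μ
      have h1 : hs.toLp _ = hfm.toLp f + hgm.toLp g := by
        rw [← MemLp.toLp_add]; rfl
      rw [h1, map_add, hf hfm, hg hgm, ← integral_add]
      · congr 1; ext x; simp [add_mul]
      · obtain ⟨C, hC⟩ := f.exists_forall_norm_le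
        exact hv.bdd_mul f.measurable.aestronglyMeasurable (Eventually.of_forall hC)
      · obtain ⟨C, hC⟩ := g.exists_forall_norm_le
        exact hv.bdd_mul g.measurable.aestronglyMeasurable (Eventually.of_forall hC)
  intro f C hfm hfC hf
  have hfv : Integrable (fun x => f x * v x) μ :=
    hv.bdd_mul hfm.aestronglyMeasurable (Eventually.of_forall hfC)
  -- uniform approximation by simple functions
  have hkey : ∀ m : ℕ, |ℓ (hf.toLp f) - ∫ x, f x * v x ∂μ| ≤
      1 / ((m:ℝ) + 1) * (‖ℓ‖ * μ.real univ ^ p.toReal⁻¹ + ∫ x, |v x| ∂μ) := by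
    intro m
    set M : ℝ := (m:ℝ) + 1 with hM
    have hM0 : 0 < M := by positivity
    let s : SimpleFunc α ℝ :=
      ⟨fun x => (⌊M * f x⌋ : ℝ) / M, fun c => by
        have : Measurable fun x => (⌊M * f x⌋ : ℝ) / M := by fun_prop
        exact this (measurableSet_singleton c), by
        refine ((Set.finite_Icc (⌊-(M * C)⌋) (⌊M * C⌋)).image (fun z : ℤ => (z:ℝ) / M)).subset ?_
        rintro _ ⟨x, rfl⟩
        have := abs_le.1 (hfC x)
        refine ⟨⌊M * f x⌋, ⟨Int.floor_le_floor (by nlinarith), Int.floor_le_floor (by nlinarith)⟩, rfl⟩⟩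
    have hsf : ∀ x, |f x - s x| ≤ 1 / M := by
      intro x
      change |f x - (⌊M * f x⌋ : ℝ) / M| ≤ 1 / M
      have h1 := Int.floor_le (M * f x)
      have h2 := Int.lt_floor_add_one (M * f x)
      have h3 : f x - (⌊M * f x⌋ : ℝ) / M = (M * f x - ⌊M * f x⌋) / M := by field_simp
      rw [h3, abs_div, abs_of_pos hM0]
      gcongr
      rw [abs_le]; constructor <;> linarith
    have hs : MemLp s p μ := s.memLp_of_isFiniteMeasure p μ
    have hsv : Integrable (fun x => s x * v x) μ := by
      obtain ⟨C, hC⟩ := s.exists_forall_norm_le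
      exact hv.bdd_mul s.measurable.aestronglyMeasurable (Eventually.of_forall hC)
    have h4 : |ℓ (hf.toLp f) - ℓ (hs.toLp s)| ≤ ‖ℓ‖ * (μ.real univ ^ p.toReal⁻¹ * (1 / M)) := by
      rw [← map_sub, ← MemLp.toLp_sub]
      refine (ℓ.le_opNorm _).trans ?_
      gcongr
      refine Lp.norm_le_of_ae_bound (by positivity) ?_
      filter_upwards [(hf.sub hs).coeFn_toLp] with x hx
      rw [hx]; exact hsf x
    have h5 : |(∫ x, f x * v x ∂μ) - ∫ x, s x * v x ∂μ| ≤ 1 / M * ∫ x, |v x| ∂μ := by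
      rw [← integral_sub hfv hsv, ← integral_const_mul]
      refine (abs_integral_le_integral_abs).trans (integral_mono (hfv.sub hsv).abs
        (hv.abs.const_mul _) fun x => ?_)
      simp only
      rw [← sub_mul, abs_mul]
      gcongr
      exact hsf x
    rw [hsimp s hs] at h4
    have h6 := abs_sub_le (ℓ (hf.toLp f)) (∫ x, s x * v x ∂μ) (∫ x, f x * v x ∂μ)
    rw [abs_sub_comm] at h5
    calc _ ≤ _ := h6
      _ ≤ ‖ℓ‖ * (μ.real univ ^ p.toReal⁻¹ * (1 / M)) + 1 / M * ∫ x, |v x| ∂μ := add_le_add h4 h5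
      _ = _ := by ring
  have hlim : Tendsto (fun m : ℕ => 1 / ((m:ℝ) + 1) *
      (‖ℓ‖ * μ.real univ ^ p.toReal⁻¹ + ∫ x, |v x| ∂μ)) atTop (𝓝 0) := by
    simpa using (tendsto_one_div_add_atTop_nhds_zero_nat (𝕜 := ℝ)).mul_const
      (‖ℓ‖ * μ.real univ ^ p.toReal⁻¹ + ∫ x, |v x| ∂μ)
  have := ge_of_tendsto' hlim hkey
  have := abs_nonpos_iff.1 this
  linarith

/-- A continuous functional on the space of `L^p` fields of covectors is given, on bounded
fields, by an integrable vector field. -/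
theorem exists_density {n : ℕ} {α : Type*} [MeasurableSpace α] {μ : Measure α} [IsFiniteMeasure μ]
    {p : ℝ≥0∞} [Fact (1 ≤ p)] (hp : p ≠ ⊤) (ℓ : Lp (Euc n →L[ℝ] ℝ) p μ →L[ℝ] ℝ) :
    ∃ v : α → Euc n, Integrable v μ ∧ ∀ (φ : α → Euc n →L[ℝ] ℝ) (C : ℝ), Measurable φ →
      (∀ x, ‖φ x‖ ≤ C) → ∀ hφ : MemLp φ p μ, ℓ (hφ.toLp φ) = ∫ x, φ x (v x) ∂μ := by
  let e : Fin n → ℝ →L[ℝ] (Euc n →L[ℝ] ℝ) := fun k =>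
    ContinuousLinearMap.toSpanSingleton ℝ (EuclideanSpace.proj k)
  choose w hw hwr using fun k => exists_density_real hp (ℓ.comp ((e k).compLpL p μ))
  have hev : ∀ x, WithLp.toLp 2 (fun k => w k x) = ∑ k, w k x • EuclideanSpace.single k (1:ℝ) := by
    intro x
    exact euc_eq_sum _
  refine ⟨fun x => WithLp.toLp 2 (fun k => w k x), ?_, ?_⟩
  · simp_rw [hev]
    exact integrable_finsetSum _ fun k _ => (hw k).smul_const _
  · intro φ C hφm hφC hφ
    have hcm : ∀ k, Measurable fun x => φ x (EuclideanSpace.single k (1:ℝ)) := fun k =>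
      (ContinuousLinearMap.apply ℝ ℝ (EuclideanSpace.single k (1:ℝ))).continuous.measurable.comp hφm
    have hcC : ∀ k x, |φ x (EuclideanSpace.single k (1:ℝ))| ≤ C := fun k x => by
      have := (φ x).le_opNorm (EuclideanSpace.single k (1:ℝ))
      simp at this
      exact this.trans (hφC x)
    have hcp : ∀ k, MemLp (fun x => φ x (EuclideanSpace.single k (1:ℝ))) p μ := fun k =>
      MemLp.of_bound (hcm k).aestronglyMeasurable C (Eventually.of_forall (hcC k))
    have h1 : hφ.toLp φ = ∑ k, (e k).compLpL p μ ((hcp k).toLp _) := by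
      apply Lp.ext
      have h2 : ∀ k, ((e k).compLpL p μ ((hcp k).toLp _) : α → Euc n →L[ℝ] ℝ) =ᵐ[μ]
          fun x => φ x (EuclideanSpace.single k (1:ℝ)) • EuclideanSpace.proj k := by
        intro k
        filter_upwards [(e k).coeFn_compLpL ((hcp k).toLp _), (hcp k).coeFn_toLp] with x hx hx2
        rw [hx, hx2]; rfl
      refine hφ.coeFn_toLp.trans ?_
      refine EventuallyEq.trans ?_ (Lp.coeFn_finsetSum _ _).symm
      filter_upwards [eventually_all.2 h2] with x hx
      rw [Finset.sum_apply]
      simp_rw [hx]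
      ext z
      conv_lhs => rw [euc_eq_sum z]
      simp [mul_comm]
    rw [h1, map_sum]
    have h3 : ∀ k, ℓ ((e k).compLpL p μ ((hcp k).toLp _)) =
        ∫ x, φ x (EuclideanSpace.single k (1:ℝ)) * w k x ∂μ := fun k =>
      hwr k _ C (hcm k) (hcC k) (hcp k)
    simp_rw [h3]
    rw [← integral_finsetSum]
    · congr 1; ext x
      rw [hev, map_sum]
      refine Finset.sum_congr rfl fun k _ => ?_
      rw [map_smul, smul_eq_mul, mul_comm]
    · intro k _
      exact (hw k).bdd_mul (hcm k).aestronglyMeasurable (Eventually.of_forall (hcC k))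

/-! ### Measurable spans -/

/-- The span at `y` of a sequence of vector fields. -/
def fieldSpan {n : ℕ} (v : ℕ → Euc n → Euc n) (y : Euc n) : Submodule ℝ (Euc n) :=
  Submodule.span ℝ (range fun i => v i y)

theorem measurable_gramSchmidt {n : ℕ} {v : ℕ → Euc n → Euc n} (hv : ∀ i, Measurable (v i)) (i : ℕ) :
    Measurable fun y => InnerProductSpace.gramSchmidt ℝ (fun i => v i y) i := by
  induction i using Nat.strong_induction_on with
  | _ i ih =>
    have hdef : (fun y => InnerProductSpace.gramSchmidt ℝ (fun i => v i y) i) = _ :=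
      funext fun y => InnerProductSpace.gramSchmidt_def ℝ (fun i => v i y) i
    rw [hdef]
    refine (hv i).sub (Finset.measurable_fun_sum _ fun j hj => ?_)
    simp_rw [Submodule.starProjection_singleton]
    have := ih j (Finset.mem_Iio.1 hj)
    exact (Measurable.div (this.inner (hv i)) ((this.norm.pow_const 2))).smul this

/-- The partial Gram–Schmidt expansions of `e` are eventually equal to the projection. -/
theorem tendsto_gramSchmidt {n : ℕ} (f : ℕ → Euc n) (e : Euc n) :
    Tendsto (fun k : ℕ => ∑ i ∈ Finset.range k,
      (⟪InnerProductSpace.gramSchmidt ℝ f i, e⟫_ℝ / ‖InnerProductSpace.gramSchmidt ℝ f i‖ ^ 2) •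
        InnerProductSpace.gramSchmidt ℝ f i) atTop
      (𝓝 ((Submodule.span ℝ (range f)).starProjection e)) := by
  set g := InnerProductSpace.gramSchmidt ℝ f with hg
  have hli : LinearIndependent ℝ (fun i : {i // g i ≠ 0} => g i) :=
    linearIndependent_of_ne_zero_of_inner_eq_zero (fun i => i.2) (fun i j hij =>
      InnerProductSpace.gramSchmidt_orthogonal ℝ f (fun h => hij (Subtype.ext h)))
  have hfin : {i | g i ≠ 0}.Finite := by
    have : Finite {i // g i ≠ 0} := hli.finite
    exact Set.finite_coe_iff.1 (Finite.of_injective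
      (fun i : ({i | g i ≠ 0} : Set ℕ) => (⟨i.1, i.2⟩ : {i // g i ≠ 0}))
      (fun a b h => by simpa using h))
  obtain ⟨N, hN⟩ := hfin.bddAbove
  refine tendsto_const_nhds.congr' ?_
  filter_upwards [eventually_gt_atTop N] with k hk
  refine Submodule.eq_starProjection_of_mem_of_inner_eq_zero ?_ ?_
  · refine Submodule.sum_mem _ fun i _ => Submodule.smul_mem _ _ ?_
    rw [← InnerProductSpace.span_gramSchmidt ℝ f]
    exact Submodule.subset_span (mem_range_self i)
  · intro w hw
    rw [← InnerProductSpace.span_gramSchmidt ℝ f] at hw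
    induction hw using Submodule.span_induction with
    | mem x hx =>
      obtain ⟨j, rfl⟩ := hx
      change ⟪_, g j⟫_ℝ = 0
      by_cases h0 : g j = 0
      · rw [h0, inner_zero_right]
      · have hj : j < k := lt_of_le_of_lt (hN h0) hk
        rw [inner_sub_left, sum_inner, Finset.sum_eq_single j]
        · rw [real_inner_smul_left, real_inner_self_eq_norm_sq, real_inner_comm]
          have : ‖g j‖ ≠ 0 := norm_ne_zero_iff.2 h0
          field_simp
          ring
        · intro i _ hij
          rw [real_inner_smul_left, hg, InnerProductSpace.gramSchmidt_orthogonal ℝ f hij, mul_zero]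
        · intro h; exact (h (Finset.mem_range.2 hj)).elim
    | zero => rw [inner_zero_right]
    | add x y _ _ hx hy => rw [inner_add_right, hx, hy, add_zero]
    | smul a x _ hx => rw [inner_smul_right, hx, mul_zero]

theorem measurable_fieldSpan_proj {n : ℕ} {v : ℕ → Euc n → Euc n} (hv : ∀ i, Measurable (v i))
    (e : Euc n) : Measurable fun y => (fieldSpan v y).starProjection e := by
  refine measurable_of_tendsto_metrizable
    (f := fun (k : ℕ) y => ∑ i ∈ Finset.range k,
      (⟪InnerProductSpace.gramSchmidt ℝ (fun i => v i y) i, e⟫_ℝ /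
        ‖InnerProductSpace.gramSchmidt ℝ (fun i => v i y) i‖ ^ 2) •
        InnerProductSpace.gramSchmidt ℝ (fun i => v i y) i) (fun k => ?_) ?_
  · refine Finset.measurable_fun_sum _ fun j _ => ?_
    have := measurable_gramSchmidt hv j
    exact (Measurable.div (this.inner measurable_const) ((this.norm.pow_const 2))).smul this
  · rw [tendsto_pi_nhds]
    intro y
    exact tendsto_gramSchmidt _ e

theorem measurableSet_fieldSpan {n : ℕ} {v : ℕ → Euc n → Euc n} (hv : ∀ i, Measurable (v i))
    (d : ℕ) : MeasurableSet {y | Module.finrank ℝ (fieldSpan v y) < d} := by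
  have h : ∀ y, (Module.finrank ℝ (fieldSpan v y) : ℝ) =
      ∑ k : Fin n, ⟪EuclideanSpace.single k (1:ℝ),
        (fieldSpan v y).starProjection (EuclideanSpace.single k (1:ℝ))⟫_ℝ := by
    intro y
    have h1 : LinearMap.IsProj (fieldSpan v y) ((fieldSpan v y).starProjection : Euc n →ₗ[ℝ] Euc n) :=
      ⟨fun x => Submodule.starProjection_apply_mem _ x,
        fun x hx => Submodule.starProjection_eq_self_iff.2 hx⟩
    rw [← h1.trace, LinearMap.trace_eq_sum_inner _ (EuclideanSpace.basisFun (Fin n) ℝ)]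
    simp
  have h2 : {y | Module.finrank ℝ (fieldSpan v y) < d} =
      {y | ∑ k : Fin n, ⟪EuclideanSpace.single k (1:ℝ),
        (fieldSpan v y).starProjection (EuclideanSpace.single k (1:ℝ))⟫_ℝ < d} := by
    ext y
    rw [Set.mem_ofPred_eq, Set.mem_ofPred_eq, ← h y, Nat.cast_lt]
  rw [h2]
  refine measurableSet_lt (Finset.measurable_fun_sum _ fun k _ => ?_) measurable_const
  exact measurable_const.inner (measurable_fieldSpan_proj hv _)

/-! ### Null fields -/

/-- An integrable vector field whose `ν`-weighted distributional divergence vanishes in the ball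
`ball x r`. -/
def NullField {n : ℕ} (ν : Measure (Euc n)) (x : Euc n) (r : ℝ) (v : Euc n → Euc n) : Prop :=
  Integrable v ν ∧ ∀ u : Euc n → ℝ, ContDiff ℝ 1 u → tsupport u ⊆ ball x r →
    ∫ q, fderiv ℝ u q (v q) ∂ν = 0

theorem exists_fderiv_bound {n : ℕ} {x : Euc n} {r : ℝ} {u : Euc n → ℝ} (hu : ContDiff ℝ 1 u)
    (hs : tsupport u ⊆ ball x r) : ∃ C, ∀ q, ‖fderiv ℝ u q‖ ≤ C := by
  have hc : HasCompactSupport u := isCompact_of_isClosed_isBounded (isClosed_tsupport u)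
    (isBounded_ball.subset hs)
  exact (hu.continuous_fderiv one_ne_zero).bounded_above_of_compact_support (hc.fderiv ℝ)

theorem measurable_covector_iff {n : ℕ} {φ : Euc n → Euc n →L[ℝ] ℝ}
    (h : ∀ e, Measurable fun q => φ q e) : Measurable φ := by
  have : φ = fun q => ∑ k, φ q (EuclideanSpace.single k (1:ℝ)) •
      (EuclideanSpace.proj k : Euc n →L[ℝ] ℝ) := by
    ext q z
    conv_lhs => rw [euc_eq_sum z]
    simp [mul_comm]
  rw [this]
  exact Finset.measurable_fun_sum _ fun k _ => (h _).smul_const _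

theorem integrable_covector_apply {n : ℕ} {ν : Measure (Euc n)} {v : Euc n → Euc n}
    (hv : Integrable v ν) {φ : Euc n → Euc n →L[ℝ] ℝ} (hφ : Measurable φ) {C : ℝ}
    (hC : ∀ q, ‖φ q‖ ≤ C) : Integrable (fun q => φ q (v q)) ν := by
  refine Integrable.mono' (hv.norm.const_mul C) ?_ (Eventually.of_forall fun q => ?_)
  · exact isBoundedBilinearMap_apply.continuous.comp_aestronglyMeasurable
      ((hφ.aestronglyMeasurable (μ := ν)).prodMk hv.aestronglyMeasurable)
  · exact ((φ q).le_opNorm _).trans (by gcongr; exact hC q)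

/-- By separability of `L¹`, there is a sequence of null fields that is dense among all null fields. -/
theorem exists_nullSeq {n : ℕ} (ν : Measure (Euc n)) [IsFiniteMeasure ν] (x : Euc n) (r : ℝ) :
    ∃ v : ℕ → Euc n → Euc n, (∀ i, Measurable (v i)) ∧ (∀ i, NullField ν x r (v i)) ∧
      ∀ w, NullField ν x r w → ∀ ε > 0, ∃ i, ∫ q, ‖w q - v i q‖ ∂ν < ε := by
  let N : Set (Lp (Euc n) 1 ν) := {f | NullField ν x r f}
  have h0 : (0 : Lp (Euc n) 1 ν) ∈ N := by
    refine ⟨L1.integrable_coeFn _, fun u _ _ => ?_⟩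
    rw [integral_congr_ae (g := fun _ => (0:ℝ))]
    · simp
    · filter_upwards [Lp.coeFn_zero (Euc n) 1 ν] with q hq
      rw [hq]; simp
  have hne : Nonempty N := ⟨⟨0, h0⟩⟩
  have hfact : Fact ((1:ℝ≥0∞) ≠ ⊤) := ⟨ENNReal.one_ne_top⟩
  obtain ⟨F, hF⟩ := TopologicalSpace.exists_dense_seq N
  refine ⟨fun i => ((F i : Lp (Euc n) 1 ν) : Euc n → Euc n),
    fun i => (Lp.stronglyMeasurable _).measurable, fun i => (F i).2, ?_⟩
  intro w hw ε hε
  let W : Lp (Euc n) 1 ν := hw.1.toL1 w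
  have hWw : W =ᵐ[ν] w := hw.1.coeFn_toL1
  have hW : W ∈ N := by
    refine ⟨L1.integrable_coeFn _, fun u hu hs => ?_⟩
    rw [← hw.2 u hu hs]
    refine integral_congr_ae ?_
    filter_upwards [hWw] with q hq
    rw [hq]
  obtain ⟨i, hi⟩ := hF.exists_dist_lt ⟨W, hW⟩ hε
  refine ⟨i, ?_⟩
  rw [Subtype.dist_eq, L1.dist_eq_integral_dist] at hi
  refine lt_of_eq_of_lt (integral_congr_ae ?_) hi
  filter_upwards [hWw] with q hq
  rw [dist_eq_norm, hq]

/-- Bounded covector fields that annihilate all null fields are `L^d`-limits of differentials of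
compactly supported functions. -/
theorem exists_approx_of_annihilates {n d : ℕ} (hd : 1 ≤ d) {ν : Measure (Euc n)}
    [IsFiniteMeasure ν] {x : Euc n} {r : ℝ} {φ : Euc n → Euc n →L[ℝ] ℝ} (hφm : Measurable φ)
    {C : ℝ} (hφC : ∀ q, ‖φ q‖ ≤ C)
    (hann : ∀ w, NullField ν x r w → ∫ q, φ q (w q) ∂ν = 0) {η : ℝ≥0∞} (hη : η ≠ 0) :
    ∃ u : Euc n → ℝ, ContDiff ℝ 1 u ∧ tsupport u ⊆ ball x r ∧
      ∫⁻ q, ‖fderiv ℝ u q - φ q‖ₑ ^ d ∂ν < η := by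
  have hfact : Fact (1 ≤ (d:ℝ≥0∞)) := ⟨by exact_mod_cast hd⟩
  have htop : (d:ℝ≥0∞) ≠ ⊤ := ENNReal.natCast_ne_top d
  have hmem : ∀ (ψ : Euc n → Euc n →L[ℝ] ℝ) (C : ℝ), Measurable ψ → (∀ q, ‖ψ q‖ ≤ C) →
      MemLp ψ d ν := fun ψ C h1 h2 =>
    MemLp.of_bound h1.aestronglyMeasurable C (Eventually.of_forall h2)
  have hDm : ∀ u : Euc n → ℝ, ContDiff ℝ 1 u → Measurable (fderiv ℝ u) := fun u hu =>
    (hu.continuous_fderiv one_ne_zero).measurable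
  have hDp : ∀ u : Euc n → ℝ, ContDiff ℝ 1 u → tsupport u ⊆ ball x r →
      MemLp (fderiv ℝ u) d ν := by
    intro u hu hs
    obtain ⟨C, hC⟩ := exists_fderiv_bound hu hs
    exact hmem _ C (hDm u hu) hC
  let G : Submodule ℝ (Lp (Euc n →L[ℝ] ℝ) d ν) :=
    { carrier := {f | ∃ u : Euc n → ℝ, ContDiff ℝ 1 u ∧ tsupport u ⊆ ball x r ∧
        f =ᵐ[ν] fderiv ℝ u}
      zero_mem' := by
        refine ⟨fun _ => 0, contDiff_const, ?_, ?_⟩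
        · have : tsupport (fun _ : Euc n => (0:ℝ)) = ∅ := by
            rw [tsupport_eq_empty_iff]; rfl
          rw [this]; exact empty_subset _
        · filter_upwards [Lp.coeFn_zero (Euc n →L[ℝ] ℝ) d ν] with q hq
          rw [hq]; simp
      add_mem' := by
        rintro f g ⟨u, hu, hus, hfu⟩ ⟨w, hw, hws, hgw⟩
        refine ⟨u + w, hu.add hw, ?_, ?_⟩
        · refine (closure_mono (Function.support_add u w)).trans ?_
          rw [closure_union]
          exact union_subset hus hws
        · filter_upwards [Lp.coeFn_add f g, hfu, hgw] with q h1 h2 h3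
          rw [h1, Pi.add_apply, h2, h3, fderiv_add (hu.differentiable one_ne_zero q)
            (hw.differentiable one_ne_zero q)]
      smul_mem' := by
        rintro c f ⟨u, hu, hus, hfu⟩
        refine ⟨c • u, hu.const_smul c, ?_, ?_⟩
        · refine (closure_mono ?_).trans hus
          exact Function.support_const_smul_subset c u
        · filter_upwards [Lp.coeFn_smul c f, hfu] with q h1 h2
          rw [h1, Pi.smul_apply, h2, fderiv_const_smul (hu.differentiable one_ne_zero q)] }
  have hφp : MemLp φ d ν := hmem φ C hφm hφC
  have hcl : hφp.toLp φ ∈ G.topologicalClosure := by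
    by_contra hnot
    obtain ⟨ℓ, c, h1, h2⟩ := geometric_hahn_banach_closed_point
      (s := (G.topologicalClosure : Set (Lp (Euc n →L[ℝ] ℝ) d ν)))
      (Submodule.convex _) G.isClosed_topologicalClosure hnot
    have hc : 0 < c := by simpa using h1 0 (zero_mem _)
    have hG0 : ∀ g ∈ G, ℓ g = 0 := by
      intro g hg
      by_contra hne
      have := h1 ((c / ℓ g) • g) (G.le_topologicalClosure (G.smul_mem _ hg))
      rw [map_smul, smul_eq_mul, div_mul_cancel₀ _ hne] at this
      exact lt_irrefl _ this
    obtain ⟨w, hw, hwr⟩ := exists_density htop ℓ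
    have hnull : NullField ν x r w := by
      refine ⟨hw, fun u hu hus => ?_⟩
      obtain ⟨C', hC'⟩ := exists_fderiv_bound hu hus
      rw [← hwr _ C' (hDm u hu) hC' (hDp u hu hus)]
      exact hG0 _ ⟨u, hu, hus, (hDp u hu hus).coeFn_toLp⟩
    have h3 := hwr φ C hφm hφC hφp
    rw [hann w hnull] at h3
    linarith
  have hη' : 0 < η ^ ((d:ℝ)⁻¹) := by
    have : (0:ℝ) < d := by exact_mod_cast hd
    rcases eq_or_ne η ⊤ with h | h
    · rw [h, ENNReal.top_rpow_of_pos (by positivity)]; simp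
    · exact ENNReal.rpow_pos (pos_iff_ne_zero.2 hη) h
  obtain ⟨g, ⟨u, hu, hus, hgu⟩, hg⟩ := EMetric.mem_closure_iff.1 hcl _ hη'
  refine ⟨u, hu, hus, ?_⟩
  have h4 : edist (hφp.toLp φ) g = eLpNorm (fun q => fderiv ℝ u q - φ q) d ν := by
    rw [edist_comm, Lp.edist_def]
    refine eLpNorm_congr_ae ?_
    filter_upwards [hgu, hφp.coeFn_toLp] with q h1 h2
    rw [Pi.sub_apply, h1, h2]
  have hd0 : (d:ℝ≥0∞) ≠ 0 := by
    have : d ≠ 0 := by omega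
    exact_mod_cast this
  rw [h4, eLpNorm_eq_lintegral_rpow_enorm_toReal hd0 htop, ENNReal.toReal_natCast, one_div,
    ENNReal.rpow_lt_rpow_iff (by positivity)] at hg
  simpa only [ENNReal.rpow_natCast] using hg

/-! ### The mass estimate -/

theorem local_lip_image {n : ℕ} (d : ℕ) {f : Euc n → Euc n} (hf : ContDiff ℝ 1 f) (q : Euc n) :
    ∃ t ∈ 𝓝 q, ∀ S, MeasurableSet S → S ⊆ t →
      μH[(d:ℝ)] (f '' S) ≤ ∫⁻ z in S, ENNReal.ofReal ((‖fderiv ℝ f z‖ + 1) ^ d) ∂μH[(d:ℝ)] := by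
  have hc := (hf.continuous_fderiv one_ne_zero).continuousAt (x := q)
  obtain ⟨ε, hε, hball⟩ := Metric.continuousAt_iff.1 hc (1 / 2) (by norm_num)
  refine ⟨ball q ε, ball_mem_nhds q hε, fun S hS hSt => ?_⟩
  have hb : ∀ z ∈ ball q ε, ‖fderiv ℝ f z - fderiv ℝ f q‖ < 1 / 2 := fun z hz => by
    have := hball hz
    rwa [dist_eq_norm] at this
  have hL : LipschitzOnWith (Real.toNNReal (‖fderiv ℝ f q‖ + 1 / 2)) f S := by
    refine LipschitzOnWith.mono (t := ball q ε) ?_ hSt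
    refine (convex_ball q ε).lipschitzOnWith_of_nnnorm_fderiv_le
      (fun z _ => hf.differentiable one_ne_zero z) fun z hz => ?_
    rw [← NNReal.coe_le_coe, Real.coe_toNNReal _ (by positivity), coe_nnnorm]
    have := norm_le_norm_add_norm_sub' (fderiv ℝ f z) (fderiv ℝ f q)
    linarith [hb z hz]
  refine lipschitz_image_le_lintegral hL hS fun z hz => ?_
  rw [← ENNReal.ofReal_coe_nnreal, ← ENNReal.ofReal_pow (NNReal.coe_nonneg _)]
  refine ENNReal.ofReal_le_ofReal ?_
  have h1 := norm_le_norm_add_norm_sub (fderiv ℝ f z) (fderiv ℝ f q)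
  have h2 := hb z (hSt hz)
  refine pow_le_pow_left₀ (NNReal.coe_nonneg _) ?_ d
  rw [Real.coe_toNNReal _ (by positivity)]
  linarith

/-- A `C¹` map whose derivative at `q` is within `1 / m` of a projection of rank less than `d` shrinks
`μH[d]` by a factor of order `1 / m` near `q`. -/
theorem local_kill {n d : ℕ} (hd : 1 ≤ d) {f : Euc n → Euc n} (hf : ContDiff ℝ 1 f) (q : Euc n)
    (V : Submodule ℝ (Euc n)) (hV : Module.finrank ℝ V < d) {m : ℕ} (hm : 1 ≤ m)
    (hq : ‖fderiv ℝ f q - V.starProjection‖ ≤ 1 / m) :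
    ∃ t ∈ 𝓝 q, ∀ S ⊆ t, μH[(d:ℝ)] S ≠ ⊤ →
      μH[(d:ℝ)] (f '' S) ≤ ENNReal.ofReal ((3 * (d + 2)) ^ d / m) * μH[(d:ℝ)] S := by
  have hm0 : (0:ℝ) < m := by exact_mod_cast hm
  have hc := (hf.continuous_fderiv one_ne_zero).continuousAt (x := q)
  obtain ⟨ε, hε, hball⟩ := Metric.continuousAt_iff.1 hc (1 / m) (by positivity)
  refine ⟨ball q ε, ball_mem_nhds q hε, fun S hSt hS => ?_⟩
  refine kill_image hd V hV hm hS fun p hp z hz => ?_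
  refine (convex_ball q ε).norm_image_sub_le_of_norm_fderiv_le' (𝕜 := ℝ)
    (fun z _ => hf.differentiable one_ne_zero z) (fun y hy => ?_) (hSt hz) (hSt hp)
  have h1 := hball hy
  rw [dist_eq_norm] at h1
  calc ‖fderiv ℝ f y - V.starProjection‖
      ≤ ‖fderiv ℝ f y - fderiv ℝ f q‖ + ‖fderiv ℝ f q - V.starProjection‖ := norm_sub_le_norm_sub_add_norm_sub _ _ _
    _ ≤ 1 / m + 1 / m := by linarith
    _ = 2 / m := by ring

/-- The covector `e_k - P e_k`, where `P` is the projection onto the span of the fields `v`, on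
the set where this span has dimension less than `d`; zero elsewhere. -/
def cofield {n : ℕ} (d : ℕ) (v : ℕ → Euc n → Euc n) (k : Fin n) (q : Euc n) : Euc n →L[ℝ] ℝ :=
  {y | Module.finrank ℝ (fieldSpan v y) < d}.indicator (fun y =>
    innerSL ℝ (EuclideanSpace.single k (1:ℝ) -
      (fieldSpan v y).starProjection (EuclideanSpace.single k (1:ℝ)))) q

theorem cofield_measurable {n d : ℕ} {v : ℕ → Euc n → Euc n} (hv : ∀ i, Measurable (v i))
    (k : Fin n) : Measurable (cofield d v k) := by
  refine Measurable.indicator ?_ (measurableSet_fieldSpan hv d)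
  exact (innerSL ℝ).continuous.measurable.comp
    (measurable_const.sub (measurable_fieldSpan_proj hv _))

theorem cofield_bound {n d : ℕ} (v : ℕ → Euc n → Euc n) (k : Fin n) (q : Euc n) :
    ‖cofield d v k q‖ ≤ 2 := by
  rw [cofield]
  refine (norm_indicator_le_norm_self _ _).trans ?_
  rw [innerSL_apply_norm]
  refine (norm_sub_le _ _).trans ?_
  have := (fieldSpan v q).norm_starProjection_apply_le (EuclideanSpace.single k (1:ℝ))
  simp at this ⊢
  linarith

/-- The covectors `cofield d v k` vanish on the dense sequence `v` of null fields, hence, by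
approximation, annihilate every null field after integration. -/
theorem cofield_annihilates {n d : ℕ} {ν : Measure (Euc n)} [IsFiniteMeasure ν] {x : Euc n} {r : ℝ}
    {v : ℕ → Euc n → Euc n} (hv : ∀ i, Measurable (v i)) (hvN : ∀ i, NullField ν x r (v i))
    (hdense : ∀ w, NullField ν x r w → ∀ ε > 0, ∃ i, ∫ q, ‖w q - v i q‖ ∂ν < ε) (k : Fin n)
    {w : Euc n → Euc n} (hw : NullField ν x r w) : ∫ q, cofield d v k q (w q) ∂ν = 0 := by
  have h0 : ∀ i q, cofield d v k q (v i q) = 0 := by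
    intro i q
    rw [cofield]
    by_cases hq : q ∈ {y | Module.finrank ℝ (fieldSpan v y) < d}
    · rw [indicator_of_mem hq, innerSL_apply_apply]
      exact Submodule.starProjection_inner_eq_zero _ _ (Submodule.subset_span (mem_range_self i))
    · rw [indicator_of_notMem hq]; simp
  rw [← abs_nonpos_iff]
  refine le_of_forall_pos_le_add fun ε hε => ?_
  obtain ⟨i, hi⟩ := hdense w hw (ε / 2) (by positivity)
  have hintg := (hw.1.sub (hvN i).1)
  have h1 : ∫ q, cofield d v k q (w q) ∂ν = ∫ q, cofield d v k q (w q - v i q) ∂ν := by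
    congr 1; ext q; rw [map_sub, h0, sub_zero]
  rw [h1]
  calc |∫ q, cofield d v k q (w q - v i q) ∂ν| ≤ ∫ q, |cofield d v k q (w q - v i q)| ∂ν :=
        abs_integral_le_integral_abs
    _ ≤ ∫ q, 2 * ‖w q - v i q‖ ∂ν := by
        refine integral_mono (integrable_covector_apply hintg (cofield_measurable hv k)
          (cofield_bound v k)).abs (hintg.norm.const_mul 2) fun q => ?_
        exact ((cofield d v k q).le_opNorm _).trans (by
          gcongr; exact cofield_bound v k q)
    _ = 2 * ∫ q, ‖w q - v i q‖ ∂ν := integral_const_mul _ _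
    _ ≤ 0 + ε := by linarith

/-- The identity minus the projection onto `V`, recovered from its coordinates. -/
theorem sum_proj_eq {n : ℕ} (V : Submodule ℝ (Euc n)) (w : Euc n) :
    ∑ k, ⟪EuclideanSpace.single k (1:ℝ) - V.starProjection (EuclideanSpace.single k (1:ℝ)), w⟫_ℝ •
      EuclideanSpace.single k (1:ℝ) = w - V.starProjection w := by
  conv_rhs => rw [euc_eq_sum (w - V.starProjection w)]
  refine Finset.sum_congr rfl fun k _ => ?_
  congr 1
  rw [inner_sub_left, Submodule.inner_starProjection_left_eq_right, ← inner_sub_right,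
    EuclideanSpace.inner_single_left]
  simp

theorem pow_sum_enorm_le {n d : ℕ} (hd : 1 ≤ d) (a : Fin n → ℝ≥0∞) :
    (∑ k, a k) ^ d ≤ ((n:ℝ≥0∞) + 1) ^ d * ∑ k, a k ^ d := by
  rcases isEmpty_or_nonempty (Fin n) with hn | hn
  · simp only [Finset.univ_eq_empty, Finset.sum_empty]
    simp [zero_pow (show d ≠ 0 by omega)]
  · obtain ⟨j, hj⟩ := Finite.exists_max a
    calc (∑ k, a k) ^ d ≤ (∑ _k : Fin n, a j) ^ d := by gcongr with k; exact hj k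
      _ = (n:ℝ≥0∞) ^ d * a j ^ d := by simp [mul_pow]
      _ ≤ _ := by
        gcongr
        · exact le_self_add
        · exact Finset.single_le_sum (f := fun k => a k ^ d) (fun k _ => bot_le) (Finset.mem_univ j)

/-- The map `q ↦ q - ∑ u_k(q) e_k`. -/
def perturb {n : ℕ} (u : Fin n → Euc n → ℝ) (q : Euc n) : Euc n :=
  q - ∑ k, u k q • EuclideanSpace.single k (1:ℝ)

theorem perturb_contDiff {n : ℕ} {u : Fin n → Euc n → ℝ} (hu : ∀ k, ContDiff ℝ 1 (u k)) :
    ContDiff ℝ 1 (perturb u) := by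
  unfold perturb
  exact contDiff_id.sub (ContDiff.sum fun k _ => (hu k).smul contDiff_const)

theorem perturb_fderiv {n : ℕ} {u : Fin n → Euc n → ℝ} (hu : ∀ k, ContDiff ℝ 1 (u k)) (q : Euc n) :
    fderiv ℝ (perturb u) q = ContinuousLinearMap.id ℝ (Euc n) -
      ∑ k, (fderiv ℝ (u k) q).smulRight (EuclideanSpace.single k (1:ℝ)) := by
  have : HasFDerivAt (perturb u) (ContinuousLinearMap.id ℝ (Euc n) -
      ∑ k, (fderiv ℝ (u k) q).smulRight (EuclideanSpace.single k (1:ℝ))) q := by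
    unfold perturb
    refine (hasFDerivAt_id q).sub (HasFDerivAt.fun_sum fun k _ => ?_)
    exact ((hu k).differentiable one_ne_zero q).hasFDerivAt.smul_const _
  exact this.fderiv

theorem smulRight_single_norm {n : ℕ} (φ : Euc n →L[ℝ] ℝ) (k : Fin n) :
    ‖φ.smulRight (EuclideanSpace.single k (1:ℝ))‖ = ‖φ‖ := by
  rw [ContinuousLinearMap.norm_smulRight_apply]; simp

/-- On the degenerate set the derivative of the perturbed identity is close to the projection onto
the span of the fields; elsewhere it is close to the identity. -/
theorem perturb_near {n d : ℕ} {u : Fin n → Euc n → ℝ} (hu : ∀ k, ContDiff ℝ 1 (u k))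
    (v : ℕ → Euc n → Euc n) (q : Euc n) :
    (Module.finrank ℝ (fieldSpan v q) < d →
      ‖fderiv ℝ (perturb u) q - (fieldSpan v q).starProjection‖ ≤
        ∑ k, ‖fderiv ℝ (u k) q - cofield d v k q‖) ∧
    ‖fderiv ℝ (perturb u) q‖ ≤ 1 + ∑ k, ‖fderiv ℝ (u k) q - cofield d v k q‖ := by
  have hkey : ∀ T : Euc n →L[ℝ] Euc n,
      T = ContinuousLinearMap.id ℝ (Euc n) -
        ∑ k, (cofield d v k q).smulRight (EuclideanSpace.single k (1:ℝ)) →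
      ‖fderiv ℝ (perturb u) q - T‖ ≤ ∑ k, ‖fderiv ℝ (u k) q - cofield d v k q‖ := by
    rintro T rfl
    rw [perturb_fderiv hu, sub_sub_sub_cancel_left, ← Finset.sum_sub_distrib]
    refine (norm_sum_le _ _).trans (Finset.sum_le_sum fun k _ => ?_)
    have : (cofield d v k q).smulRight (EuclideanSpace.single k (1:ℝ)) -
        (fderiv ℝ (u k) q).smulRight (EuclideanSpace.single k (1:ℝ)) =
        (cofield d v k q - fderiv ℝ (u k) q).smulRight (EuclideanSpace.single k (1:ℝ)) := by
      ext1 w; simp [sub_smul]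
    rw [this, smulRight_single_norm, norm_sub_rev]
  have hP : Module.finrank ℝ (fieldSpan v q) < d →
      (fieldSpan v q).starProjection = ContinuousLinearMap.id ℝ (Euc n) -
        ∑ k, (cofield d v k q).smulRight (EuclideanSpace.single k (1:ℝ)) := by
    intro hq
    ext1 w
    have hc : ∀ k, cofield d v k q w = ⟪EuclideanSpace.single k (1:ℝ) -
        (fieldSpan v q).starProjection (EuclideanSpace.single k (1:ℝ)), w⟫_ℝ := by
      intro k
      rw [cofield, indicator_of_mem (show q ∈ {y | Module.finrank ℝ (fieldSpan v y) < d} from hq),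
        innerSL_apply_apply]
    have hs := sum_proj_eq (fieldSpan v q) w
    simp only [sub_apply, ContinuousLinearMap.id_apply,
      sum_apply, ContinuousLinearMap.smulRight_apply, hc]
    rw [hs]; abel
  refine ⟨fun hq => hkey _ (hP hq), ?_⟩
  by_cases hq : Module.finrank ℝ (fieldSpan v q) < d
  · have h1 := hkey _ (hP hq)
    have h2 : ‖(fieldSpan v q).starProjection‖ ≤ 1 := by
      refine ContinuousLinearMap.opNorm_le_bound _ zero_le_one fun w => ?_
      rw [one_mul]; exact (fieldSpan v q).norm_starProjection_apply_le w
    have h3 := norm_le_norm_add_norm_sub' (fderiv ℝ (perturb u) q) (fieldSpan v q).starProjection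
    linarith
  · have h1 := hkey (ContinuousLinearMap.id ℝ (Euc n)) (by
      have hc : ∀ k, cofield d v k q = 0 := by
        intro k
        rw [cofield, indicator_of_notMem (show q ∉ {y | Module.finrank ℝ (fieldSpan v y) < d} from hq)]
      ext1 w; simp [hc])
    have h2 : ‖ContinuousLinearMap.id ℝ (Euc n)‖ ≤ 1 := ContinuousLinearMap.norm_id_le
    have h3 := norm_le_norm_add_norm_sub' (fderiv ℝ (perturb u) q) (ContinuousLinearMap.id ℝ (Euc n))
    linarith

/-- Comparison of `E` with its image under `perturb u`. The four terms are the contributions of the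
degenerate points where the derivative is close to the projection, of the nondegenerate points where
it is close to the identity, of the points where the differentials of `u` are far from `cofield`
(bounded by Chebyshev's inequality), and of the gauge. -/
theorem mass_step {n d : ℕ} (hd : 1 ≤ d) {U E : Set (Euc n)} {h : ℝ → ℝ≥0∞} (hU : IsOpen U)
    (hE : IsAAlmostMinimal n d U E h) {x : Euc n} {r δ : ℝ} (hr : 0 < r)
    (hB : closedBall x r ⊆ U) (hδ : 2 * r < δ) {v : ℕ → Euc n → Euc n}
    (hv : ∀ i, Measurable (v i)) {u : Fin n → Euc n → ℝ} (hu : ∀ k, ContDiff ℝ 1 (u k))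
    (hus : ∀ k, tsupport (u k) ⊆ ball x r) {m : ℕ} (hm : 1 ≤ m) :
    μH[(d:ℝ)] (E ∩ ball x r) ≤
      ENNReal.ofReal ((3 * (d + 2)) ^ d / m) * μH[(d:ℝ)] (E ∩ ball x r) +
      ENNReal.ofReal (3 ^ d) *
        μH[(d:ℝ)] ((E ∩ ball x r) \ {y | Module.finrank ℝ (fieldSpan v y) < d}) +
      ENNReal.ofReal ((1 + 2 * m) ^ d) * (((n:ℝ≥0∞) + 1) ^ d *
        ∑ k, ∫⁻ q in E ∩ ball x r, ‖fderiv ℝ (u k) q - cofield d v k q‖ₑ ^ d ∂μH[(d:ℝ)]) +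
      h δ * ENNReal.ofReal (δ ^ d) := by
  have hm0 : (1:ℝ) ≤ m := by exact_mod_cast hm
  have hEm := hE.measurableSet hU
  have hBm : MeasurableSet (E ∩ ball x r) := hEm.inter measurableSet_ball
  have hfin : μH[(d:ℝ)] (E ∩ ball x r) ≠ ⊤ :=
    ((measure_mono (inter_subset_inter_right _ ball_subset_closedBall)).trans_lt
      (hE.2.2.1 x r hB)).ne
  set A : Set (Euc n) := {y | Module.finrank ℝ (fieldSpan v y) < d} with hA
  have hAm : MeasurableSet A := measurableSet_fieldSpan hv d
  set f := perturb u with hf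
  have hfc : ContDiff ℝ 1 f := perturb_contDiff hu
  set D : Euc n → ℝ := fun q => ∑ k, ‖fderiv ℝ (u k) q - cofield d v k q‖ with hD
  have hgm : ∀ k, Measurable fun q => fderiv ℝ (u k) q - cofield d v k q := fun k =>
    ((hu k).continuous_fderiv one_ne_zero).measurable.sub (cofield_measurable hv k)
  have hDm : Measurable D := Finset.measurable_sum _ fun k _ => (hgm k).norm
  have hD0 : ∀ q, 0 ≤ D q := fun q => Finset.sum_nonneg fun k _ => norm_nonneg _
  set G : Set (Euc n) := {q | D q ≤ 1 / m} with hG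
  have hGm : MeasurableSet G := measurableSet_le hDm measurable_const
  classical
  set κ : Euc n → ℝ≥0∞ := fun q => if q ∈ A ∩ G then ENNReal.ofReal ((3 * (d + 2)) ^ d / m)
    else ENNReal.ofReal ((‖fderiv ℝ f q‖ + 1) ^ d) with hκ
  -- `f` is globally Lipschitz, its derivative being bounded.
  obtain ⟨K, hK⟩ : ∃ K : ℝ≥0, LipschitzWith K f := by
    choose C hC using fun k => exists_fderiv_bound (hu k) (hus k)
    refine ⟨Real.toNNReal (1 + ∑ k, C k), lipschitzWith_of_nnnorm_fderiv_le
      (hfc.differentiable one_ne_zero) fun q => ?_⟩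
    have hC0 : ∀ k, 0 ≤ C k := fun k => (norm_nonneg _).trans (hC k q)
    rw [← NNReal.coe_le_coe, coe_nnnorm,
      Real.coe_toNNReal _ (add_nonneg zero_le_one (Finset.sum_nonneg fun k _ => hC0 k)),
      hf, perturb_fderiv hu]
    refine (norm_sub_le _ _).trans (add_le_add ContinuousLinearMap.norm_id_le ?_)
    refine (norm_sum_le _ _).trans (Finset.sum_le_sum fun k _ => ?_)
    rw [smulRight_single_norm]; exact hC k q
  have hid : ∀ q, q ∉ ball x r → f q = q := by
    intro q hq
    have : ∀ k, u k q = 0 := fun k => by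
      by_contra h0
      exact hq (hus k (subset_tsupport _ h0))
    simp [hf, perturb, this]
  have hcomp := competitor hU hE hr hB hδ hK hid κ (by
    intro S hSm hS
    refine image_measure_le_of_split (F := E ∩ ball x r) (hAm.inter hGm) ?_ ?_ hSm hS
    · intro S hSm hS
      refine image_measure_le_of_local (F := (E ∩ ball x r) ∩ (A ∩ G)) ?_ hSm hS
      intro y hy
      obtain ⟨t, ht, ht2⟩ := local_kill hd hfc y (fieldSpan v y) hy.2.1 hm
        (((perturb_near hu v y).1 hy.2.1).trans hy.2.2)
      refine ⟨t, ht, fun S hSm hS => ?_⟩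
      have hS2 : S ⊆ E ∩ ball x r := fun q hq => (hS hq).1.1
      refine (ht2 S (fun q hq => (hS hq).2) (measure_ne_top_of_subset hS2 hfin)).trans ?_
      rw [← setLIntegral_const]
      refine setLIntegral_mono' hSm fun q hq => ?_
      simp only [hκ]
      rw [if_pos (hS hq).1.2]
    · intro S hSm hS
      refine image_measure_le_of_local (F := (E ∩ ball x r) \ (A ∩ G)) ?_ hSm hS
      intro y hy
      obtain ⟨t, ht, ht2⟩ := local_lip_image d hfc y
      refine ⟨t, ht, fun S hSm hS => ?_⟩
      refine (ht2 S hSm (fun q hq => (hS hq).2)).trans ?_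
      refine setLIntegral_mono' hSm fun q hq => ?_
      simp only [hκ]
      rw [if_neg (hS hq).1.2])
  refine hcomp.trans (add_le_add ?_ le_rfl)
  have hpt : ∀ q, κ q ≤ (ENNReal.ofReal ((3 * (d + 2)) ^ d / m) +
      Aᶜ.indicator (fun _ => ENNReal.ofReal (3 ^ d)) q) +
      ENNReal.ofReal ((1 + 2 * m) ^ d) * (((n:ℝ≥0∞) + 1) ^ d *
        ∑ k, ‖fderiv ℝ (u k) q - cofield d v k q‖ₑ ^ d) := by
    intro q
    simp only [hκ]
    have hn := (perturb_near (d := d) hu v q).2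
    have hnD : ‖fderiv ℝ f q‖ ≤ 1 + D q := hn
    by_cases hq : q ∈ A ∩ G
    · rw [if_pos hq, add_assoc]; exact le_self_add
    · rw [if_neg hq]
      by_cases hqG : q ∈ G
      · have hqA : q ∈ Aᶜ := fun h1 => hq ⟨h1, hqG⟩
        rw [indicator_of_mem hqA]
        refine le_trans ?_ (le_add_right le_add_self)
        refine ENNReal.ofReal_le_ofReal (pow_le_pow_left₀ (by positivity) ?_ d)
        have : D q ≤ 1 / m := hqG
        have h2 : (1:ℝ) / m ≤ 1 := by rw [div_le_one (by linarith)]; exact hm0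
        linarith
      · refine le_trans ?_ le_add_self
        have hq1 : 1 / m < D q := not_le.1 hqG
        have h2 : 1 ≤ m * D q := by
          rw [div_lt_iff₀ (by linarith)] at hq1; linarith
        have h3 : ‖fderiv ℝ f q‖ + 1 ≤ (1 + 2 * m) * D q := by nlinarith
        calc ENNReal.ofReal ((‖fderiv ℝ f q‖ + 1) ^ d) ≤ ENNReal.ofReal (((1 + 2 * m) * D q) ^ d) :=
              ENNReal.ofReal_le_ofReal (pow_le_pow_left₀ (by positivity) h3 d)
          _ = ENNReal.ofReal ((1 + 2 * m) ^ d) *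
              (∑ k, ‖fderiv ℝ (u k) q - cofield d v k q‖ₑ) ^ d := by
              rw [mul_pow, ENNReal.ofReal_mul (by positivity), ENNReal.ofReal_pow (hD0 q)]
              congr 2
              simp only [hD]
              rw [ENNReal.ofReal_sum_of_nonneg fun k _ => norm_nonneg _]
              simp only [ofReal_norm]
          _ ≤ _ := by gcongr; exact pow_sum_enorm_le hd _
  have hm3 : Measurable fun q => ∑ k, ‖fderiv ℝ (u k) q - cofield d v k q‖ₑ ^ d :=
    Finset.measurable_sum _ fun k _ => (hgm k).enorm.pow_const d
  calc ∫⁻ q in E ∩ ball x r, κ q ∂μH[(d:ℝ)]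
      ≤ ∫⁻ q in E ∩ ball x r, ((ENNReal.ofReal ((3 * (d + 2)) ^ d / m) +
      Aᶜ.indicator (fun _ => ENNReal.ofReal (3 ^ d)) q) +
      ENNReal.ofReal ((1 + 2 * m) ^ d) * (((n:ℝ≥0∞) + 1) ^ d *
        ∑ k, ‖fderiv ℝ (u k) q - cofield d v k q‖ₑ ^ d)) ∂μH[(d:ℝ)] :=
        lintegral_mono hpt
    _ = _ := by
      rw [lintegral_add_right _ ((hm3.const_mul _).const_mul _),
        lintegral_add_left measurable_const, lintegral_const, lintegral_indicator_const hAm.compl,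
        lintegral_const_mul _ (hm3.const_mul _), lintegral_const_mul _ hm3,
        lintegral_finsetSum _ fun k _ => (hgm k).enorm.pow_const d,
        Measure.restrict_apply_univ, Measure.restrict_apply hAm.compl, inter_comm Aᶜ]
      rfl

/-- Almost minimality bounds the mass of `E` in a ball by the mass of the part where the null
fields span at least `d` directions. -/
theorem mass_estimate {n d : ℕ} (hd : 1 ≤ d) {U E : Set (Euc n)} {h : ℝ → ℝ≥0∞} (hU : IsOpen U)
    (hE : IsAAlmostMinimal n d U E h) {x : Euc n} {r δ : ℝ} (hr : 0 < r)
    (hB : closedBall x r ⊆ U) (hδ : 2 * r < δ) {v : ℕ → Euc n → Euc n}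
    (hv : ∀ i, Measurable (v i))
    (hvN : ∀ i, NullField (μH[(d:ℝ)].restrict (E ∩ ball x r)) x r (v i))
    (hdense : ∀ w, NullField (μH[(d:ℝ)].restrict (E ∩ ball x r)) x r w → ∀ ε > 0,
      ∃ i, ∫ q, ‖w q - v i q‖ ∂(μH[(d:ℝ)].restrict (E ∩ ball x r)) < ε) :
    μH[(d:ℝ)] (E ∩ ball x r) ≤ ENNReal.ofReal (3 ^ d) *
        μH[(d:ℝ)] ((E ∩ ball x r) \ {y | Module.finrank ℝ (fieldSpan v y) < d}) +
      h δ * ENNReal.ofReal (δ ^ d) := by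
  have hfin : μH[(d:ℝ)] (E ∩ ball x r) < ⊤ :=
    (measure_mono (inter_subset_inter_right _ ball_subset_closedBall)).trans_lt
      (hE.2.2.1 x r hB)
  have hνf : IsFiniteMeasure (μH[(d:ℝ)].restrict (E ∩ ball x r)) :=
    ⟨by rwa [Measure.restrict_apply_univ]⟩
  set X := ENNReal.ofReal (3 ^ d) *
        μH[(d:ℝ)] ((E ∩ ball x r) \ {y | Module.finrank ℝ (fieldSpan v y) < d}) with hX
  set μ0 := μH[(d:ℝ)] (E ∩ ball x r) with hμ0
  have hstep : ∀ m : ℕ, 1 ≤ m → μ0 ≤ (X + h δ * ENNReal.ofReal (δ ^ d)) +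
      (ENNReal.ofReal ((3 * (d + 2)) ^ d / m) * μ0 + ENNReal.ofReal (1 / m)) := by
    intro m hm
    have hm0 : (1:ℝ) ≤ m := by exact_mod_cast hm
    set η := ENNReal.ofReal (1 / (m * ((1 + 2 * m) ^ d * ((n + 1) ^ d * (n + 1))))) with hη
    have hη0 : η ≠ 0 := by
      rw [hη, ← pos_iff_ne_zero, ENNReal.ofReal_pos]; positivity
    choose u hu hus hun using fun k : Fin n => exists_approx_of_annihilates hd
      (cofield_measurable (d := d) hv k) (cofield_bound v k)
      (fun w hw => cofield_annihilates hv hvN hdense k hw) hη0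
    refine (mass_step hd hU hE hr hB hδ hv hu hus hm).trans ?_
    have hs : ENNReal.ofReal ((1 + 2 * m) ^ d) * (((n:ℝ≥0∞) + 1) ^ d *
        ∑ k, ∫⁻ q in E ∩ ball x r, ‖fderiv ℝ (u k) q - cofield d v k q‖ₑ ^ d ∂μH[(d:ℝ)]) ≤
        ENNReal.ofReal (1 / m) := by
      calc _ ≤ ENNReal.ofReal ((1 + 2 * m) ^ d) * (((n:ℝ≥0∞) + 1) ^ d * ((n + 1) * η)) := by
            gcongr
            calc _ ≤ ∑ _k : Fin n, η := Finset.sum_le_sum fun k _ => (hun k).le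
              _ = n * η := by simp
              _ ≤ _ := by gcongr; exact le_self_add
        _ = ENNReal.ofReal (1 / m) := by
          have h1 : (n:ℝ≥0∞) + 1 = ENNReal.ofReal (n + 1) := by
            rw [ENNReal.ofReal_add (by positivity) zero_le_one]; simp
          rw [h1, hη, ← ENNReal.ofReal_pow (by positivity), ← ENNReal.ofReal_mul (by positivity),
            ← ENNReal.ofReal_mul (by positivity), ← ENNReal.ofReal_mul (by positivity)]
          congr 1
          field_simp
    calc _ ≤ ENNReal.ofReal ((3 * (d + 2)) ^ d / m) * μ0 + X + ENNReal.ofReal (1 / m) +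
          h δ * ENNReal.ofReal (δ ^ d) := by gcongr
      _ = _ := by ring
  have hlim : Tendsto (fun m : ℕ => (X + h δ * ENNReal.ofReal (δ ^ d)) +
      (ENNReal.ofReal ((3 * (d + 2)) ^ d / m) * μ0 + ENNReal.ofReal (1 / m))) atTop
      (𝓝 ((X + h δ * ENNReal.ofReal (δ ^ d)) + (0 * μ0 + 0))) := by
    refine tendsto_const_nhds.add (Tendsto.add ?_ ?_)
    · refine ENNReal.Tendsto.mul_const ?_ (Or.inr hfin.ne)
      rw [← ENNReal.ofReal_zero]
      exact ENNReal.tendsto_ofReal (tendsto_const_div_atTop_nhds_zero_nat _)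
    · rw [← ENNReal.ofReal_zero]
      exact ENNReal.tendsto_ofReal (tendsto_const_div_atTop_nhds_zero_nat _)
  have := ge_of_tendsto hlim (eventually_atTop.2 ⟨1, hstep⟩)
  simpa using this

/-! ### Invariant directions almost everywhere -/

theorem exists_submodule_finrank_eq {n d : ℕ} (V : Submodule ℝ (Euc n))
    (hV : d ≤ Module.finrank ℝ V) : ∃ W ≤ V, Module.finrank ℝ W = d := by
  set b := Module.finBasis ℝ V
  set c : Fin d → Euc n := fun i => (b (Fin.castLE hV i) : Euc n) with hc
  have hli : LinearIndependent ℝ c := by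
    have h1 : LinearIndependent ℝ (fun i => (b i : Euc n)) :=
      b.linearIndependent.map' V.subtype (Submodule.ker_subtype V)
    exact h1.comp _ (Fin.castLE_injective hV)
  refine ⟨Submodule.span ℝ (range c), ?_, ?_⟩
  · rw [Submodule.span_le]; rintro _ ⟨i, rfl⟩; exact (b _).2
  · rw [finrank_span_eq_card hli, Fintype.card_fin]

theorem dirAt_integrable {n d : ℕ} {E : Set (Euc n)} {y : Euc n} {ρ : ℝ}
    (hfin : μH[(d:ℝ)] (E ∩ ball y ρ) < ⊤) {u : Euc n → ℝ} (hu : ContDiff ℝ 1 u) {L : ℝ}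
    (hL : ∀ q, ‖fderiv ℝ u q‖ ≤ L) (w : Euc n) :
    Integrable (fun q => fderiv ℝ u q w) (μH[(d:ℝ)].restrict (E ∩ ball y ρ)) := by
  have hνf : IsFiniteMeasure (μH[(d:ℝ)].restrict (E ∩ ball y ρ)) :=
    ⟨by rwa [Measure.restrict_apply_univ]⟩
  exact integrable_covector_apply (integrable_const w)
    (hu.continuous_fderiv one_ne_zero).measurable hL

/-- Asymptotically invariant directions form a linear subspace. -/
theorem dirAt_span {n d : ℕ} {E : Set (Euc n)} {y : Euc n} {ρ₁ : ℝ} (hρ₁ : 0 < ρ₁)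
    (hfin : ∀ ρ < ρ₁, μH[(d:ℝ)] (E ∩ ball y ρ) < ⊤) {T : Set (Euc n)}
    (hT : ∀ w ∈ T, DirAt d E y w) : ∀ w ∈ Submodule.span ℝ T, DirAt d E y w := by
  intro w hw
  induction hw using Submodule.span_induction with
  | mem w hw => exact hT w hw
  | zero =>
    intro ε hε
    refine ⟨1, one_pos, fun ρ h0 _ u _ _ L hL _ => ?_⟩
    simp; positivity
  | add a b _ _ ha hb =>
    intro ε hε
    obtain ⟨r1, h1, h1'⟩ := ha (ε / 2) (by positivity)
    obtain ⟨r2, h2, h2'⟩ := hb (ε / 2) (by positivity)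
    refine ⟨min ρ₁ (min r1 r2), lt_min hρ₁ (lt_min h1 h2), fun ρ h0 hρ u hu hs L hL hL' => ?_⟩
    simp only [lt_min_iff] at hρ
    have e1 := h1' ρ h0 hρ.2.1 u hu hs L hL hL'
    have e2 := h2' ρ h0 hρ.2.2 u hu hs L hL hL'
    simp only [map_add]
    rw [integral_add (dirAt_integrable (hfin ρ hρ.1) hu hL' a)
      (dirAt_integrable (hfin ρ hρ.1) hu hL' b)]
    refine (abs_add_le _ _).trans ?_
    linarith
  | smul c a _ ha =>
    intro ε hε
    obtain ⟨r1, h1, h1'⟩ := ha (ε / (|c| + 1)) (by positivity)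
    refine ⟨r1, h1, fun ρ h0 hρ u hu hs L hL hL' => ?_⟩
    have e1 := h1' ρ h0 hρ u hu hs L hL hL'
    simp only [map_smul, smul_eq_mul]
    rw [integral_const_mul, abs_mul]
    calc |c| * |∫ q in E ∩ ball y ρ, fderiv ℝ u q a ∂μH[(d:ℝ)]|
        ≤ |c| * (ε / (|c| + 1) * L * ρ ^ d) := by gcongr
      _ = (|c| / (|c| + 1)) * (ε * L * ρ ^ d) := by ring
      _ ≤ 1 * (ε * L * ρ ^ d) := by
        gcongr
        rw [div_le_one (by positivity)]; linarith
      _ = _ := one_mul _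

/-- The value of a null field at a Lebesgue point is an asymptotically invariant direction. -/
theorem dirAt_of_lebesgue {n d : ℕ} {E : Set (Euc n)} {z : Euc n} {r : ℝ}
    (hfin : μH[(d:ℝ)] (E ∩ ball z r) < ⊤) {v : Euc n → Euc n}
    (hv : NullField (μH[(d:ℝ)].restrict (E ∩ ball z r)) z r v) {y : Euc n} (hy : y ∈ ball z r)
    (hup : ∃ C ρ₀ : ℝ, 0 < C ∧ 0 < ρ₀ ∧ ∀ ρ, 0 < ρ → ρ < ρ₀ →
      (μH[(d:ℝ)].restrict (E ∩ ball z r)) (closedBall y ρ) ≤ ENNReal.ofReal (C * ρ ^ d))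
    (hleb : Tendsto (fun ρ => ⨍ q in closedBall y ρ, ‖v q - v y‖ ∂(μH[(d:ℝ)].restrict (E ∩ ball z r)))
      (𝓝[>] 0) (𝓝 0)) : DirAt d E y (v y) := by
  set ν := μH[(d:ℝ)].restrict (E ∩ ball z r) with hν
  have hνf : IsFiniteMeasure ν := ⟨by rwa [hν, Measure.restrict_apply_univ]⟩
  obtain ⟨C, ρ₀, hC, hρ₀, hup⟩ := hup
  intro ε hε
  obtain ⟨ρ₁, hρ₁, hball⟩ := Metric.isOpen_iff.1 isOpen_ball y hy
  have h1 := hleb.eventually (gt_mem_nhds (show 0 < ε / C by positivity))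
  obtain ⟨ρ₂, hρ₂, h2⟩ := mem_nhdsGT_iff_exists_Ioo_subset.1 h1
  have hρ₂' : 0 < ρ₂ := hρ₂
  refine ⟨min ρ₀ (min ρ₁ ρ₂), lt_min hρ₀ (lt_min hρ₁ hρ₂'), fun ρ h0 hρ u hu hs L hL hL' => ?_⟩
  simp only [lt_min_iff] at hρ
  have hsub : ball y ρ ⊆ ball z r := (ball_subset_ball hρ.2.1.le).trans hball
  have hDm : Measurable (fderiv ℝ u) := (hu.continuous_fderiv one_ne_zero).measurable
  have hset : μH[(d:ℝ)].restrict (E ∩ ball y ρ) = ν.restrict (ball y ρ) := by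
    rw [hν, Measure.restrict_restrict measurableSet_ball]
    congr 1
    ext q; constructor
    · rintro ⟨a, b⟩; exact ⟨b, a, hsub b⟩
    · rintro ⟨a, b, _⟩; exact ⟨b, a⟩
  have hzero : ∀ q, q ∉ ball y ρ → fderiv ℝ u q = 0 := by
    intro q hq
    by_contra hne
    exact hq (hs ((support_fderiv_subset ℝ) hne))
  have hnull : ∫ q in ball y ρ, fderiv ℝ u q (v q) ∂ν = 0 := by
    rw [setIntegral_eq_integral_of_forall_compl_eq_zero]
    · exact hv.2 u hu (hs.trans hsub)
    · intro q hq; rw [hzero q hq]; simp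
  have hi1 : Integrable (fun q => fderiv ℝ u q (v y)) (ν.restrict (ball y ρ)) :=
    integrable_covector_apply (integrable_const _) hDm hL'
  have hi2 : Integrable (fun q => fderiv ℝ u q (v q)) (ν.restrict (ball y ρ)) :=
    (integrable_covector_apply hv.1 hDm hL').restrict
  have hi3 : Integrable (fun q => ‖v q - v y‖) ν := (hv.1.sub (integrable_const _)).norm
  have hlebρ := h2 ⟨h0, hρ.2.2⟩
  simp only [mem_ofPred_eq] at hlebρ
  rw [setAverage_eq, smul_eq_mul] at hlebρ
  have hνr : ν.real (closedBall y ρ) ≤ C * ρ ^ d := by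
    rw [Measure.real]
    exact ENNReal.toReal_le_of_le_ofReal (by positivity) (hup ρ h0 hρ.1)
  have hI0 : 0 ≤ ∫ q in closedBall y ρ, ‖v q - v y‖ ∂ν := integral_nonneg fun q => norm_nonneg _
  have hI : ∫ q in closedBall y ρ, ‖v q - v y‖ ∂ν ≤ ε * ρ ^ d := by
    rcases (measureReal_nonneg (μ := ν) (s := closedBall y ρ)).eq_or_lt with h | h
    · have : ν (closedBall y ρ) = 0 := by
        rwa [Measure.real, eq_comm, ENNReal.toReal_eq_zero_iff, or_iff_left (measure_ne_top _ _)] at h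
      rw [Measure.restrict_eq_zero.2 this, integral_zero_measure]; positivity
    · rw [inv_mul_lt_iff₀ h] at hlebρ
      refine hlebρ.le.trans ?_
      calc ν.real (closedBall y ρ) * (ε / C) ≤ C * ρ ^ d * (ε / C) := by gcongr
        _ = ε * ρ ^ d := by field_simp
  rw [hset]
  calc |∫ q in ball y ρ, fderiv ℝ u q (v y) ∂ν|
      = |∫ q in ball y ρ, (fderiv ℝ u q (v y) - fderiv ℝ u q (v q)) ∂ν| := by
        rw [integral_sub hi1 hi2, hnull, sub_zero]
    _ ≤ ∫ q in ball y ρ, L * ‖v q - v y‖ ∂ν := by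
        rw [← Real.norm_eq_abs]
        refine norm_integral_le_of_norm_le (hi3.const_mul L).restrict
          (Eventually.of_forall fun q => ?_)
        rw [← map_sub, norm_sub_rev (v q)]
        exact ((fderiv ℝ u q).le_opNorm _).trans (by gcongr; exact hL' q)
    _ = L * ∫ q in ball y ρ, ‖v q - v y‖ ∂ν := integral_const_mul _ _
    _ ≤ L * ∫ q in closedBall y ρ, ‖v q - v y‖ ∂ν := by
        exact mul_le_mul_of_nonneg_left (setIntegral_mono_set hi3.integrableOn
          (Eventually.of_forall fun q => norm_nonneg _)
          ball_subset_closedBall.eventuallyLE) hL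
    _ ≤ L * (ε * ρ ^ d) := by gcongr
    _ = ε * L * ρ ^ d := by ring

/-- The centre of the ball with index `p` in a countable family of balls. -/
def ratC {n : ℕ} (p : ℕ × ℚ) : Euc n := TopologicalSpace.denseSeq (Euc n) p.1

/-- The countable family of balls contains balls around every point, at every scale. -/
theorem exists_ratBall {n : ℕ} (y : Euc n) {ρ : ℝ} (hρ : 0 < ρ) :
    ∃ p : ℕ × ℚ, (0:ℝ) < p.2 ∧ 2 * (p.2:ℝ) < 4 * ρ ∧ ball y ρ ⊆ ball (ratC p) p.2 ∧
      closedBall (ratC p) p.2 ⊆ ball y (2 * ρ) := by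
  obtain ⟨i, hi⟩ := (TopologicalSpace.denseRange_denseSeq (Euc n)).exists_dist_lt y
    (show 0 < ρ / 4 by positivity)
  obtain ⟨r, h1, h2⟩ := exists_rat_btwn (show 5 * ρ / 4 < 3 * ρ / 2 by linarith)
  refine ⟨(i, r), by dsimp only; linarith, by dsimp only; linarith, ?_, ?_⟩
  · apply ball_subset_ball'
    simp only [ratC]; linarith
  · apply closedBall_subset_ball'
    simp only [ratC]; rw [dist_comm]; linarith

/-- The index `p` describes a nondegenerate ball compactly contained in `U`. -/
def GoodIdx {n : ℕ} (U : Set (Euc n)) (p : ℕ × ℚ) : Prop :=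
  (0:ℝ) < p.2 ∧ closedBall (ratC p : Euc n) p.2 ⊆ U

theorem exists_goodIdx {n : ℕ} {U : Set (Euc n)} (hU : IsOpen U) {y : Euc n} (hy : y ∈ U) :
    ∃ p, GoodIdx U p ∧ y ∈ ball (ratC p : Euc n) p.2 := by
  obtain ⟨ρ, hρ, hs⟩ := Metric.isOpen_iff.1 hU y hy
  obtain ⟨p, h0, _, h2, h3⟩ := exists_ratBall y (show 0 < ρ / 2 by positivity)
  exact ⟨p, ⟨h0, h3.trans ((ball_subset_ball (by linarith)).trans hs)⟩,
    h2 (mem_ball_self (by positivity))⟩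

theorem measure_ratBall_lt {n d : ℕ} {U E : Set (Euc n)} {h : ℝ → ℝ≥0∞}
    (hE : IsAAlmostMinimal n d U E h) {p : ℕ × ℚ} (hp : GoodIdx U p) :
    μH[(d:ℝ)] (E ∩ ball (ratC p) p.2) < ⊤ :=
  (measure_mono (inter_subset_inter_right _ ball_subset_closedBall)).trans_lt
    (hE.2.2.1 _ _ hp.2)

/-- For every ball of the countable family, `E` has finite upper density in this ball almost
everywhere. -/
theorem ae_upper {n d : ℕ} {U E : Set (Euc n)} {h : ℝ → ℝ≥0∞}
    (hE : IsAAlmostMinimal n d U E h) :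
    ∀ᵐ y ∂μH[(d:ℝ)], ∀ p, GoodIdx U p → ∃ C ρ₀ : ℝ, 0 < C ∧ 0 < ρ₀ ∧ ∀ ρ, 0 < ρ → ρ < ρ₀ →
      (μH[(d:ℝ)].restrict (E ∩ ball (ratC p) p.2)) (closedBall y ρ) ≤ ENNReal.ofReal (C * ρ ^ d) := by
  rw [ae_all_iff]
  intro p
  by_cases hp : GoodIdx U p
  · have hνf : IsFiniteMeasure (μH[(d:ℝ)].restrict (E ∩ ball (ratC p) p.2)) :=
      ⟨by rw [Measure.restrict_apply_univ]; exact measure_ratBall_lt hE hp⟩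
    have := upper_density_finite (μH[(d:ℝ)].restrict (E ∩ ball (ratC p) p.2)) d
    rw [← compl_ofPred, ← mem_ae_iff] at this
    filter_upwards [this] with y hy _ using hy
  · exact Eventually.of_forall fun y h => absurd h hp

theorem upper_of_restrict {n d : ℕ} {E : Set (Euc n)} {z y : Euc n} {r : ℝ} (hy : y ∈ ball z r)
    (h : ∃ C ρ₀ : ℝ, 0 < C ∧ 0 < ρ₀ ∧ ∀ ρ, 0 < ρ → ρ < ρ₀ →
      (μH[(d:ℝ)].restrict (E ∩ ball z r)) (closedBall y ρ) ≤ ENNReal.ofReal (C * ρ ^ d)) :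
    ∃ C ρ₀ : ℝ, 0 < C ∧ 0 < ρ₀ ∧ ∀ ρ, 0 < ρ → ρ < ρ₀ →
      μH[(d:ℝ)] (E ∩ closedBall y ρ) ≤ ENNReal.ofReal (C * ρ ^ d) := by
  obtain ⟨C, ρ₀, hC, hρ₀, hup⟩ := h
  obtain ⟨ρ₁, hρ₁, hball⟩ := Metric.isOpen_iff.1 isOpen_ball y hy
  refine ⟨C, min ρ₀ ρ₁, hC, lt_min hρ₀ hρ₁, fun ρ h0 hρ => ?_⟩
  rw [lt_min_iff] at hρ
  refine le_trans ?_ (hup ρ h0 hρ.1)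
  rw [Measure.restrict_apply measurableSet_closedBall]
  refine measure_mono fun q hq => ⟨hq.2, hq.1, hball ?_⟩
  exact closedBall_subset_ball hρ.2 hq.2

/-- The set of points at which the null fields of every ball of the family span fewer than `d`
directions is negligible: at a density point of it, the mass estimate in small balls contradicts
the lower density bound. -/
theorem degenerate_null {n d : ℕ} (hd : 1 ≤ d) {U E : Set (Euc n)} {h : ℝ → ℝ≥0∞} (hU : IsOpen U)
    (hg : IsGaugeFn h) (hE : IsAAlmostMinimal n d U E h)
    (hlow : ∀ y ∈ E, ∃ c ρ₁ : ℝ, 0 < c ∧ 0 < ρ₁ ∧ ∀ σ, 0 < σ → σ < ρ₁ →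
      ENNReal.ofReal (c * σ ^ d) ≤ μH[(d:ℝ)] (E ∩ ball y σ))
    {v : ℕ × ℚ → ℕ → Euc n → Euc n} (hv : ∀ p i, Measurable (v p i))
    (hvN : ∀ p, GoodIdx U p → ∀ i,
      NullField (μH[(d:ℝ)].restrict (E ∩ ball (ratC p) p.2)) (ratC p) p.2 (v p i))
    (hdense : ∀ p, GoodIdx U p → ∀ w,
      NullField (μH[(d:ℝ)].restrict (E ∩ ball (ratC p) p.2)) (ratC p) p.2 w → ∀ ε > 0,
      ∃ i, ∫ q, ‖w q - v p i q‖ ∂(μH[(d:ℝ)].restrict (E ∩ ball (ratC p) p.2)) < ε) :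
    ∀ᵐ y ∂μH[(d:ℝ)], y ∈ E → ∃ p, GoodIdx U p ∧ y ∈ ball (ratC p) p.2 ∧
      d ≤ Module.finrank ℝ (fieldSpan (v p) y) := by
  have hEm := hE.measurableSet hU
  set Z : Set (Euc n) := {y | ∀ p, GoodIdx U p → y ∈ ball (ratC p) p.2 →
    Module.finrank ℝ (fieldSpan (v p) y) < d} with hZ
  have hZm : MeasurableSet Z := by
    have : Z = ⋂ p, {y | GoodIdx U p → y ∈ ball (ratC p) p.2 →
        Module.finrank ℝ (fieldSpan (v p) y) < d} := by ext y; simp [hZ]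
    rw [this]
    refine MeasurableSet.iInter fun p => ?_
    by_cases hp : GoodIdx U p
    · have : {y | GoodIdx U p → y ∈ ball (ratC p) p.2 → Module.finrank ℝ (fieldSpan (v p) y) < d} =
          (ball (ratC p) p.2)ᶜ ∪ {y | Module.finrank ℝ (fieldSpan (v p) y) < d} := by
        ext y; simp only [mem_ofPred_eq, mem_union, mem_compl_iff, hp, forall_const]; tauto
      rw [this]
      exact measurableSet_ball.compl.union (measurableSet_fieldSpan (hv p) d)
    · simp [hp]
  have hkey : ∀ᵐ y ∂μH[(d:ℝ)], ∀ p, GoodIdx U p → y ∈ E ∩ ball (ratC p) p.2 → y ∉ Z := by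
    rw [ae_all_iff]
    intro p
    by_cases hp : GoodIdx U p
    swap
    · exact Eventually.of_forall fun y h => absurd h hp
    set ν := μH[(d:ℝ)].restrict (E ∩ ball (ratC p) p.2) with hν
    have hνf : IsFiniteMeasure ν :=
      ⟨by rw [hν, Measure.restrict_apply_univ]; exact measure_ratBall_lt hE hp⟩
    have h1 := Besicovitch.ae_tendsto_measure_inter_div ν Z
    rw [ae_restrict_iff' hZm, hν, ae_restrict_iff' (hEm.inter measurableSet_ball), ← hν] at h1
    filter_upwards [h1, ae_upper hE] with y hy hyup _ hyE hyZ
    have hlim := hy hyE hyZ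
    obtain ⟨C, ρ₀, hC, hρ₀, hup⟩ := hyup p hp
    obtain ⟨c, ρ₁, hc, hρ₁, hlow⟩ := hlow y hyE.1
    obtain ⟨ρ₂, hρ₂, hball⟩ := Metric.isOpen_iff.1 isOpen_ball y hyE.2
    -- constants: `3^d · a · C 2^d ≤ c/4` and `4^d · b ≤ c/4`
    set a : ℝ := min (1 / 2) (c / (4 * (3 ^ d * (C * 2 ^ d)))) with ha
    have ha0 : 0 < a := lt_min (by norm_num) (by positivity)
    have hev1 : ∀ᶠ ρ in 𝓝[>] (0:ℝ), ENNReal.ofReal (1 - a) <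
        ν (Z ∩ closedBall y ρ) / ν (closedBall y ρ) :=
      hlim.eventually (lt_mem_nhds (by
        rw [ENNReal.ofReal_lt_one]; linarith))
    have hev2 : ∀ᶠ ρ in 𝓝[>] (0:ℝ), h ρ < ENNReal.ofReal (c / (4 * 4 ^ d)) :=
      hg.2.eventually (gt_mem_nhds (by rw [ENNReal.ofReal_pos]; positivity))
    obtain ⟨t1, ht1, hev1⟩ := mem_nhdsGT_iff_exists_Ioo_subset.1 hev1
    obtain ⟨t2, ht2, hev2⟩ := mem_nhdsGT_iff_exists_Ioo_subset.1 hev2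
    have ht1' : 0 < t1 := ht1
    have ht2' : 0 < t2 := ht2
    obtain ⟨ρ, hρ0, hρ⟩ : ∃ ρ : ℝ, 0 < ρ ∧ 4 * ρ < min (min ρ₀ ρ₁) (min ρ₂ (min t1 t2)) := by
      refine ⟨min (min ρ₀ ρ₁) (min ρ₂ (min t1 t2)) / 8, ?_, ?_⟩
      · positivity
      · have : 0 < min (min ρ₀ ρ₁) (min ρ₂ (min t1 t2)) := by positivity
        linarith
    simp only [lt_min_iff] at hρ
    obtain ⟨⟨hr0, hr1⟩, hr2, hr3, hr4⟩ := hρ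
    obtain ⟨p', hp0, hp1, hp2, hp3⟩ := exists_ratBall y hρ0
    have hsub : ball y (2 * ρ) ⊆ ball (ratC p) p.2 := (ball_subset_ball (by linarith)).trans hball
    have hp'g : GoodIdx U p' :=
      ⟨hp0, hp3.trans (hsub.trans (ball_subset_closedBall.trans hp.2))⟩
    have hme := mass_estimate hd hU hE hp0 hp'g.2 hp1 (hv p') (hvN p' hp'g) (hdense p' hp'g)
    have hd1 := hev1 (show 2 * ρ ∈ Ioo 0 t1 from ⟨by linarith, by linarith⟩)
    have hd2 := hev2 (show 4 * ρ ∈ Ioo 0 t2 from ⟨by linarith, by linarith⟩)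
    simp only [mem_ofPred_eq] at hd1 hd2
    have hνup := hup (2 * ρ) (by linarith) (by linarith)
    have hνfin : ν (closedBall y (2 * ρ)) ≠ ⊤ := measure_ne_top _ _
    -- the complement of `Z` has small measure in the ball of radius `2ρ`
    have hcomp : ν (closedBall y (2 * ρ) \ Z) ≤ ENNReal.ofReal (a * (C * (2 * ρ) ^ d)) := by
      have hsplit := measure_inter_add_sdiff (μ := ν) (closedBall y (2 * ρ)) hZm
      have h3 : ENNReal.ofReal (1 - a) * ν (closedBall y (2 * ρ)) ≤
          ν (closedBall y (2 * ρ) ∩ Z) := by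
        rw [inter_comm]
        exact ENNReal.mul_le_of_le_div hd1.le
      have h4 : ENNReal.ofReal (1 - a) * ν (closedBall y (2 * ρ)) +
          ν (closedBall y (2 * ρ) \ Z) ≤ ENNReal.ofReal (1 - a) * ν (closedBall y (2 * ρ)) +
          ENNReal.ofReal a * ν (closedBall y (2 * ρ)) := by
        rw [← add_mul, ← ENNReal.ofReal_add (by linarith [min_le_left (1/2) (c / (4 * (3 ^ d * (C * 2 ^ d))))]) ha0.le, sub_add_cancel, ENNReal.ofReal_one, one_mul]
        refine (add_le_add h3 le_rfl).trans hsplit.le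
      have h5 := (ENNReal.add_le_add_iff_left (by
        exact ENNReal.mul_ne_top ENNReal.ofReal_ne_top hνfin)).1 h4
      refine h5.trans ?_
      rw [ENNReal.ofReal_mul ha0.le]
      gcongr
    have hsubset : (E ∩ ball (ratC p') p'.2) \ {y | Module.finrank ℝ (fieldSpan (v p') y) < d} ⊆
        (closedBall y (2 * ρ) \ Z) ∩ (E ∩ ball (ratC p) p.2) := by
      rintro q ⟨⟨hq1, hq2⟩, hq3⟩
      have hq4 := hp3 (ball_subset_closedBall hq2)
      exact ⟨⟨ball_subset_closedBall hq4, fun hqZ => hq3 (hqZ p' hp'g hq2)⟩, hq1, hsub hq4⟩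
    have hle : ENNReal.ofReal (c * ρ ^ d) ≤ ENNReal.ofReal (c / 2 * ρ ^ d) := by
      calc ENNReal.ofReal (c * ρ ^ d) ≤ μH[(d:ℝ)] (E ∩ ball y ρ) := hlow ρ hρ0 (by linarith)
        _ ≤ μH[(d:ℝ)] (E ∩ ball (ratC p') p'.2) := measure_mono (inter_subset_inter_right _ hp2)
        _ ≤ ENNReal.ofReal (3 ^ d) * ν (closedBall y (2 * ρ) \ Z) +
            h (4 * ρ) * ENNReal.ofReal ((4 * ρ) ^ d) := by
            refine hme.trans (add_le_add ?_ le_rfl)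
            refine mul_le_mul_right ?_ _
            rw [hν, Measure.restrict_apply (measurableSet_closedBall.diff hZm)]
            exact measure_mono hsubset
        _ ≤ ENNReal.ofReal (3 ^ d) * ENNReal.ofReal (a * (C * (2 * ρ) ^ d)) +
            ENNReal.ofReal (c / (4 * 4 ^ d)) * ENNReal.ofReal ((4 * ρ) ^ d) := by
            gcongr
        _ = ENNReal.ofReal (3 ^ d * (a * (C * (2 * ρ) ^ d)) + c / (4 * 4 ^ d) * (4 * ρ) ^ d) := by
            rw [ENNReal.ofReal_add (by positivity) (by positivity),
              ENNReal.ofReal_mul (p := 3 ^ d) (by positivity),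
              ENNReal.ofReal_mul (p := c / (4 * 4 ^ d)) (by positivity)]
        _ ≤ _ := by
            apply ENNReal.ofReal_le_ofReal
            have e1 : c / (4 * 4 ^ d) * (4 * ρ) ^ d = c / 4 * ρ ^ d := by
              rw [mul_pow]; field_simp
            have e2 : 3 ^ d * (a * (C * (2 * ρ) ^ d)) ≤ c / 4 * ρ ^ d := by
              have : a ≤ c / (4 * (3 ^ d * (C * 2 ^ d))) := min_le_right _ _
              rw [le_div_iff₀ (by positivity)] at this
              have h6 : 0 < ρ ^ d := by positivity
              rw [mul_pow]
              nlinarith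
            rw [e1]; linarith
    rw [ENNReal.ofReal_le_ofReal_iff (by positivity)] at hle
    have : 0 < ρ ^ d := by positivity
    nlinarith
  filter_upwards [hkey] with y hy hyE
  obtain ⟨p, hp, hyp⟩ := exists_goodIdx hU (hE.1 hyE)
  have := hy p hp ⟨hyE, hyp⟩
  simp only [hZ, mem_ofPred_eq] at this
  push Not at this
  exact this

/-- Almost every point of `E` has `d` independent asymptotically invariant directions, and `E` has
finite upper density there. -/
theorem ae_dirAt {n d : ℕ} (hd : 1 ≤ d) {U E : Set (Euc n)} {h : ℝ → ℝ≥0∞} (hU : IsOpen U)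
    (hg : IsGaugeFn h) (hE : IsAAlmostMinimal n d U E h)
    (hlow : ∀ y ∈ E, ∃ c ρ₁ : ℝ, 0 < c ∧ 0 < ρ₁ ∧ ∀ σ, 0 < σ → σ < ρ₁ →
      ENNReal.ofReal (c * σ ^ d) ≤ μH[(d:ℝ)] (E ∩ ball y σ)) :
    ∀ᵐ y ∂μH[(d:ℝ)], y ∈ E →
      (∃ W : Submodule ℝ (Euc n), Module.finrank ℝ W = d ∧ ∀ w ∈ W, DirAt d E y w) ∧
      ∃ C ρ₀ : ℝ, 0 < C ∧ 0 < ρ₀ ∧ ∀ ρ, 0 < ρ → ρ < ρ₀ →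
        μH[(d:ℝ)] (E ∩ closedBall y ρ) ≤ ENNReal.ofReal (C * ρ ^ d) := by
  have hEm := hE.measurableSet hU
  have hex : ∀ p : ℕ × ℚ, ∃ v : ℕ → Euc n → Euc n, (∀ i, Measurable (v i)) ∧ (GoodIdx U p →
      (∀ i, NullField (μH[(d:ℝ)].restrict (E ∩ ball (ratC p) p.2)) (ratC p) p.2 (v i)) ∧
      ∀ w, NullField (μH[(d:ℝ)].restrict (E ∩ ball (ratC p) p.2)) (ratC p) p.2 w → ∀ ε > 0,
        ∃ i, ∫ q, ‖w q - v i q‖ ∂(μH[(d:ℝ)].restrict (E ∩ ball (ratC p) p.2)) < ε) := by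
    intro p
    by_cases hp : GoodIdx U p
    · have hνf : IsFiniteMeasure (μH[(d:ℝ)].restrict (E ∩ ball (ratC p) p.2)) :=
        ⟨by rw [Measure.restrict_apply_univ]; exact measure_ratBall_lt hE hp⟩
      obtain ⟨v, h1, h2, h3⟩ := exists_nullSeq (μH[(d:ℝ)].restrict (E ∩ ball (ratC p) p.2))
        (ratC p) p.2
      exact ⟨v, h1, fun _ => ⟨h2, h3⟩⟩
    · exact ⟨fun _ _ => 0, fun _ => measurable_const, fun h => absurd h hp⟩
  choose v hvm hv using hex
  have hleb : ∀ᵐ y ∂μH[(d:ℝ)], ∀ p, GoodIdx U p → y ∈ E ∩ ball (ratC p) p.2 → ∀ i,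
      Tendsto (fun ρ => ⨍ q in closedBall y ρ, ‖v p i q - v p i y‖
        ∂(μH[(d:ℝ)].restrict (E ∩ ball (ratC p) p.2))) (𝓝[>] 0) (𝓝 0) := by
    rw [ae_all_iff]
    intro p
    by_cases hp : GoodIdx U p
    swap
    · exact Eventually.of_forall fun y h => absurd h hp
    have hνf : IsFiniteMeasure (μH[(d:ℝ)].restrict (E ∩ ball (ratC p) p.2)) :=
      ⟨by rw [Measure.restrict_apply_univ]; exact measure_ratBall_lt hE hp⟩
    have h1 : ∀ᵐ y ∂(μH[(d:ℝ)].restrict (E ∩ ball (ratC p) p.2)), ∀ i,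
      Tendsto (fun ρ => ⨍ q in closedBall y ρ, ‖v p i q - v p i y‖
        ∂(μH[(d:ℝ)].restrict (E ∩ ball (ratC p) p.2))) (𝓝[>] 0) (𝓝 0) := by
      rw [ae_all_iff]
      intro i
      filter_upwards [(Besicovitch.vitaliFamily
        (μH[(d:ℝ)].restrict (E ∩ ball (ratC p) p.2))).ae_tendsto_average_norm_sub
        ((hv p hp).1 i).1.locallyIntegrable] with y hy
      exact hy.comp (Besicovitch.tendsto_filterAt _ y)
    rw [ae_restrict_iff' (hEm.inter measurableSet_ball)] at h1
    filter_upwards [h1] with y hy _ using hy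
  filter_upwards [hleb, ae_upper hE, degenerate_null hd hU hg hE hlow hvm
    (fun p hp => (hv p hp).1) (fun p hp => (hv p hp).2)] with y h1 h2 h3 hyE
  obtain ⟨p, hp, hyp, hrank⟩ := h3 hyE
  refine ⟨?_, upper_of_restrict hyp (h2 p hp)⟩
  obtain ⟨W, hWle, hW⟩ := exists_submodule_finrank_eq _ hrank
  obtain ⟨ρ₁, hρ₁, hball⟩ := Metric.isOpen_iff.1 isOpen_ball y hyp
  refine ⟨W, hW, fun w hw => dirAt_span hρ₁ (fun ρ hρ => ?_) (T := range fun i => v p i y) ?_ w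
    (hWle hw)⟩
  · refine (measure_mono (inter_subset_inter_right _ ?_)).trans_lt (measure_ratBall_lt hE hp)
    exact (ball_subset_ball hρ.le).trans hball
  · rintro _ ⟨i, rfl⟩
    exact dirAt_of_lebesgue (measure_ratBall_lt hE hp) ((hv p hp).1 i) hyp (h2 p hp)
      (h1 p hp ⟨hyE, hyp⟩ i)

/-! ### Lattice functions of one variable -/

/-- The even integer nearest to `x`. -/
def evenC (x : ℝ) : ℝ := 2 * (round (x / 2) : ℝ)

/-- The distance from `x` to the even integers. -/
def evenDist (x : ℝ) : ℝ≥0 := ‖x - evenC x‖₊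

theorem evenDist_coe (x : ℝ) : (evenDist x : ℝ) = |x - evenC x| := by
  simp [evenDist]

theorem abs_sub_evenC_le (x : ℝ) : |x - evenC x| ≤ 1 := by
  have := abs_sub_round (x / 2)
  rw [evenC]
  have h2 : x - 2 * (round (x / 2) : ℝ) = 2 * (x / 2 - round (x / 2)) := by ring
  rw [h2, abs_mul, abs_two]; linarith

theorem evenDist_le_one (x : ℝ) : evenDist x ≤ 1 := by
  rw [← NNReal.coe_le_coe, evenDist_coe]; exact abs_sub_evenC_le x

theorem evenDist_le (x : ℝ) (k : ℤ) : (evenDist x : ℝ) ≤ |x - 2 * k| := by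
  have := round_le (x / 2) k
  rw [evenDist_coe, evenC]
  have h2 : ∀ j : ℤ, |x - 2 * (j : ℝ)| = 2 * |x / 2 - j| := by
    intro j
    rw [show x - 2 * (j:ℝ) = 2 * (x / 2 - j) by ring, abs_mul, abs_two]
  rw [h2, h2]; linarith

theorem evenDist_lip (x y : ℝ) : (evenDist x : ℝ) ≤ evenDist y + |x - y| := by
  refine (evenDist_le x (round (y / 2))).trans ?_
  rw [evenDist_coe, evenC]
  have := abs_sub_le x y (2 * (round (y / 2) : ℝ))
  linarith

/-- Truncation of a real number to `[-1, 1]`. -/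
def clip (u : ℝ) : ℝ := max (-1) (min 1 u)

theorem clip_le_clip {u w : ℝ} (h : u ≤ w) : clip u ≤ clip w := by
  unfold clip; gcongr

theorem clip_sub_le {u w : ℝ} (h : u ≤ w) : clip w - clip u ≤ w - u := by
  unfold clip
  rcases le_total 1 w with h1 | h1 <;> rcases le_total 1 u with h2 | h2 <;>
  rcases le_total (-1) w with h3 | h3 <;> rcases le_total (-1) u with h4 | h4 <;>
  simp [h1, h2, h3, h4] <;> linarith

theorem clip_of_one_le {u : ℝ} (h : 1 ≤ u) : clip u = 1 := by unfold clip; simp [h]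

theorem clip_of_le_neg_one {u : ℝ} (h : u ≤ -1) : clip u = -1 := by
  unfold clip; rw [min_eq_right (by linarith), max_eq_left h]

theorem clip_of_abs_le {u : ℝ} (h : |u| ≤ 1) : clip u = u := by
  rw [abs_le] at h
  unfold clip; rw [min_eq_right h.2, max_eq_right h.1]

theorem abs_clip_le (u : ℝ) : |clip u| ≤ 1 := by
  unfold clip; rw [abs_le]; simp

/-- Each interval of length `2` centred at an even integer is expanded by the factor `1 / m` around
its centre and truncated, so that points at distance at least `m` from the centre are sent to odd
integers. -/
def snap (x m : ℝ) : ℝ := evenC x + clip ((x - evenC x) / m)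

theorem evenC_mono {x y : ℝ} (h : x ≤ y) : evenC x ≤ evenC y := by
  unfold evenC
  have : round (x / 2) ≤ round (y / 2) := by
    rw [round_eq, round_eq]; exact Int.floor_le_floor (by linarith)
  have : (round (x / 2) : ℝ) ≤ round (y / 2) := by exact_mod_cast this
  linarith

theorem snap_mono_lip {x y m : ℝ} (hm : 0 < m) (hm1 : m ≤ 1) (h : x ≤ y) :
    snap x m ≤ snap y m ∧ snap y m - snap x m ≤ (y - x) / m := by
  have hx := abs_le.1 (abs_sub_evenC_le x)
  have hy := abs_le.1 (abs_sub_evenC_le y)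
  unfold snap
  rcases (evenC_mono h).eq_or_lt with he | hlt
  · rw [← he]
    have h1 : (x - evenC x) / m ≤ (y - evenC x) / m := by gcongr
    refine ⟨by linarith [clip_le_clip h1], ?_⟩
    have := clip_sub_le h1
    have h2 : (y - x) / m = (y - evenC x) / m - (x - evenC x) / m := by ring
    linarith
  · -- consecutive even integers differ by at least two
    have hgap : evenC x + 2 ≤ evenC y := by
      unfold evenC at *
      have h1 : (round (x / 2) : ℝ) < round (y / 2) := by linarith
      have h2 : round (x / 2) + 1 ≤ round (y / 2) := by exact_mod_cast h1
      have h3 : (round (x / 2) : ℝ) + 1 ≤ round (y / 2) := by exact_mod_cast h2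
      linarith
    have b1 := abs_le.1 (abs_clip_le ((x - evenC x) / m))
    have b2 := abs_le.1 (abs_clip_le ((y - evenC y) / m))
    refine ⟨by linarith, ?_⟩
    have c1 : clip ((y - evenC y) / m) - clip (-1 / m) ≤ (y - evenC y) / m - -1 / m :=
      clip_sub_le (by gcongr; linarith)
    have c2 : clip (1 / m) - clip ((x - evenC x) / m) ≤ 1 / m - (x - evenC x) / m :=
      clip_sub_le (by gcongr; linarith)
    rw [clip_of_le_neg_one (u := -1 / m) (by rw [div_le_iff₀ hm]; linarith)] at c1
    rw [clip_of_one_le (u := 1 / m) (by rw [le_div_iff₀ hm]; linarith)] at c2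
    have c3 : (evenC y - 1) - (evenC x + 1) ≤ ((evenC y - 1) - (evenC x + 1)) / m := by
      rw [le_div_iff₀ hm]; nlinarith
    have h2 : (y - x) / m = ((y - evenC y) / m - -1 / m) + ((evenC y - 1) - (evenC x + 1)) / m +
      (1 / m - (x - evenC x) / m) := by ring
    linarith

theorem snap_lip_left (x y : ℝ) {m : ℝ} (hm : 0 < m) (hm1 : m ≤ 1) :
    |snap x m - snap y m| ≤ |x - y| / m := by
  rcases le_total x y with h | h
  · obtain ⟨h1, h2⟩ := snap_mono_lip hm hm1 h
    rw [abs_of_nonpos (by linarith), abs_of_nonpos (by linarith)]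
    simpa using h2
  · obtain ⟨h1, h2⟩ := snap_mono_lip hm hm1 h
    rwa [abs_of_nonneg (by linarith), abs_of_nonneg (by linarith)]

theorem clip_neg (u : ℝ) : clip (-u) = -clip u := by
  unfold clip
  rcases le_total 1 u with h1 | h1 <;> rcases le_total (-1) u with h3 | h3
  · rw [min_eq_right (by linarith), min_eq_left h1, max_eq_left (by linarith), max_eq_right (by linarith)]
  · linarith
  · rw [min_eq_right (by linarith), min_eq_right h1, max_eq_right (by linarith), max_eq_right h3]
  · rw [min_eq_left (by linarith), min_eq_right (by linarith), max_eq_right (by linarith),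
      max_eq_left h3, neg_neg]

theorem clip_div_sub_le {u m m' : ℝ} (hu : 0 ≤ u) (hm : 0 < m) (h : m ≤ m') :
    clip (u / m') ≤ clip (u / m) ∧ clip (u / m) - clip (u / m') ≤ (m' - m) / m' := by
  have hm' : 0 < m' := by linarith
  have h1 : u / m' ≤ u / m := by gcongr
  refine ⟨clip_le_clip h1, ?_⟩
  rcases le_total m' u with h2 | h2
  · rw [clip_of_one_le (u := u / m') (by rw [le_div_iff₀ hm']; linarith),
      clip_of_one_le (u := u / m) (by rw [le_div_iff₀ hm]; linarith), sub_self]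
    exact div_nonneg (by linarith) hm'.le
  · rw [clip_of_abs_le (u := u / m') (by rw [abs_of_nonneg (by positivity), div_le_one hm']; exact h2)]
    rcases le_total m u with h3 | h3
    · rw [clip_of_one_le (by rw [le_div_iff₀ hm]; linarith)]
      rw [show (m' - m) / m' = 1 - m / m' by field_simp]
      have : m / m' ≤ u / m' := by gcongr
      linarith
    · rw [clip_of_abs_le (by rw [abs_of_nonneg (by positivity), div_le_one hm]; exact h3)]
      rw [show u / m - u / m' = (u / m) * ((m' - m) / m') by field_simp]
      have h4 : u / m ≤ 1 := by rw [div_le_one hm]; exact h3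
      have h5 : 0 ≤ (m' - m) / m' := div_nonneg (by linarith) hm'.le
      nlinarith

theorem clip_div_lip_aux (u : ℝ) {m m' : ℝ} (hm : 0 < m) (h : m ≤ m') :
    |clip (u / m) - clip (u / m')| ≤ (m' - m) / m' := by
  rcases le_total 0 u with hu | hu
  · obtain ⟨h1, h2⟩ := clip_div_sub_le hu hm h
    rwa [abs_of_nonneg (by linarith)]
  · obtain ⟨h1, h2⟩ := clip_div_sub_le (u := -u) (by linarith) hm h
    rw [neg_div, neg_div, clip_neg, clip_neg] at h1 h2
    rw [abs_of_nonpos (by linarith)]; linarith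

theorem snap_lip_right (x : ℝ) {m m' μ : ℝ} (hμ : 0 < μ) (hm : μ ≤ m) (hm' : μ ≤ m') :
    |snap x m - snap x m'| ≤ |m - m'| / μ := by
  unfold snap
  rw [add_sub_add_left_eq_sub]
  rcases le_total m m' with h | h
  · refine (clip_div_lip_aux _ (by linarith) h).trans ?_
    rw [abs_sub_comm, abs_of_nonneg (by linarith)]
    gcongr
  · rw [abs_sub_comm]
    refine (clip_div_lip_aux _ (by linarith) h).trans ?_
    rw [abs_of_nonneg (by linarith)]
    gcongr

/-- The joint Lipschitz estimate for `snap`, in terms of a lower bound `μ` for both parameters. -/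
theorem snap_lip (x y : ℝ) {m m' μ : ℝ} (hμ : 0 < μ) (hm : μ ≤ m) (hm' : μ ≤ m') (h1 : m ≤ 1) :
    |snap x m - snap y m'| ≤ (|x - y| + |m - m'|) / μ := by
  have e1 := snap_lip_left x y (hμ.trans_le hm) h1
  have e2 := snap_lip_right y hμ hm hm'
  have e3 := abs_sub_le (snap x m) (snap y m) (snap y m')
  have e4 : |x - y| / m ≤ |x - y| / μ := by gcongr
  rw [add_div]; linarith

theorem snap_one (x : ℝ) : snap x 1 = x := by
  unfold snap
  rw [div_one, clip_of_abs_le (abs_sub_evenC_le x)]; ring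

theorem snap_odd {x m : ℝ} (hm : 0 < m) (h : m ≤ evenDist x) :
    ∃ k : ℤ, snap x m = 2 * k + 1 := by
  rw [evenDist_coe] at h
  unfold snap
  rcases le_total 0 (x - evenC x) with h0 | h0
  · rw [abs_of_nonneg h0] at h
    refine ⟨round (x / 2), ?_⟩
    rw [clip_of_one_le (by rw [le_div_iff₀ hm]; linarith), evenC]
  · rw [abs_of_nonpos h0] at h
    refine ⟨round (x / 2) - 1, ?_⟩
    rw [clip_of_le_neg_one (by rw [div_le_iff₀ hm]; linarith), evenC]
    push_cast; ring

/-- The `d`-th smallest entry of `a`. -/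
def ordStat {n d : ℕ} (hdn : d ≤ n) (a : Fin n → ℝ≥0) : ℝ≥0 :=
  (Finset.powersetCard d (Finset.univ : Finset (Fin n))).inf'
    (Finset.powersetCard_nonempty.2 (by simpa using hdn)) fun S => S.sup a

theorem ordStat_exists {n d : ℕ} (hdn : d ≤ n) (a : Fin n → ℝ≥0) :
    ∃ S : Finset (Fin n), S.card = d ∧ ordStat hdn a = S.sup a := by
  obtain ⟨S, hS, h⟩ := Finset.exists_mem_eq_inf'
    (s := Finset.powersetCard d (Finset.univ : Finset (Fin n)))
    (Finset.powersetCard_nonempty.2 (by simpa using hdn)) (fun S : Finset (Fin n) => S.sup a)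
  exact ⟨S, (Finset.mem_powersetCard.1 hS).2, h⟩

theorem ordStat_le {n d : ℕ} (hdn : d ≤ n) (a : Fin n → ℝ≥0) {S : Finset (Fin n)}
    (hS : S.card = d) : ordStat hdn a ≤ S.sup a :=
  Finset.inf'_le _ (Finset.mem_powersetCard.2 ⟨Finset.subset_univ _, hS⟩)

theorem ordStat_lip {n d : ℕ} (hdn : d ≤ n) {a b : Fin n → ℝ≥0} {ε : ℝ≥0}
    (h : ∀ i, a i ≤ b i + ε) : ordStat hdn a ≤ ordStat hdn b + ε := by
  obtain ⟨S, hS, hb⟩ := ordStat_exists hdn b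
  refine (ordStat_le hdn a hS).trans ?_
  rw [hb]
  refine Finset.sup_le fun i hi => (h i).trans ?_
  gcongr
  exact Finset.le_sup hi

theorem ordStat_le_one {n d : ℕ} (hdn : d ≤ n) {a : Fin n → ℝ≥0} (h : ∀ i, a i ≤ 1) :
    ordStat hdn a ≤ 1 := by
  obtain ⟨S, hS, hb⟩ := ordStat_exists hdn a
  rw [hb]; exact Finset.sup_le fun i _ => h i

/-- More than `n - d` entries are at least as large as the `d`-th smallest one. -/
theorem ordStat_card {n d : ℕ} (hd : 1 ≤ d) (hdn : d ≤ n) (a : Fin n → ℝ≥0) :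
    n < (Finset.univ.filter fun i => ordStat hdn a ≤ a i).card + d := by
  by_contra! hcon
  have h1 := Finset.card_filter_add_card_filter_not (s := (Finset.univ : Finset (Fin n)))
    (fun i => ordStat hdn a ≤ a i)
  rw [Finset.card_univ, Fintype.card_fin] at h1
  have h2 : d ≤ (Finset.univ.filter fun i => ¬ ordStat hdn a ≤ a i).card := by omega
  obtain ⟨S, hS, hSc⟩ := Finset.exists_subset_card_eq h2
  have h3 := ordStat_le hdn a hSc
  have hlt : ∀ i ∈ S, a i < ordStat hdn a := fun i hi => by
    have := hS hi
    simpa using this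
  have hne : S.Nonempty := Finset.card_pos.1 (by omega)
  obtain ⟨i, hi⟩ := hne
  have : S.sup a < ordStat hdn a := (Finset.sup_lt_iff (bot_le.trans_lt (hlt i hi))).2 hlt
  exact absurd h3 (not_le.2 this)

/-! ### Averaging over translated grids -/

theorem evenDist_volume (c : ℝ) (t : ℝ≥0) :
    volume {x : ℝ | x ∈ Icc (0:ℝ) 2 ∧ evenDist (c - x) ≤ t} ≤ 4 * (t : ℝ≥0∞) := by
  have hsub : {x : ℝ | x ∈ Icc (0:ℝ) 2 ∧ evenDist (c - x) ≤ t} ⊆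
      Icc (c - 2 * (round (c / 2) : ℝ) - t) (c - 2 * (round (c / 2) : ℝ) + t) ∪
      Icc (c - 2 * ((round (c / 2) : ℝ) - 1) - t) (c - 2 * ((round (c / 2) : ℝ) - 1) + t) := by
    rintro x ⟨⟨h0, h2⟩, ht⟩
    have ht' : (evenDist (c - x) : ℝ) ≤ t := by exact_mod_cast ht
    rw [evenDist_coe, evenC, abs_le] at ht'
    have h1 : round ((c - x) / 2) ≤ round (c / 2) := by
      rw [round_eq, round_eq]; exact Int.floor_le_floor (by linarith)
    have h3 : round (c / 2) - 1 ≤ round ((c - x) / 2) := by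
      have : round (c / 2) - 1 = round (c / 2 - 1) := by
        rw [round_sub_one]
      rw [this, round_eq, round_eq]; exact Int.floor_le_floor (by linarith)
    have h4 : round ((c - x) / 2) = round (c / 2) ∨ round ((c - x) / 2) = round (c / 2) - 1 := by
      omega
    rcases h4 with h4 | h4
    · left
      rw [h4] at ht'
      constructor <;> linarith
    · right
      rw [h4] at ht'
      push_cast at ht'
      constructor <;> linarith
  refine (measure_mono hsub).trans ((measure_union_le _ _).trans ?_)
  rw [Real.volume_Icc, Real.volume_Icc, ← ENNReal.ofReal_add (by ring_nf; positivity)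
    (by ring_nf; positivity), ← ENNReal.ofReal_coe_nnreal,
    show (4:ℝ≥0∞) = ENNReal.ofReal 4 by simp, ← ENNReal.ofReal_mul (by norm_num)]
  exact ENNReal.ofReal_le_ofReal (by ring_nf; rfl)

/-- The `d`-th smallest distance from the coordinates of `q / lam - v` to the even integers. It
vanishes exactly when `q` lies on the `(n-d)`-skeleton dual to the cubical grid of mesh `2 * lam`
with vertices at `lam * (v + odd)`. -/
def gridDist {n d : ℕ} (hdn : d ≤ n) (lam : ℝ) (v : Fin n → ℝ) (q : Euc n) : ℝ≥0 :=
  ordStat hdn fun i => evenDist (q i / lam - v i)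

theorem gridDist_le_one {n d : ℕ} (hdn : d ≤ n) (lam : ℝ) (v : Fin n → ℝ) (q : Euc n) :
    gridDist hdn lam v q ≤ 1 := ordStat_le_one hdn fun _ => evenDist_le_one _

theorem gridDist_lip2 {n d : ℕ} (hdn : d ≤ n) {lam : ℝ} (hl : 0 < lam) (v w : Fin n → ℝ)
    (q p : Euc n) :
    (gridDist hdn lam v q : ℝ) ≤ gridDist hdn lam w p + (dist q p / lam + dist v w) := by
  have hε : 0 ≤ dist q p / lam + dist v w := by positivity
  have := ordStat_lip hdn (a := fun i => evenDist (q i / lam - v i))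
    (b := fun i => evenDist (p i / lam - w i)) (ε := Real.toNNReal (dist q p / lam + dist v w)) ?_
  · rw [← NNReal.coe_le_coe] at this
    push_cast at this
    rw [Real.coe_toNNReal _ hε] at this
    exact this
  · intro i
    rw [← NNReal.coe_le_coe]
    push_cast
    rw [Real.coe_toNNReal _ hε]
    refine (evenDist_lip _ (p i / lam - w i)).trans ?_
    gcongr
    have h1 : |q i - p i| ≤ dist q p := by
      rw [← Real.dist_eq]
      have := PiLp.lipschitzWith_ofLp 2 (fun _ : Fin n => ℝ)
      have h := (dist_le_pi_dist q.ofLp p.ofLp i).trans (this.dist_le_mul q p)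
      simpa using h
    have h2 : |v i - w i| ≤ dist v w := by
      rw [← Real.dist_eq]; exact dist_le_pi_dist v w i
    have h3 : q i / lam - v i - (p i / lam - w i) = (q i - p i) / lam - (v i - w i) := by ring
    rw [h3]
    refine (abs_sub _ _).trans ?_
    rw [abs_div, abs_of_pos hl]
    gcongr

theorem gridDist_lip {n d : ℕ} (hdn : d ≤ n) {lam : ℝ} (hl : 0 < lam) (v : Fin n → ℝ)
    (q p : Euc n) :
    |(gridDist hdn lam v q : ℝ) - gridDist hdn lam v p| ≤ dist q p / lam := by
  have h1 := gridDist_lip2 hdn hl v v q p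
  have h2 := gridDist_lip2 hdn hl v v p q
  rw [dist_self, dist_comm] at h2
  rw [dist_self] at h1
  rw [abs_le]; constructor <;> linarith

theorem gridDist_continuous {n d : ℕ} (hdn : d ≤ n) {lam : ℝ} (hl : 0 < lam) :
    Continuous fun z : (Fin n → ℝ) × Euc n => gridDist hdn lam z.1 z.2 := by
  refine (LipschitzWith.of_dist_le_mul (K := Real.toNNReal (1 / lam + 1)) ?_).continuous
  rintro ⟨v, q⟩ ⟨w, p⟩
  rw [Real.coe_toNNReal _ (by positivity), NNReal.dist_eq, Prod.dist_eq]
  have h1 := gridDist_lip2 hdn hl v w q p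
  have h2 := gridDist_lip2 hdn hl w v p q
  rw [dist_comm p q, dist_comm w v] at h2
  have h3 : dist q p / lam ≤ max (dist v w) (dist q p) / lam := by gcongr; exact le_max_right _ _
  have h4 : dist v w ≤ max (dist v w) (dist q p) := le_max_left _ _
  have h5 : (1 / lam + 1) * max (dist v w) (dist q p) =
    max (dist v w) (dist q p) / lam + max (dist v w) (dist q p) := by ring
  simp only
  rw [h5, abs_le]; constructor <;> linarith

theorem gridDist_continuous_right {n d : ℕ} (hdn : d ≤ n) {lam : ℝ} (hl : 0 < lam)
    (v : Fin n → ℝ) : Continuous (gridDist hdn lam v) := by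
  refine (LipschitzWith.of_dist_le_mul (K := Real.toNNReal (1 / lam)) fun q p => ?_).continuous
  rw [Real.coe_toNNReal _ (by positivity), NNReal.dist_eq, one_div_mul_eq_div]
  exact gridDist_lip hdn hl v q p

/-- For `gridDist` to be at most `t`, some `d` of the coordinates of `v` have to lie in intervals of
length proportional to `t`. -/
theorem gridDist_volume {n d : ℕ} (hdn : d ≤ n) (lam : ℝ) (q : Euc n) (t : ℝ≥0) :
    volume {v : Fin n → ℝ | v ∈ Icc 0 2 ∧ gridDist hdn lam v q ≤ t} ≤ 8 ^ n * (t : ℝ≥0∞) ^ d := by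
  classical
  have hsub : {v : Fin n → ℝ | v ∈ Icc 0 2 ∧ gridDist hdn lam v q ≤ t} ⊆
      ⋃ S ∈ Finset.powersetCard d (Finset.univ : Finset (Fin n)), pi univ fun i =>
        if i ∈ S then {x : ℝ | x ∈ Icc (0:ℝ) 2 ∧ evenDist (q i / lam - x) ≤ t} else Icc (0:ℝ) 2 := by
    rintro v ⟨⟨h0, h2⟩, ht⟩
    obtain ⟨S, hS, hb⟩ := ordStat_exists hdn fun i => evenDist (q i / lam - v i)
    simp only [mem_iUnion, exists_prop]
    refine ⟨S, Finset.mem_powersetCard.2 ⟨Finset.subset_univ _, hS⟩, fun i _ => ?_⟩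
    by_cases hi : i ∈ S
    · simp only [if_pos hi]
      refine ⟨⟨h0 i, h2 i⟩, ?_⟩
      rw [gridDist, hb] at ht
      exact (Finset.le_sup (f := fun i => evenDist (q i / lam - v i)) hi).trans ht
    · simp only [if_neg hi]; exact ⟨h0 i, h2 i⟩
  refine (measure_mono hsub).trans ((measure_biUnion_finset_le _ _).trans ?_)
  have hone : ∀ S ∈ Finset.powersetCard d (Finset.univ : Finset (Fin n)),
      volume (pi univ fun i =>
        if i ∈ S then {x : ℝ | x ∈ Icc (0:ℝ) 2 ∧ evenDist (q i / lam - x) ≤ t} else Icc (0:ℝ) 2)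
      ≤ 4 ^ n * (t : ℝ≥0∞) ^ d := by
    intro S hS
    have hc := (Finset.mem_powersetCard.1 hS).2
    rw [volume_pi_pi]
    calc _ ≤ ∏ i : Fin n, (4 : ℝ≥0∞) * (if i ∈ S then (t : ℝ≥0∞) else 1) := by
          refine Finset.prod_le_prod' fun i _ => ?_
          split_ifs
          · exact evenDist_volume _ _
          · rw [Real.volume_Icc]; norm_num
      _ = 4 ^ n * (t : ℝ≥0∞) ^ d := by
          rw [Finset.prod_mul_distrib, Finset.prod_const, Finset.card_univ, Fintype.card_fin,
            Finset.prod_ite_mem, Finset.univ_inter, Finset.prod_const, hc]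
  refine (Finset.sum_le_sum hone).trans ?_
  rw [Finset.sum_const, nsmul_eq_mul, ← mul_assoc]
  refine mul_le_mul_left ?_ _
  rw [Finset.card_powersetCard, Finset.card_univ, Fintype.card_fin,
    show (8:ℝ≥0∞) = 2 * 4 by norm_num, mul_pow]
  refine mul_le_mul_left ?_ _
  exact_mod_cast Nat.choose_le_two_pow n d


/-- A set whose `d`-dimensional measure is small at scale `lam` misses the dual `(n-d)`-skeleton of
most translated grids. -/
theorem gridDist_bad {n d : ℕ} (hdn : d ≤ n) {lam : ℝ} (hl : 0 < lam) {F : Set (Euc n)}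
    (hF : 8 ^ n * μH[(d:ℝ)] F < ENNReal.ofReal (lam ^ d)) :
    volume {v : Fin n → ℝ | v ∈ Icc 0 2 ∧ ∃ q ∈ F, gridDist hdn lam v q = 0} ≤ 1 := by
  have h8 : (8:ℝ≥0∞) ^ n ≠ 0 := by positivity
  have h8t : (8:ℝ≥0∞) ^ n ≠ ⊤ := ENNReal.pow_ne_top (by norm_num)
  have hF' : μH[(d:ℝ)] F < ENNReal.ofReal (lam ^ d) / 8 ^ n := by
    rw [ENNReal.lt_div_iff_mul_lt (Or.inl h8) (Or.inl h8t), mul_comm]; exact hF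
  rw [Measure.hausdorffMeasure_apply] at hF'
  have hF1 := lt_of_le_of_lt (le_iSup₂ (f := fun (r : ℝ≥0∞) (_ : 0 < r) =>
    ⨅ (t : ℕ → Set (Euc n)) (_ : F ⊆ ⋃ n, t n) (_ : ∀ n, ediam (t n) ≤ r),
      ∑' n, ⨆ _ : (t n).Nonempty, ediam (t n) ^ (d:ℝ)) 1 one_pos) hF'
  simp only [iInf_lt_iff] at hF1
  obtain ⟨t, hcov, hdiam, hsum⟩ := hF1
  set r : ℕ → ℝ≥0 := fun j => Real.toNNReal ((ediam (t j)).toReal / lam) with hr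
  have hone : ∀ j, volume {v : Fin n → ℝ | v ∈ Icc 0 2 ∧ ∃ q ∈ F ∩ t j, gridDist hdn lam v q = 0} ≤
      8 ^ n / ENNReal.ofReal (lam ^ d) * ⨆ _ : (t j).Nonempty, ediam (t j) ^ (d:ℝ) := by
    intro j
    rcases (F ∩ t j).eq_empty_or_nonempty with he | ⟨p, hp⟩
    · simp [he]
    · have hne : (t j).Nonempty := ⟨p, hp.2⟩
      have hfin : ediam (t j) ≠ ⊤ := ((hdiam j).trans_lt ENNReal.one_lt_top).ne
      simp only [hne, iSup_pos]
      have hsub : {v : Fin n → ℝ | v ∈ Icc 0 2 ∧ ∃ q ∈ F ∩ t j, gridDist hdn lam v q = 0} ⊆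
          {v : Fin n → ℝ | v ∈ Icc 0 2 ∧ gridDist hdn lam v p ≤ r j} := by
        rintro v ⟨hv, q, hq, h0⟩
        refine ⟨hv, ?_⟩
        rw [← NNReal.coe_le_coe, hr]
        simp only
        rw [Real.coe_toNNReal _ (by positivity)]
        have h1 := gridDist_lip2 hdn hl v v p q
        rw [h0, dist_self] at h1
        have h2 : dist p q ≤ (ediam (t j)).toReal := by
          rw [dist_edist]
          exact ENNReal.toReal_mono hfin (edist_le_ediam_of_mem hp.2 hq.2)
        have h3 : dist p q / lam ≤ (ediam (t j)).toReal / lam := by gcongr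
        simp at h1
        linarith
      refine (measure_mono hsub).trans ((gridDist_volume hdn lam p (r j)).trans (le_of_eq ?_))
      rw [div_eq_mul_inv, mul_assoc]
      congr 1
      have h4 : (r j : ℝ≥0∞) = ediam (t j) / ENNReal.ofReal lam := by
        rw [hr]
        change ENNReal.ofReal _ = _
        rw [ENNReal.ofReal_div_of_pos hl, ENNReal.ofReal_toReal hfin]
      rw [h4, ENNReal.rpow_natCast, ENNReal.ofReal_pow hl.le, ENNReal.div_eq_inv_mul, mul_pow,
        ENNReal.inv_pow]
  have hsub : {v : Fin n → ℝ | v ∈ Icc 0 2 ∧ ∃ q ∈ F, gridDist hdn lam v q = 0} ⊆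
      ⋃ j, {v : Fin n → ℝ | v ∈ Icc 0 2 ∧ ∃ q ∈ F ∩ t j, gridDist hdn lam v q = 0} := by
    rintro v ⟨hv, q, hq, h0⟩
    obtain ⟨j, hj⟩ := mem_iUnion.1 (hcov hq)
    exact mem_iUnion.2 ⟨j, hv, q, ⟨hq, hj⟩, h0⟩
  refine (measure_mono hsub).trans ((measure_iUnion_le _).trans ((ENNReal.tsum_le_tsum hone).trans ?_))
  rw [ENNReal.tsum_mul_left]
  refine (mul_le_mul_right hsum.le _).trans ?_
  have hl0 : ENNReal.ofReal (lam ^ d) ≠ 0 := by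
    rw [Ne, ENNReal.ofReal_eq_zero, not_le]; positivity
  rw [ENNReal.div_eq_inv_mul, ENNReal.div_eq_inv_mul, mul_assoc, ← mul_assoc (8 ^ n : ℝ≥0∞),
    ENNReal.mul_inv_cancel h8 h8t, one_mul, ENNReal.inv_mul_cancel hl0 ENNReal.ofReal_ne_top]

/-- Averaging over the translations `v` of the grid: some grid has its dual skeleton at positive
distance from the compact set `F`, and few points of `A` at distance less than `χ` from it. -/
theorem exists_grid {n d : ℕ} (hd : 1 ≤ d) (hdn : d ≤ n) {lam : ℝ} (hl : 0 < lam)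
    {F A : Set (Euc n)} (hFc : IsCompact F) (hF : 8 ^ n * μH[(d:ℝ)] F < ENNReal.ofReal (lam ^ d))
    (hA : MeasurableSet A) (hAfin : μH[(d:ℝ)] A < ⊤) {χ : Euc n → ℝ≥0} (hχ : Continuous χ)
    (hpos : ∀ q ∈ A, 0 < χ q) :
    ∃ v : Fin n → ℝ, (∃ m₀ : ℝ≥0, 0 < m₀ ∧ ∀ q ∈ F, m₀ ≤ gridDist hdn lam v q) ∧
      ∫⁻ q in A ∩ {q | gridDist hdn lam v q ≤ χ q}, ((χ q : ℝ≥0∞)⁻¹) ^ d ∂μH[(d:ℝ)] ≤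
        8 ^ n * μH[(d:ℝ)] A := by
  set B : Set (Fin n → ℝ) := {v | v ∈ Icc 0 2 ∧ ∃ q ∈ F, gridDist hdn lam v q = 0} with hB
  have hBv : volume B ≤ 1 := gridDist_bad hdn hl hF
  set μ := (μH[(d:ℝ)] : Measure (Euc n)).restrict A with hμ
  have : IsFiniteMeasure μ := ⟨by rw [hμ, Measure.restrict_apply_univ]; exact hAfin⟩
  set Q : Set (Fin n → ℝ) := Icc 0 2 with hQ
  have hQv : volume Q = 2 ^ n := by
    rw [hQ, Real.volume_Icc_pi]; simp
  set D : Set ((Fin n → ℝ) × Euc n) := {z | gridDist hdn lam z.1 z.2 ≤ χ z.2} with hD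
  have hDm : MeasurableSet D :=
    (isClosed_le (gridDist_continuous hdn hl) (hχ.comp continuous_snd)).measurableSet
  set g : (Fin n → ℝ) → Euc n → ℝ≥0∞ := fun v q =>
    D.indicator (fun z => ((χ z.2 : ℝ≥0∞)⁻¹) ^ d) (v, q) with hg
  have hgm : Measurable (Function.uncurry g) := by
    refine Measurable.indicator ?_ hDm
    exact ((hχ.measurable.coe_nnreal_ennreal.comp measurable_snd).inv).pow_const d
  set Φ : (Fin n → ℝ) → ℝ≥0∞ := fun v => ∫⁻ q, g v q ∂μ with hΦ
  have hΦm : Measurable Φ := hgm.lintegral_prod_right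
  have hintg : ∫⁻ v in Q, Φ v ≤ 8 ^ n * μH[(d:ℝ)] A := by
    rw [hΦ, lintegral_lintegral_swap hgm.aemeasurable]
    calc _ ≤ ∫⁻ q in A, (8:ℝ≥0∞) ^ n ∂μH[(d:ℝ)] := by
          refine setLIntegral_mono' hA fun q hq => ?_
          have h1 : ∀ v, g v q = {v : Fin n → ℝ | gridDist hdn lam v q ≤ χ q}.indicator
            (fun _ => ((χ q : ℝ≥0∞)⁻¹) ^ d) v := by
            intro v; simp [hg, hD, indicator]
          have hms : MeasurableSet {v : Fin n → ℝ | gridDist hdn lam v q ≤ χ q} :=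
            (measurable_id.prodMk measurable_const : Measurable fun v : Fin n → ℝ => (v, q)) hDm
          simp_rw [h1]
          rw [lintegral_indicator hms, setLIntegral_const, Measure.restrict_apply hms]
          have h2 := gridDist_volume hdn lam q (χ q)
          have h3 : {v : Fin n → ℝ | gridDist hdn lam v q ≤ χ q} ∩ Q =
            {v : Fin n → ℝ | v ∈ Icc 0 2 ∧ gridDist hdn lam v q ≤ χ q} := by
            ext v; exact and_comm
          rw [h3]
          refine (mul_le_mul_right h2 _).trans (le_of_eq ?_)
          rw [mul_left_comm, ← mul_pow, ENNReal.inv_mul_cancel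
            (by simpa using (hpos q hq).ne') ENNReal.coe_ne_top, one_pow, mul_one]
      _ = _ := by rw [setLIntegral_const]
  have hQB : 1 ≤ volume (Q \ B) := by
    have h1 : volume Q ≤ volume B + volume (Q \ B) := by
      refine (measure_mono ?_).trans (measure_union_le _ _)
      intro v hv
      by_cases h : v ∈ B
      exacts [Or.inl h, Or.inr ⟨hv, h⟩]
    have h2 : (2:ℝ≥0∞) ≤ volume Q := by
      rw [hQv]
      calc (2:ℝ≥0∞) = 2 ^ 1 := by norm_num
        _ ≤ 2 ^ n := pow_le_pow_right₀ (by norm_num) (by omega)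
    have h3 : (1:ℝ≥0∞) + 1 ≤ 1 + volume (Q \ B) := by
      rw [one_add_one_eq_two]
      exact h2.trans (h1.trans (add_le_add_left hBv _))
    exact (ENNReal.add_le_add_iff_left ENNReal.one_ne_top).1 h3
  have hQBt : volume (Q \ B) ≠ ⊤ := by
    refine ((measure_mono sdiff_subset).trans_lt (?_ : volume Q < ⊤)).ne
    rw [hQv]; exact ENNReal.pow_lt_top (by norm_num)
  obtain ⟨v, hv, hle⟩ := exists_le_setLAverage (μ := volume) (s := Q \ B) (f := Φ)
    (one_pos.trans_le hQB).ne' hQBt hΦm.aemeasurable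
  refine ⟨v, ?_, ?_⟩
  · rcases F.eq_empty_or_nonempty with he | hne
    · exact ⟨1, one_pos, by simp [he]⟩
    · have hc : Continuous fun q => gridDist hdn lam v q :=
        gridDist_continuous_right hdn hl v
      obtain ⟨p, hp, hmin⟩ := hFc.exists_isMinOn hne hc.continuousOn
      refine ⟨gridDist hdn lam v p, pos_iff_ne_zero.2 fun h0 => hv.2 ⟨hv.1, p, hp, h0⟩, hmin⟩
  · have h1 : ∫⁻ q in A ∩ {q | gridDist hdn lam v q ≤ χ q}, ((χ q : ℝ≥0∞)⁻¹) ^ d ∂μH[(d:ℝ)] =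
        Φ v := by
      have hms : MeasurableSet {q : Euc n | gridDist hdn lam v q ≤ χ q} :=
        (measurable_const.prodMk measurable_id : Measurable fun q : Euc n => (v, q)) hDm
      rw [hΦ, inter_comm, ← Measure.restrict_restrict hms, ← lintegral_indicator hms]
      refine lintegral_congr fun q => ?_
      simp [hg, hD, indicator]
    rw [h1]
    refine hle.trans ?_
    rw [setLAverage_eq]
    have h5 : ∫⁻ v in Q \ B, Φ v ≤ 8 ^ n * μH[(d:ℝ)] A :=
      (lintegral_mono_set (μ := volume) (f := Φ) (sdiff_subset : Q \ B ⊆ Q)).trans hintg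
    exact ENNReal.div_le_of_le_mul (h5.trans (le_mul_of_one_le_right zero_le hQB))

/-! ### One Federer–Fleming step -/

/-- A cutoff that vanishes on the ball of radius `K * lam` about `y` and equals one outside the ball
of radius `(K + 1) * lam`. -/
def cutoff {n : ℕ} (y : Euc n) (lam K : ℝ) (q : Euc n) : ℝ≥0 :=
  min 1 (Real.toNNReal (dist q y / lam - K))

theorem cutoff_coe {n : ℕ} (y : Euc n) (lam K : ℝ) (q : Euc n) :
    (cutoff y lam K q : ℝ) = min 1 (max (dist q y / lam - K) 0) := by
  simp [cutoff]

theorem cutoff_lip {n : ℕ} (y : Euc n) {lam : ℝ} (hl : 0 < lam) (K : ℝ) (q p : Euc n) :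
    |(cutoff y lam K q : ℝ) - cutoff y lam K p| ≤ dist q p / lam := by
  rw [cutoff_coe, cutoff_coe]
  refine (abs_min_sub_min_le_max _ _ _ _).trans ?_
  rw [sub_self, abs_zero]
  refine max_le (by positivity) ((abs_max_sub_max_le_max _ _ _ _).trans ?_)
  rw [sub_self, abs_zero]
  refine max_le ?_ (by positivity)
  rw [show dist q y / lam - K - (dist p y / lam - K) = (dist q y - dist p y) / lam by ring,
    abs_div, abs_of_pos hl]
  gcongr
  exact abs_dist_sub_le q p y

theorem cutoff_continuous {n : ℕ} (y : Euc n) {lam : ℝ} (hl : 0 < lam) (K : ℝ) :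
    Continuous (cutoff y lam K) := by
  refine (LipschitzWith.of_dist_le_mul (K := Real.toNNReal (1 / lam)) fun q p => ?_).continuous
  rw [Real.coe_toNNReal _ (by positivity), NNReal.dist_eq, one_div_mul_eq_div]
  exact cutoff_lip y hl K q p

theorem cutoff_le_one {n : ℕ} (y : Euc n) (lam K : ℝ) (q : Euc n) : cutoff y lam K q ≤ 1 :=
  min_le_left _ _

theorem cutoff_ge {n : ℕ} {y : Euc n} {lam K s : ℝ} (hl : 0 < lam) (hs : s ≤ 1) {q : Euc n}
    (h : (K + s) * lam ≤ dist q y) : s ≤ cutoff y lam K q := by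
  rw [cutoff_coe]
  refine le_min hs (le_max_of_le_left ?_)
  rw [le_sub_iff_add_le, le_div_iff₀ hl]; linarith

theorem cutoff_pos_iff {n : ℕ} {y : Euc n} {lam K : ℝ} (hl : 0 < lam) {q : Euc n} :
    0 < cutoff y lam K q ↔ K * lam < dist q y := by
  rw [cutoff, lt_min_iff, Real.toNNReal_pos, sub_pos, lt_div_iff₀ hl]
  exact and_iff_right one_pos

/-- The map that expands, by the factor `1 / M q`, each cell of the grid of mesh `2 * lam` with
vertices at `lam * (v + odd)` away from its centre, one coordinate at a time. -/
def gridMap {n : ℕ} (lam : ℝ) (v : Fin n → ℝ) (M : Euc n → ℝ) (q : Euc n) : Euc n :=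
  WithLp.toLp 2 fun i => lam * (v i + snap (q i / lam - v i) (M q))

theorem norm_le_sum_abs {n : ℕ} (z : Euc n) : ‖z‖ ≤ ∑ i, |z i| := by
  conv_lhs => rw [euc_eq_sum z]
  refine (norm_sum_le _ _).trans (Finset.sum_le_sum fun i _ => ?_)
  simp [norm_smul]

theorem abs_coord_sub_le {n : ℕ} (q p : Euc n) (i : Fin n) : |q i - p i| ≤ dist q p := by
  rw [dist_eq_norm]
  exact PiLp.norm_apply_le (q - p) i

theorem gridMap_dist_le {n : ℕ} {lam μ : ℝ} (hl : 0 < lam) (hμ : 0 < μ) (v : Fin n → ℝ)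
    {M : Euc n → ℝ} {q p : Euc n} (hq : μ ≤ M q) (hp : μ ≤ M p) (hq1 : M q ≤ 1)
    (hM : |M q - M p| ≤ dist q p / lam) :
    dist (gridMap lam v M q) (gridMap lam v M p) ≤ 2 * n / μ * dist q p := by
  rw [dist_eq_norm]
  refine (norm_le_sum_abs _).trans ?_
  have h1 : ∀ i, |(gridMap lam v M q - gridMap lam v M p) i| ≤ 2 * dist q p / μ := by
    intro i
    have h2 : (gridMap lam v M q - gridMap lam v M p) i =
        lam * (snap (q i / lam - v i) (M q) - snap (p i / lam - v i) (M p)) := by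
      simp [gridMap]; ring
    rw [h2, abs_mul, abs_of_pos hl]
    have h3 := snap_lip (q i / lam - v i) (p i / lam - v i) hμ hq hp hq1
    have h4 : |q i / lam - v i - (p i / lam - v i)| ≤ dist q p / lam := by
      rw [show q i / lam - v i - (p i / lam - v i) = (q i - p i) / lam by ring, abs_div,
        abs_of_pos hl]
      gcongr
      exact abs_coord_sub_le q p i
    calc _ ≤ lam * ((dist q p / lam + dist q p / lam) / μ) := by
          refine mul_le_mul_of_nonneg_left (h3.trans ?_) hl.le
          gcongr
      _ = _ := by field_simp; ring
  refine (Finset.sum_le_sum fun i _ => h1 i).trans (le_of_eq ?_)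
  rw [Finset.sum_const, Finset.card_univ, Fintype.card_fin, nsmul_eq_mul]; ring

/-- A coordinate plane of dimension less than `d` is `d`-null. -/
theorem coordPlane_null {n d : ℕ} (S : Finset (Fin n)) (hS : n < S.card + d) (a : Fin n → ℝ) :
    μH[(d:ℝ)] {z : Euc n | ∀ i ∈ S, z i = a i} = 0 := by
  classical
  set g : ({i // i ∉ S} → ℝ) → Euc n := fun w =>
    WithLp.toLp 2 fun i => if h : i ∈ S then a i else w ⟨i, h⟩ with hg
  have hgc : ContDiff ℝ 1 g := by
    rw [contDiff_euclidean]
    intro i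
    by_cases h : i ∈ S
    · simp only [hg, h, dite_true]; exact contDiff_const
    · simp only [hg, h, dite_false]; exact contDiff_apply ℝ ℝ _
  have hsub : {z : Euc n | ∀ i ∈ S, z i = a i} ⊆ range g := by
    intro z hz
    refine ⟨fun i => z i, ?_⟩
    ext i
    by_cases h : i ∈ S
    · simp [hg, h, hz i h]
    · simp [hg, h]
  refine measure_mono_null hsub ?_
  have h1 := hgc.dimH_range_le
  have h2 : Module.finrank ℝ ({i // i ∉ S} → ℝ) < d := by
    rw [Module.finrank_fintype_fun_eq_card, Fintype.card_subtype_compl, Fintype.card_fin]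
    have : Fintype.card {i // i ∈ S} = S.card := by simp
    have hSn : S.card ≤ n := by simpa using S.card_le_univ
    omega
  have h3 := hausdorffMeasure_of_dimH_lt (s := range g) (d := (d:ℝ≥0)) (by
    refine h1.trans_lt ?_
    exact_mod_cast h2)
  simpa using h3

/-- Where the expansion factor is the reciprocal of `gridDist`, the image lies in the
`(d-1)`-skeleton of the grid. -/
theorem gridMap_image_null {n d : ℕ} (hd : 1 ≤ d) (hdn : d ≤ n) (lam : ℝ)
    (v : Fin n → ℝ) {M : Euc n → ℝ} {S : Set (Euc n)}
    (hS : ∀ q ∈ S, 0 < M q ∧ M q = gridDist hdn lam v q) :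
    μH[(d:ℝ)] (gridMap lam v M '' S) = 0 := by
  classical
  have hsub : gridMap lam v M '' S ⊆ ⋃ T : {T : Finset (Fin n) // n < T.card + d},
      ⋃ k : Fin n → ℤ, {z : Euc n | ∀ i ∈ T.1, z i = lam * (v i + (2 * k i + 1))} := by
    rintro _ ⟨q, hq, rfl⟩
    obtain ⟨h0, h1⟩ := hS q hq
    set T := Finset.univ.filter fun i => ordStat hdn (fun i => evenDist (q i / lam - v i)) ≤
      evenDist (q i / lam - v i) with hT
    have hTc := ordStat_card hd hdn fun i => evenDist (q i / lam - v i)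
    have hk : ∀ i, ∃ k : ℤ, i ∈ T → snap (q i / lam - v i) (M q) = 2 * k + 1 := by
      intro i
      by_cases hi : i ∈ T
      · obtain ⟨k, hk⟩ := snap_odd h0 (x := q i / lam - v i) (by
          rw [h1]; exact_mod_cast (Finset.mem_filter.1 hi).2)
        exact ⟨k, fun _ => hk⟩
      · exact ⟨0, fun h => absurd h hi⟩
    choose k hk using hk
    refine mem_iUnion.2 ⟨⟨T, hTc⟩, mem_iUnion.2 ⟨k, fun i hi => ?_⟩⟩
    simp only [gridMap]
    rw [hk i hi]
  refine measure_mono_null hsub ?_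
  refine measure_iUnion_null fun T => measure_iUnion_null fun k => ?_
  exact coordPlane_null T.1 T.2 fun i => lam * (v i + (2 * k i + 1))


/-- One step of the Federer–Fleming argument: where `E` has small measure at scale `lam`, its part in
the ball of radius `(K + 1) * lam` can be deformed to a null set, up to the cost of the
transition annulus. -/
theorem grid_step {n d : ℕ} (hd : 1 ≤ d) (hdn : d ≤ n) {U E : Set (Euc n)} {h : ℝ → ℝ≥0∞}
    (hU : IsOpen U) (hE : IsAAlmostMinimal n d U E h) {y : Euc n} {lam K δ : ℝ} (hl : 0 < lam)
    (hK : 0 < K) (hB : closedBall y ((K + 1) * lam) ⊆ U) (hδ : 2 * ((K + 1) * lam) < δ)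
    (hsmall : 8 ^ n * μH[(d:ℝ)] (E ∩ ball y ((K + 1) * lam)) < ENNReal.ofReal (lam ^ d)) :
    μH[(d:ℝ)] (E ∩ ball y ((K + 1) * lam)) ≤
      ENNReal.ofReal ((8 * n) ^ d) * (8 ^ n *
        μH[(d:ℝ)] ((E ∩ ball y ((K + 1) * lam)) \ closedBall y (K * lam))) +
      h δ * ENNReal.ofReal (δ ^ d) := by
  have hEm := hE.measurableSet hU
  set χ := cutoff y lam K with hχ
  have hχc : Continuous χ := cutoff_continuous y hl K
  set G := E ∩ ball y ((K + 1) * lam) with hG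
  have hGm : MeasurableSet G := hEm.inter measurableSet_ball
  set F := E ∩ closedBall y ((K + 1 / 2) * lam) with hF
  have hFG : F ⊆ G := by
    refine inter_subset_inter_right _ (closedBall_subset_ball ?_)
    nlinarith
  have hFc : IsCompact F := by
    have h1 : F = closure E ∩ closedBall y ((K + 1 / 2) * lam) := by
      refine Subset.antisymm (inter_subset_inter_left _ subset_closure) fun q hq => ⟨?_, hq.2⟩
      refine hE.2.1 ⟨hq.1, hB (closedBall_subset_closedBall ?_ hq.2)⟩
      nlinarith
    rw [h1, inter_comm]
    exact (isCompact_closedBall _ _).inter_right isClosed_closure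
  set A := G \ closedBall y (K * lam) with hA
  have hAm : MeasurableSet A := hGm.inter measurableSet_closedBall.compl
  have hGfin : μH[(d:ℝ)] G < ⊤ :=
    (measure_mono (inter_subset_inter_right _ ball_subset_closedBall)).trans_lt (hE.2.2.1 _ _ hB)
  have hApos : ∀ q ∈ A, 0 < χ q := fun q hq => by
    rw [hχ, cutoff_pos_iff hl]
    simpa using hq.2
  obtain ⟨v, ⟨m₁, hm₁, hm₁F⟩, hintg⟩ := exists_grid hd hdn hl hFc
    (lt_of_le_of_lt (mul_le_mul_right (measure_mono hFG) _) hsmall) hAm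
    ((measure_mono sdiff_subset).trans_lt hGfin) hχc hApos
  set m := gridDist hdn lam v with hm
  set m₀ : ℝ≥0 := min m₁ (1 / 2) with hm₀
  have hm₀pos : 0 < m₀ := lt_min hm₁ (by positivity)
  have hm₀half : m₀ ≤ 1 / 2 := min_le_right _ _
  have hm₀one : m₀ ≤ 1 := hm₀half.trans (by rw [← NNReal.coe_le_coe]; push_cast; norm_num)
  set N : Euc n → ℝ≥0 := fun q => max (max m₀ (m q)) (χ q) with hN
  set M : Euc n → ℝ := fun q => N q with hM
  have hN1 : ∀ q, M q ≤ 1 := fun q => by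
    have : N q ≤ 1 := max_le (max_le hm₀one (gridDist_le_one _ _ _ _)) (cutoff_le_one _ _ _ _)
    exact_mod_cast this
  have hN0 : ∀ q, (m₀:ℝ) ≤ M q := fun q => by
    have : m₀ ≤ N q := (le_max_left _ _).trans (le_max_left _ _)
    exact_mod_cast this
  have hNχ : ∀ q, (χ q:ℝ) ≤ M q := fun q => by
    have : χ q ≤ N q := le_max_right _ _
    exact_mod_cast this
  have hMlip : ∀ q p, |M q - M p| ≤ dist q p / lam := by
    intro q p
    have e : ∀ q, M q = max (max (m₀:ℝ) (m q)) (χ q) := fun q => by simp [hM, hN]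
    rw [e, e]
    refine (abs_max_sub_max_le_max _ _ _ _).trans (max_le ?_ (cutoff_lip y hl K q p))
    refine (abs_max_sub_max_le_max _ _ _ _).trans (max_le ?_ (gridDist_lip hdn hl v q p))
    rw [sub_self, abs_zero]; positivity
  set f := gridMap lam v M with hf
  have hlip : ∀ μ : ℝ, 0 < μ → LipschitzOnWith (Real.toNNReal (2 * n / μ)) f {q | μ ≤ M q} := by
    intro μ hμ
    refine LipschitzOnWith.of_dist_le_mul fun q hq p hp => ?_
    rw [Real.coe_toNNReal _ (by positivity)]
    exact gridMap_dist_le hl hμ v hq hp (hN1 q) (hMlip q p)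
  have hfL : LipschitzWith (Real.toNNReal (2 * n / m₀)) f := by
    have := hlip m₀ (by exact_mod_cast hm₀pos)
    rw [show {q | (m₀:ℝ) ≤ M q} = univ from eq_univ_of_forall hN0] at this
    exact lipschitzOnWith_univ.1 this
  have hid : ∀ q, q ∉ ball y ((K + 1) * lam) → f q = q := by
    intro q hq
    rw [mem_ball, not_lt] at hq
    have h1 : M q = 1 := le_antisymm (hN1 q) ((cutoff_ge hl le_rfl hq).trans (hNχ q))
    ext i
    simp only [hf, gridMap, h1, snap_one]
    field_simp; ring
  -- `P` is mapped to the skeleton; off `P` the Lipschitz constant is of order `1 / χ`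
  set P : Set (Euc n) := {q | χ q ≤ m q} with hP
  have hPm : MeasurableSet P :=
    (isClosed_le hχc (gridDist_continuous_right hdn hl v)).measurableSet
  set k : Euc n → ℝ≥0∞ := Pᶜ.indicator fun q => ENNReal.ofReal ((8 * n) ^ d) * ((χ q : ℝ≥0∞)⁻¹) ^ d
    with hk
  have hkey : ∀ S, MeasurableSet S → S ⊆ G → μH[(d:ℝ)] (f '' S) ≤ ∫⁻ q in S, k q ∂μH[(d:ℝ)] := by
    intro S hSm hSG
    refine image_measure_le_of_split (F := G) hPm ?_ ?_ hSm hSG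
    · -- here `m q` dominates `m₀`, because `χ ≥ 1 / 2` off `F`, so that `M q = m q`
      intro S hSm hS
      have : μH[(d:ℝ)] (f '' S) = 0 := by
        refine gridMap_image_null hd hdn lam v fun q hq => ?_
        refine ⟨lt_of_lt_of_le (by exact_mod_cast hm₀pos) (hN0 q), ?_⟩
        have h1 : χ q ≤ m q := (hS hq).2
        have h2 : m₀ ≤ m q := by
          by_cases hqF : q ∈ F
          · exact (min_le_left _ _).trans (hm₁F q hqF)
          · refine le_trans ?_ h1
            have h3 : (K + 1 / 2) * lam < dist q y := by
              by_contra hc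
              exact hqF ⟨(hS hq).1.1, mem_closedBall.2 (not_lt.1 hc)⟩
            have h4 := cutoff_ge (y := y) (K := K) hl (by norm_num : (1/2:ℝ) ≤ 1) h3.le
            refine hm₀half.trans ?_
            rw [← NNReal.coe_le_coe]; push_cast; exact h4
        have h5 : N q = m q := by
          simp only [hN]
          rw [max_eq_right h2, max_eq_left h1]
        simp only [hM, h5]
        rfl
      rw [this]; exact zero_le
    · intro S hSm hS
      refine image_measure_le_of_local (F := G \ P) ?_ hSm hS
      intro q₀ hq₀
      have ht : 0 < χ q₀ := by
        have : ¬ χ q₀ ≤ m q₀ := hq₀.2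
        exact lt_of_le_of_lt zero_le (not_le.1 this)
      have ht' : (0:ℝ) < χ q₀ := by exact_mod_cast ht
      have hcr : Continuous fun q => (χ q : ℝ) := NNReal.continuous_coe.comp hχc
      refine ⟨{q | (χ q₀ : ℝ) / 2 < χ q ∧ (χ q : ℝ) < 2 * χ q₀}, ?_, ?_⟩
      · refine ((isOpen_lt continuous_const hcr).inter (isOpen_lt hcr continuous_const)).mem_nhds ?_
        constructor <;> simp only [mem_ofPred_eq] <;> linarith
      · intro S hSm hS
        have hLS : LipschitzOnWith (Real.toNNReal (2 * n / ((χ q₀ : ℝ) / 2))) f S :=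
          (hlip _ (by positivity)).mono fun q hq => (hS hq).2.1.le.trans (hNχ q)
        refine lipschitz_image_le_lintegral hLS hSm fun q hq => ?_
        have hq2 := (hS hq).2
        have hqpos : (0:ℝ) < χ q := lt_trans (by positivity) hq2.1
        have hqP : q ∈ Pᶜ := (hS hq).1.2
        simp only [hk]
        rw [indicator_of_mem hqP, ENNReal.ofReal_pow (by positivity), ← mul_pow]
        gcongr
        have e1 : ((χ q : ℝ≥0∞)⁻¹) = ENNReal.ofReal ((χ q : ℝ)⁻¹) := by
          rw [ENNReal.ofReal_inv_of_pos hqpos, ENNReal.ofReal_coe_nnreal]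
        rw [e1, ← ENNReal.ofReal_mul (by positivity)]
        change ENNReal.ofReal _ ≤ _
        refine ENNReal.ofReal_le_ofReal ?_
        rw [← div_eq_mul_inv, div_le_div_iff₀ (by positivity) hqpos]
        nlinarith [hq2.2, (Nat.cast_nonneg n : (0:ℝ) ≤ n)]
  refine (competitor hU hE (by positivity) hB hδ hfL hid k hkey).trans ?_
  refine add_le_add_left ?_ _
  rw [hk, lintegral_indicator hPm.compl, Measure.restrict_restrict hPm.compl, lintegral_const_mul' _ _
    ENNReal.ofReal_ne_top]
  refine mul_le_mul_right (le_trans ?_ hintg) _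
  refine lintegral_mono_set ?_
  rintro q ⟨hqP, hqG⟩
  have hlt : m q < χ q := not_le.1 hqP
  refine ⟨⟨hqG, ?_⟩, hlt.le⟩
  have := (cutoff_pos_iff hl).1 (lt_of_le_of_lt zero_le hlt : 0 < χ q)
  simpa using this

/-! ### Lower regularity -/

/-- A density bound that is small enough propagates to a slightly smaller concentric ball. -/
theorem density_step {n d : ℕ} (hd : 1 ≤ d) (hdn : d ≤ n) :
    ∃ κ η ε : ℝ, 0 < κ ∧ κ < 1 ∧ 1 / 2 ≤ κ ^ d ∧ 0 < η ∧ η ≤ 1 / (4 * 2 ^ d) ∧ 0 < ε ∧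
      ∀ (U E : Set (Euc n)) (h : ℝ → ℝ≥0∞), IsOpen U → IsAAlmostMinimal n d U E h →
      ∀ (z : Euc n) (ρ : ℝ), 0 < ρ → closedBall z ρ ⊆ U → h (3 * ρ) ≤ ENNReal.ofReal ε →
        μH[(d:ℝ)] (E ∩ ball z ρ) ≤ ENNReal.ofReal (η * ρ ^ d) →
        μH[(d:ℝ)] (E ∩ ball z (κ * ρ)) ≤ ENNReal.ofReal (η * (κ * ρ) ^ d) := by
  set C : ℝ := (8 * n) ^ d * 8 ^ n with hC
  have hn1 : (1:ℝ) ≤ n := by exact_mod_cast hd.trans hdn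
  have hd1 : (1:ℝ) ≤ d := by exact_mod_cast hd
  have hC1 : 1 ≤ C := by
    have h1 : (1:ℝ) ≤ (8 * n) ^ d := one_le_pow₀ (by linarith)
    have h2 : (1:ℝ) ≤ 8 ^ n := one_le_pow₀ (by norm_num)
    nlinarith
  -- `C` is the constant of `grid_step`; `L` is chosen so that `κ ^ d ≥ 1 - 1 / (2 * C)`
  set L : ℝ := 2 * C * d with hL
  have hL2 : 2 ≤ L := by nlinarith
  set K : ℝ := L - 1 with hK
  have hK0 : 0 < K := by linarith
  set κ : ℝ := K / L with hκ
  have hLpos : 0 < L := by linarith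
  have hκ0 : 0 < κ := div_pos hK0 hLpos
  have hκ1 : κ < 1 := by rw [hκ, div_lt_one hLpos]; linarith
  have hκd : 1 - 1 / (2 * C) ≤ κ ^ d := by
    have h1 := one_add_mul_le_pow (a := -(1 / L)) (by
      have : 1 / L ≤ 1 / 2 := by gcongr
      linarith) d
    have h2 : 1 + -(1 / L) = κ := by rw [hκ, hK]; field_simp; ring
    rw [h2] at h1
    have h3 : (d:ℝ) * -(1 / L) = - (1 / (2 * C)) := by rw [hL]; field_simp
    linarith
  have hCi : 1 / (2 * C) ≤ 1 / 2 := by gcongr; linarith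
  have hη0 : 0 < min (1 / (4 * 2 ^ d)) (1 / (2 * 8 ^ n * L ^ d) : ℝ) := by positivity
  set η := min (1 / (4 * 2 ^ d)) (1 / (2 * 8 ^ n * L ^ d) : ℝ) with hη
  refine ⟨κ, η, η / (4 * C * 3 ^ d), hκ0, hκ1, by linarith, hη0, min_le_left _ _, by positivity, ?_⟩
  intro U E h hU hE z ρ hρ hB hh hG
  set lam := ρ / L with hlam
  have hl : 0 < lam := by positivity
  have e1 : (K + 1) * lam = ρ := by rw [hK, hlam]; field_simp; ring
  have e0 : K * lam = κ * ρ := by rw [hκ, hlam]; field_simp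
  have hsmall : 8 ^ n * μH[(d:ℝ)] (E ∩ ball z ((K + 1) * lam)) < ENNReal.ofReal (lam ^ d) := by
    rw [e1]
    refine (mul_le_mul_right hG _).trans_lt ?_
    rw [show (8:ℝ≥0∞) = ENNReal.ofReal 8 by simp, ← ENNReal.ofReal_pow (by norm_num),
      ← ENNReal.ofReal_mul (by positivity), ENNReal.ofReal_lt_ofReal_iff (by positivity)]
    have h1 : η ≤ 1 / (2 * 8 ^ n * L ^ d) := min_le_right _ _
    have h2 : (8:ℝ) ^ n * (η * ρ ^ d) ≤ 8 ^ n * (1 / (2 * 8 ^ n * L ^ d) * ρ ^ d) := by gcongr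
    have h3 : (8:ℝ) ^ n * (1 / (2 * 8 ^ n * L ^ d) * ρ ^ d) = lam ^ d / 2 := by
      rw [hlam, div_pow]; field_simp
    have h4 : 0 < lam ^ d := by positivity
    linarith
  have hstep := grid_step hd hdn hU hE hl hK0 (by rw [e1]; exact hB) (δ := 3 * ρ)
    (by rw [e1]; linarith) hsmall
  rw [e1, e0] at hstep
  have hEm := hE.measurableSet hU
  have hfin : μH[(d:ℝ)] (E ∩ ball z ρ) ≠ ⊤ := (hG.trans_lt ENNReal.ofReal_lt_top).ne
  set g1 := (μH[(d:ℝ)] (E ∩ ball z ρ)).toReal with hg1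
  set g0 := (μH[(d:ℝ)] (E ∩ ball z (κ * ρ))).toReal with hg0
  have hsub0 : E ∩ ball z (κ * ρ) ⊆ E ∩ ball z ρ :=
    inter_subset_inter_right _ (ball_subset_ball (by nlinarith))
  have hfin0 : μH[(d:ℝ)] (E ∩ ball z (κ * ρ)) ≠ ⊤ :=
    ((measure_mono hsub0).trans_lt hfin.lt_top).ne
  have hfinA : μH[(d:ℝ)] ((E ∩ ball z ρ) \ closedBall z (κ * ρ)) ≠ ⊤ :=
    ((measure_mono sdiff_subset).trans_lt hfin.lt_top).ne
  have hA : (μH[(d:ℝ)] ((E ∩ ball z ρ) \ closedBall z (κ * ρ))).toReal + g0 ≤ g1 := by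
    rw [hg0, hg1, ← ENNReal.toReal_add hfinA hfin0]
    refine ENNReal.toReal_mono hfin ?_
    rw [← measure_inter_add_sdiff (E ∩ ball z ρ) (measurableSet_closedBall (x := z) (ε := κ * ρ)),
      add_comm]
    refine add_le_add_left (measure_mono ?_) _
    exact fun q hq => ⟨hsub0 hq, ball_subset_closedBall hq.2⟩
  have hhf : h (3 * ρ) ≠ ⊤ := (hh.trans_lt ENNReal.ofReal_lt_top).ne
  have hreal : g1 ≤ C * (g1 - g0) + η / (4 * C * 3 ^ d) * (3 * ρ) ^ d := by
    have h1 := ENNReal.toReal_mono (ENNReal.add_ne_top.2 ⟨ENNReal.mul_ne_top ENNReal.ofReal_ne_top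
      (ENNReal.mul_ne_top (ENNReal.pow_ne_top (by norm_num)) hfinA),
      ENNReal.mul_ne_top hhf ENNReal.ofReal_ne_top⟩) hstep
    rw [ENNReal.toReal_add (ENNReal.mul_ne_top ENNReal.ofReal_ne_top
      (ENNReal.mul_ne_top (ENNReal.pow_ne_top (by norm_num)) hfinA))
      (ENNReal.mul_ne_top hhf ENNReal.ofReal_ne_top), ENNReal.toReal_mul, ENNReal.toReal_mul,
      ENNReal.toReal_mul, ENNReal.toReal_ofReal (by positivity),
      ENNReal.toReal_ofReal (by positivity), ENNReal.toReal_pow] at h1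
    have h2 : (h (3 * ρ)).toReal ≤ η / (4 * C * 3 ^ d) := by
      rw [← ENNReal.toReal_ofReal (r := η / (4 * C * 3 ^ d)) (by positivity)]
      exact ENNReal.toReal_mono ENNReal.ofReal_ne_top hh
    have h3 : (h (3 * ρ)).toReal * (3 * ρ) ^ d ≤ η / (4 * C * 3 ^ d) * (3 * ρ) ^ d := by gcongr
    have h4 : C * (μH[(d:ℝ)] ((E ∩ ball z ρ) \ closedBall z (κ * ρ))).toReal ≤ C * (g1 - g0) := by
      refine mul_le_mul_of_nonneg_left (by linarith) (by linarith)
    have h5 : (8:ℝ≥0∞).toReal = 8 := by norm_num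
    rw [h5, ← mul_assoc] at h1
    linarith
  have hg1le : g1 ≤ η * ρ ^ d := by
    rw [hg1]
    refine (ENNReal.toReal_mono ENNReal.ofReal_ne_top hG).trans_eq ?_
    rw [ENNReal.toReal_ofReal (by positivity)]
  rw [← ENNReal.ofReal_toReal hfin0]
  refine ENNReal.ofReal_le_ofReal ?_
  change g0 ≤ _
  have e5 : η / (4 * C * 3 ^ d) * (3 * ρ) ^ d = (η * ρ ^ d) / (4 * C) := by
    rw [mul_pow]; field_simp
  rw [e5] at hreal
  set w := η * ρ ^ d with hw
  have hw0 : 0 < w := by positivity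
  have hCpos : 0 < C := by linarith
  have h6 : C * g0 ≤ C * w - w + w / (4 * C) := by nlinarith
  have h7 : w / (4 * C) ≤ w / 2 := by gcongr; linarith
  have h8 : C * g0 ≤ C * ((1 - 1 / (2 * C)) * w) := by
    have : C * ((1 - 1 / (2 * C)) * w) = C * w - w / 2 := by field_simp
    linarith
  have h9 : g0 ≤ (1 - 1 / (2 * C)) * w := le_of_mul_le_mul_left h8 hCpos
  calc g0 ≤ (1 - 1 / (2 * C)) * w := h9
    _ ≤ κ ^ d * w := by gcongr
    _ = _ := by rw [mul_pow]; ring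

theorem exists_pow_scale {κ ρ s : ℝ} (hκ0 : 0 < κ) (hκ1 : κ < 1) (hs : 0 < s) (hsρ : s ≤ ρ) :
    ∃ j : ℕ, κ * (κ ^ j * ρ) < s ∧ s ≤ κ ^ j * ρ := by
  have hρ : 0 < ρ := hs.trans_le hsρ
  obtain ⟨j, h1, h2⟩ := exists_nat_pow_near_of_lt_one (x := s / ρ) (y := κ) (by positivity)
    ((div_le_one hρ).2 hsρ) hκ0 hκ1
  refine ⟨j, ?_, (div_le_iff₀ hρ).1 h2⟩
  rw [lt_div_iff₀ hρ, pow_succ] at h1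
  linarith

/-- Lower Ahlfors regularity of almost-minimal sets at points of their essential part. If the bound
fails at radius `s`, then `density_step` makes the density of `E` small at all points of `E` near `y` and
at all smaller scales, so small that twice the measure `H^d` on `E` near `y` is at most `H^d`. Hence
`E` is null near `y`. -/
theorem lower_regular {n d : ℕ} (hd : 1 ≤ d) (hdn : d ≤ n) :
    ∃ c₀ ε : ℝ, 0 < c₀ ∧ 0 < ε ∧
      ∀ (U E : Set (Euc n)) (h : ℝ → ℝ≥0∞), IsOpen U → IsGaugeFn h → IsAAlmostMinimal n d U E h →
      ∀ (y : Euc n) (R : ℝ), ball y R ⊆ U → (∀ ρ, 0 < ρ → 0 < μH[(d:ℝ)] (E ∩ ball y ρ)) →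
        h R ≤ ENNReal.ofReal ε →
        ∀ s, 0 < s → s < R → ENNReal.ofReal (c₀ * s ^ d) ≤ μH[(d:ℝ)] (E ∩ ball y s) := by
  obtain ⟨κ, η, ε, hκ0, hκ1, hκd, hη0, hη1, hε, hstep⟩ := density_step hd hdn
  refine ⟨η / 4 ^ d, ε, by positivity, hε, ?_⟩
  intro U E h hU hg hE y R hB hpos hh s hs hsR
  by_contra hcon
  rw [not_le] at hcon
  set r := s / 2 with hr
  have hr0 : 0 < r := by positivity
  have hEm := hE.measurableSet hU
  set F := E ∩ ball y (r / 2) with hF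
  have hFm : MeasurableSet F := hEm.inter measurableSet_ball
  have hup : ∀ z ∈ F, ∀ t, 0 < t → t ≤ r / 2 →
      μH[(d:ℝ)] (E ∩ ball z t) ≤ ENNReal.ofReal (2 * η * t ^ d) := by
    intro z hz t ht htr
    have hzy : dist z y < r / 2 := hz.2
    have hiter : ∀ j : ℕ, μH[(d:ℝ)] (E ∩ ball z (κ ^ j * (r / 2))) ≤
        ENNReal.ofReal (η * (κ ^ j * (r / 2)) ^ d) := by
      intro j
      induction j with
      | zero =>
        rw [pow_zero, one_mul]
        refine (measure_mono (inter_subset_inter_right _ (ball_subset_ball' ?_ :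
          ball z (r / 2) ⊆ ball y s))).trans (hcon.le.trans (le_of_eq ?_))
        · linarith
        · congr 1
          rw [hr, show s / 2 / 2 = s / 4 by ring, div_pow]; ring
      | succ j ih =>
        have hj0 : 0 < κ ^ j := by positivity
        have hj1 : κ ^ j ≤ 1 := pow_le_one₀ hκ0.le hκ1.le
        have hle : κ ^ j * (r / 2) ≤ r / 2 := by nlinarith
        have := hstep U E h hU hE z (κ ^ j * (r / 2)) (by positivity) ?_ ?_ ih
        · rw [show κ ^ (j + 1) * (r / 2) = κ * (κ ^ j * (r / 2)) by ring]; exact this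
        · refine Subset.trans ?_ hB
          refine (closedBall_subset_closedBall hle).trans fun q hq => ?_
          rw [mem_closedBall] at hq
          rw [mem_ball]
          have := dist_triangle q z y
          linarith
        · exact (hg.1 (by positivity) (by linarith)).trans hh
    obtain ⟨j, hj1, hj2⟩ := exists_pow_scale hκ0 hκ1 ht htr
    refine (measure_mono (inter_subset_inter_right _ (ball_subset_ball hj2))).trans
      ((hiter j).trans (ENNReal.ofReal_le_ofReal ?_))
    set u := κ ^ j * (r / 2) with hu
    have h1 : (κ * u) ^ d ≤ t ^ d := by gcongr
    rw [mul_pow] at h1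
    have h2 : 0 ≤ u ^ d := pow_nonneg (by positivity) d
    have h3 : 1 / 2 * u ^ d ≤ t ^ d := (mul_le_mul_of_nonneg_right hκd h2).trans h1
    have h4 := mul_le_mul_of_nonneg_left h3 hη0.le
    linarith
  have hfin : μH[(d:ℝ)] F ≠ ⊤ := by
    refine ((measure_mono (inter_subset_inter_right _ (ball_subset_ball (by linarith) :
      ball y (r / 2) ⊆ ball y s))).trans_lt (hcon.trans ENNReal.ofReal_lt_top)).ne
  have hle : (2:ℝ≥0∞) • (μH[(d:ℝ)] : Measure (Euc n)).restrict F ≤ μH[(d:ℝ)] := by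
    refine Measure.le_hausdorffMeasure (d:ℝ) _ (ENNReal.ofReal (r / 8))
      (ENNReal.ofReal_pos.2 (by positivity)) fun T hT => ?_
    rw [Measure.smul_apply, Measure.restrict_apply' hFm, smul_eq_mul]
    rcases (T ∩ F).eq_empty_or_nonempty with he | ⟨z, hz⟩
    · simp [he]
    have hTfin : ediam T ≠ ⊤ := (hT.trans_lt ENNReal.ofReal_lt_top).ne
    obtain ⟨D, hD⟩ : ∃ D, D = (ediam T).toReal := ⟨_, rfl⟩
    have hDe : ediam T = ENNReal.ofReal D := by rw [hD, ENNReal.ofReal_toReal hTfin]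
    have hDr : D ≤ r / 8 := by
      rw [hD]
      refine (ENNReal.toReal_mono ENNReal.ofReal_ne_top hT).trans_eq ?_
      rw [ENNReal.toReal_ofReal (by positivity)]
    have hdist : ∀ q ∈ T, dist q z ≤ D := fun q hq => by
      rw [dist_edist, hD]
      exact ENNReal.toReal_mono hTfin (edist_le_ediam_of_mem hq hz.1)
    rcases (hD ▸ ENNReal.toReal_nonneg : 0 ≤ D).eq_or_lt with h0 | h0
    · have hsub : T ∩ F ⊆ {z} := fun q hq => by
        have := hdist q hq.1
        rw [← h0] at this
        exact dist_le_zero.1 this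
      have : NullSingletonClass (μH[(d:ℝ)] : Measure (Euc n)) :=
        Measure.nullSingletonClass_hausdorff _ (by exact_mod_cast hd)
      rw [measure_mono_null hsub (measure_singleton z), mul_zero]
      exact zero_le
    · have hsub : T ∩ F ⊆ E ∩ ball z (2 * D) := fun q hq => by
        refine ⟨hq.2.1, ?_⟩
        have := hdist q hq.1
        rw [mem_ball]; linarith
      refine (mul_le_mul_right ((measure_mono hsub).trans
        (hup z hz.2 (2 * D) (by positivity) (by linarith))) _).trans ?_
      rw [hDe, ENNReal.rpow_natCast, ← ENNReal.ofReal_pow h0.le,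
        ← ENNReal.ofReal_ofNat 2, ← ENNReal.ofReal_mul (by norm_num)]
      refine ENNReal.ofReal_le_ofReal ?_
      have h1 : 2 * (2 * η * (2 * D) ^ d) = η * (4 * 2 ^ d) * D ^ d := by rw [mul_pow]; ring
      rw [h1]
      have h2 : η * (4 * 2 ^ d) ≤ 1 := by
        rw [le_div_iff₀ (by positivity)] at hη1; exact hη1
      have h3 : 0 ≤ D ^ d := by positivity
      nlinarith
  have h2 := hle F
  rw [Measure.smul_apply, Measure.restrict_apply_self, smul_eq_mul, two_mul] at h2
  have h3 : μH[(d:ℝ)] F ≤ 0 := by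
    refine (ENNReal.add_le_add_iff_left hfin).1 ?_
    rw [add_zero]; exact h2
  exact absurd h3 (not_le.2 (hpos _ (by positivity)))

/-! ### Conclusion -/

/-- Almost-minimal sets in which every point is essential are flat at almost every point. -/
theorem ae_flatAt {n d : ℕ} (hd : 1 ≤ d) (hdn : d ≤ n) {U E : Set (Euc n)} {h : ℝ → ℝ≥0∞}
    (hU : IsOpen U) (hg : IsGaugeFn h) (hE : IsAAlmostMinimal n d U E h)
    (hpos : ∀ y ∈ E, ∀ ρ, 0 < ρ → 0 < μH[(d:ℝ)] (E ∩ ball y ρ)) :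
    ∀ᵐ y ∂μH[(d:ℝ)], y ∈ E → FlatAt d E y := by
  obtain ⟨c, ε, hc, hε, hlow⟩ := lower_regular hd hdn
  have hloc : ∀ y ∈ E, ∃ ρ₁ : ℝ, 0 < ρ₁ ∧ ∀ z ∈ E, dist z y < ρ₁ → ∀ σ, 0 < σ → σ < ρ₁ →
      ENNReal.ofReal (c * σ ^ d) ≤ μH[(d:ℝ)] (E ∩ ball z σ) := by
    intro y hy
    obtain ⟨u, hu, hyu⟩ := Metric.isOpen_iff.1 hU y (hE.1 hy)
    have hev : ∀ᶠ t in 𝓝[>] (0:ℝ), h t ≤ ENNReal.ofReal ε :=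
      hg.2.eventually_le_const (ENNReal.ofReal_pos.2 hε)
    obtain ⟨t, ht1, ht2⟩ := (hev.and (Ioo_mem_nhdsGT (show (0:ℝ) < u / 2 by positivity))).exists
    refine ⟨t, ht2.1, fun z hz hzy σ h0 h1 => ?_⟩
    refine hlow U E h hU hg hE z t ?_ (hpos z hz) ht1 σ h0 h1
    exact (ball_subset_ball' (by linarith [ht2.2])).trans hyu
  have hae := ae_dirAt hd hU hg hE fun y hy => by
    obtain ⟨ρ₁, h0, h1⟩ := hloc y hy
    exact ⟨c, ρ₁, hc, h0, h1 y hy (by simpa using h0)⟩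
  filter_upwards [hae] with y hy hyE
  obtain ⟨⟨W, hW, hdir⟩, C, ρ₀, hC, hρ₀, hup⟩ := hy hyE
  obtain ⟨ρ₁, h0, h1⟩ := hloc y hyE
  refine flatAt_of_dirAt hyE hc hC (lt_min h0 hρ₀) hd ?_ ?_ hW hdir
  · exact fun z hz hzy σ hσ0 hσ1 =>
      h1 z hz (hzy.trans_le (min_le_left _ _)) σ hσ0 (hσ1.trans_le (min_le_left _ _))
  · exact fun ρ hρ0 hρ1 => hup ρ hρ0 (hρ1.trans_le (min_le_right _ _))

theorem hausdorffMeasure_eq_zero_of_lt {n d : ℕ} (h : n < d) (S : Set (Euc n)) :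
    μH[(d:ℝ)] S = 0 := by
  refine measure_mono_null (subset_univ S) ?_
  have := hausdorffMeasure_of_dimH_lt (s := (univ : Set (Euc n))) (d := (d:ℝ≥0)) (by
    rw [Real.dimH_univ_eq_finrank, finrank_euclideanSpace, Fintype.card_fin]
    exact_mod_cast h)
  simpa using this

/-- **Proposition 5.24.** There are constants `λ > 1` and `ε₀ > 0`, depending only on
`n` and `d`, such that for every A-almost-minimal set `E` of dimension `d` in `U` with
gauge function `h`, every `x ∈ E*` and `R > 0` with `B(x,R) ⊆ U`, `h(R) ≤ ε₀` and
`∫₀^R h(2t) dt/t < ∞`, the function `r ↦ r^{-d} H^d(E ∩ B(x,r)) e^{λ A(r)}` is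
nondecreasing on `(0,R)`, where `A(r) = ∫₀^r h(2t) dt/t`. -/
theorem density_almost_monotone (n d : ℕ) :
    ∃ lam ε₀ : ℝ, 1 < lam ∧ 0 < ε₀ ∧
      ∀ (U E : Set (Euc n)) (h : ℝ → ℝ≥0∞), IsOpen U → IsGaugeFn h →
        IsAAlmostMinimal n d U E h →
      ∀ (x : Euc n) (R : ℝ), 0 < R → ball x R ⊆ U →
        x ∈ E → (∀ ρ : ℝ, 0 < ρ → 0 < μH[(d:ℝ)] (E ∩ ball x ρ)) →
        h R ≤ ENNReal.ofReal ε₀ →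
        (∫⁻ t in Ioo (0:ℝ) R, h (2 * t) / ENNReal.ofReal t) < ⊤ →
        ∀ r₁ r₂ : ℝ, 0 < r₁ → r₁ ≤ r₂ → r₂ < R →
          μH[(d:ℝ)] (E ∩ ball x r₁) / ENNReal.ofReal (r₁ ^ d) *
            ENNReal.ofReal (Real.exp (lam *
              (∫⁻ t in Ioo (0:ℝ) r₁, h (2 * t) / ENNReal.ofReal t).toReal)) ≤
          μH[(d:ℝ)] (E ∩ ball x r₂) / ENNReal.ofReal (r₂ ^ d) *
            ENNReal.ofReal (Real.exp (lam *
              (∫⁻ t in Ioo (0:ℝ) r₂, h (2 * t) / ENNReal.ofReal t).toReal)) := by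
  rcases Nat.eq_zero_or_pos d with rfl | hd
  · -- without the normalising factor `r ^ d` both factors are monotone
    refine ⟨2, 1, by norm_num, by norm_num, ?_⟩
    intro U E h hU hg hE x R hR hB hx hpos hh hintg r₁ r₂ hr₁ hr₁₂ hr₂
    rw [pow_zero, pow_zero]
    refine mul_le_mul' (ENNReal.div_le_div_right (measure_mono (inter_subset_inter_right _
      (ball_subset_ball hr₁₂))) _) ?_
    refine ENNReal.ofReal_le_ofReal (Real.exp_le_exp.2 (mul_le_mul_of_nonneg_left ?_ (by norm_num)))
    refine ENNReal.toReal_mono ?_ (lintegral_mono_set (Ioo_subset_Ioo_right hr₁₂))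
    exact ((lintegral_mono_set (Ioo_subset_Ioo_right hr₂.le)).trans_lt hintg).ne
  rcases lt_or_ge n d with hnd | hdn
  · refine ⟨2, 1, by norm_num, by norm_num, ?_⟩
    intro U E h hU hg hE x R hR hB hx hpos
    exact absurd (hausdorffMeasure_eq_zero_of_lt hnd _) (hpos R hR).ne'
  obtain ⟨c, ε, hc, hε, hlow⟩ := lower_regular hd hdn
  refine ⟨max 2 (d * 2 ^ d / c), ε, lt_max_of_lt_left (by norm_num), hε, ?_⟩
  intro U E h hU hg hE x R hR hB hx hpos hh hintg r₁ r₂ hr₁ hr₁₂ hr₂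
  have hcl : ∀ r, r < R → closedBall x r ⊆ U := fun r hr => (closedBall_subset_ball hr).trans hB
  have hE' := essPart_almostMinimal hE
  have hflat := ae_flatAt hd hdn hU hg hE' fun y hy ρ hρ => essPart_pos hy hρ
  have key := monotone_of_sharp hd (E := essPart d E) hg (x := x) (R := R) hc
    (le_max_right 2 (d * 2 ^ d / c))
    (fun r hr => (measure_mono (inter_subset_inter_right _ ball_subset_closedBall)).trans_lt
      (hE'.2.2.1 x r (hcl r hr)))
    (fun r h0 hr => by
      rw [measure_essPart_inter]; exact hlow U E h hU hg hE x R hB hpos hh r h0 hr)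
    (fun r δ h0 hr hδ N hN => sharp_of_flat hU hE' h0 (hcl r hr) hδ (by
      rw [ae_restrict_iff' ((hE'.measurableSet hU).inter measurableSet_ball)]
      filter_upwards [hflat] with y hy hyE using hy hyE.1) hN)
    hintg hr₁ hr₁₂ hr₂
  rwa [measure_essPart_inter, measure_essPart_inter] at key
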